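/- arXiv:1404.1153 — 3 statements merged into one kernel-verified Lean document; each statement's English description precedes it below -/
import Mathlib

section
/- Let G = (V,E) be a tree and let u, v be distinct vertices of G each of degree at least |V|/3. Let p, q be distinct pre-leaf vertices of G. Then there exists a strongly 3-balanced coloring c : V → {1,2,3} of G such that c(u) ≠ c(v) and c(p) ≠ c(q). -/
/-!
Write `n = |V|` and `T = ⌊(n + 1) / 3⌋`. The vertices `u`, `v` get distinct colours `i`, `j`, both
different from the third colour `2`; leaves at `v` get colour `i` and leaves at `u` colour `j`. Such
a leaf may be given the third colour without harming properness, so the colouring can be balanced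
by changing leaves only, as soon as `T ≤ |class i| ≤ T + lf v` and `T ≤ |class j| ≤ T + lf u`, where
`lf` counts the leaves at a vertex (`balance`). Pre-leaves keep their colours in this process, so it
is enough to find such a colouring that separates `p` from `q`.

*Lower bounds.* If at most one vertex has the third colour, class `i` contains all neighbours of
`v`, except possibly the vertex of third colour, for which `u` is a substitute (`lower`).

*Upper bounds.* Class `i` is independent, so the degrees of its vertices sum to at most `n - 1`.
There `u` contributes `deg u`, the non-leaf neighbours of `v` contribute at least two each, and all
others at least one. With `deg u + deg v + T ≥ n` this gives `|class i| ≤ T + lf v` if `u` and `v`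
are not adjacent (`upper`); for adjacent `u` and `v` the bound is weaker by one (`upper_adj`).

*Non-adjacent case.* If the bipartite colouring gives `u` and `v` the same colour, a non-leaf `w`
between them takes the third colour and the colours are swapped on the components of the tree minus
`w` that do not contain `u`. If `p` and `q` have the same colour, one of them, say `p`, is neither
`u` nor `v`. Either `p` can take the third colour and one of its leaves the old colour of `p`
(`move`), or `p` is adjacent to `w` and the colours can be swapped on `p` and its leaves
(`separate_aux`).

*Adjacent case.* For the bipartite colouring, `move` works for a pre-leaf `p` other than `u` and `v`
unless its class exceeds the bound by one. Such an excess forces `p`, if it has the colour of `u`,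
to be a neighbour of `v` (`upper_adj'`), and it is removed by giving the third colour to one or two
vertices chosen among `p`, `q` and their leaves (`adj_aux`). If `{p, q} = {u, v}`, the tree is a
double star and its bipartite colouring is within the bounds (`double_star`).
-/

open SimpleGraph

/-- A vertex is a *pre-leaf* vertex if it is not a leaf (its degree is not one) and it is
adjacent to exactly `m − 1` leaves, where `m` is its degree. -/
def IsPreLeaf {V : Type*} [Fintype V] [DecidableEq V] (G : SimpleGraph V)
    [DecidableRel G.Adj] (v : V) : Prop :=
  G.degree v ≠ 1 ∧ ({u | G.Adj v u ∧ G.degree u = 1} : Set V).ncard + 1 = G.degree v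

namespace BalancedTree

/-! ### Counting in a tree -/

variable {V : Type*} [Fintype V] [DecidableEq V]

/-- No edge of `G` is monochromatic under `c`. -/
def Proper (G : SimpleGraph V) (c : V → Fin 3) : Prop :=
  ∀ a b : V, G.Adj a b → c a ≠ c b

/-- The size of the colour class `i`. -/
def cnt (c : V → Fin 3) (i : Fin 3) : ℕ := (Finset.univ.filter fun x => c x = i).card

/-- The number of leaves adjacent to `v`. -/
def lf (G : SimpleGraph V) [DecidableRel G.Adj] (v : V) : ℕ :=
  (Finset.univ.filter fun x => G.Adj v x ∧ G.degree x = 1).card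

theorem cnt_update (c : V → Fin 3) (x : V) (k i : Fin 3) :
    cnt (Function.update c x k) i + (if c x = i then 1 else 0)
      = cnt c i + (if k = i then 1 else 0) := by
  have h (d : V → Fin 3) : cnt d i =
      (if d x = i then 1 else 0) + ∑ y ∈ Finset.univ.erase x, if d y = i then 1 else 0 := by
    rw [cnt, Finset.card_filter,
      Finset.add_sum_erase _ (fun y => if d y = i then 1 else 0) (Finset.mem_univ x)]
  have h2 : (∑ y ∈ Finset.univ.erase x, if Function.update c x k y = i then 1 else 0)
      = ∑ y ∈ Finset.univ.erase x, if c y = i then 1 else 0 := by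
    refine Finset.sum_congr rfl fun y hy => ?_
    rw [Function.update_of_ne (Finset.ne_of_mem_erase hy)]
  rw [h (Function.update c x k), h c, h2, Function.update_self]
  omega

theorem cnt_sum (c : V → Fin 3) : cnt c 0 + cnt c 1 + cnt c 2 = Fintype.card V := by
  have := Finset.card_eq_sum_card_fiberwise (f := c) (s := Finset.univ) (t := Finset.univ)
    (fun _ _ => Finset.mem_coe.2 (Finset.mem_univ _))
  rw [Fin.sum_univ_three, Finset.card_univ] at this
  exact this.symm

theorem Proper.update {G : SimpleGraph V} {c : V → Fin 3} (hc : Proper G c) {x : V} {k : Fin 3}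
    (h : ∀ z, G.Adj x z → c z ≠ k) : Proper G (Function.update c x k) := by
  intro a b hab
  have hne := hab.ne
  by_cases ha : a = x
  · subst ha
    rw [Function.update_self, Function.update_of_ne hne.symm]
    exact (h b hab).symm
  · by_cases hb : b = x
    · subst hb
      rw [Function.update_self, Function.update_of_ne ha]
      exact h a hab.symm
    · rw [Function.update_of_ne ha, Function.update_of_ne hb]
      exact hc a b hab

variable {G : SimpleGraph V} [DecidableRel G.Adj]

theorem leaf_nbr {y a b : V} (hy : G.degree y = 1) (ha : G.Adj y a) (hb : G.Adj y b) : a = b := by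
  rw [← G.card_neighborFinset_eq_degree] at hy
  exact Finset.card_le_one.1 hy.le a (by simpa using ha) b (by simpa using hb)

/-- A pre-leaf `p` has exactly one non-leaf neighbour `r`, and at least one leaf `y`. -/
theorem preLeaf_spec {p : V} (hp : IsPreLeaf G p) :
    ∃ r y, G.Adj p r ∧ G.degree r ≠ 1 ∧ (∀ x, G.Adj p x → G.degree x ≠ 1 → x = r) ∧
      G.Adj p y ∧ G.degree y = 1 := by
  obtain ⟨h1, h2⟩ := hp
  have hs : ({u | G.Adj p u ∧ G.degree u = 1} : Set V)
      = ((G.neighborFinset p).filter fun u => G.degree u = 1 : Finset V) := by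
    ext x; simp
  rw [hs, Set.ncard_coe_finset] at h2
  have h3 := Finset.card_filter_add_card_filter_not (s := G.neighborFinset p)
    (fun u => G.degree u = 1)
  rw [G.card_neighborFinset_eq_degree] at h3
  obtain ⟨r, hr⟩ := Finset.card_eq_one.1 (show
    ((G.neighborFinset p).filter fun u => ¬ G.degree u = 1).card = 1 by omega)
  have hr' (x) : (G.Adj p x ∧ ¬ G.degree x = 1) ↔ x = r := by
    have := Finset.ext_iff.1 hr x
    simpa using this
  obtain ⟨y, hy⟩ := Finset.card_pos.1 (show
    0 < ((G.neighborFinset p).filter fun u => G.degree u = 1).card by omega)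
  simp only [Finset.mem_filter, mem_neighborFinset] at hy
  exact ⟨r, y, ((hr' r).2 rfl).1, ((hr' r).2 rfl).2, fun x hx hd => (hr' x).1 ⟨hx, hd⟩, hy⟩

/-- The edges meeting an independent set `S` of a tree and any further set `M` of edges avoiding `S`
number at most `|V| - 1` in total. -/
theorem sum_degree_add_card_lt (hG : G.IsTree) (S : Finset V)
    (hS : ∀ a ∈ S, ∀ b ∈ S, ¬ G.Adj a b) (M : Finset (Sym2 V)) (hM : M ⊆ G.edgeFinset)
    (hMS : ∀ e ∈ M, ∀ x ∈ S, x ∉ e) :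
    ∑ x ∈ S, G.degree x + M.card < Fintype.card V := by
  have h1 : (S.biUnion fun x => G.incidenceFinset x).card = ∑ x ∈ S, G.degree x := by
    rw [Finset.card_biUnion]
    · simp
    · intro a ha b hb hab
      rw [Function.onFun, Finset.disjoint_left]
      intro e hea heb
      rw [mem_incidenceFinset] at hea heb
      exact hS a ha b hb (G.adj_of_mem_incidenceSet hab hea heb)
  have h2 : Disjoint (S.biUnion fun x => G.incidenceFinset x) M := by
    rw [Finset.disjoint_left]
    intro e he hm
    obtain ⟨x, hx, hxe⟩ := Finset.mem_biUnion.1 he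
    rw [mem_incidenceFinset] at hxe
    exact hMS e hm x hx hxe.2
  have h3 : (S.biUnion fun x => G.incidenceFinset x) ∪ M ⊆ G.edgeFinset := by
    refine Finset.union_subset ?_ hM
    exact Finset.biUnion_subset.2 fun x _ => G.incidenceFinset_subset x
  have h4 := Finset.card_le_card h3
  rw [Finset.card_union_of_disjoint h2, h1] at h4
  have := hG.card_edgeFinset
  omega

/-- The degree count behind all upper bounds on colour classes: among the vertices of colour
`c u` other than `u`, each has degree at least one and those in `D` at least two. -/
theorem degree_count (hG : G.IsTree) {c : V → Fin 3} (hc : Proper G c) (u : V) (D : Finset V)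
    (hD : ∀ x ∈ D, c x = c u ∧ x ≠ u ∧ G.degree x ≠ 1) (hV : Nontrivial V)
    (M : Finset (Sym2 V)) (hM : M ⊆ G.edgeFinset) (hMS : ∀ e ∈ M, ∀ x, c x = c u → x ∉ e) :
    G.degree u + cnt c (c u) + D.card + M.card ≤ Fintype.card V := by
  set S := Finset.univ.filter fun x => c x = c u with hSdef
  have hS := sum_degree_add_card_lt hG S (fun a ha b hb hab => hc a b hab (by
    simp only [hSdef, Finset.mem_filter, Finset.mem_univ, true_and] at ha hb
    rw [ha, hb])) M hM (fun e he x hx => hMS e he x (by simpa [hSdef] using hx))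
  have hu : u ∈ S := by simp [hSdef]
  have hDS : D ⊆ S.erase u := fun x hx => by
    have := hD x hx
    simp [hSdef, this.1, this.2.1]
  have h1 : ∑ x ∈ S.erase u, (1 + if x ∈ D then 1 else 0) ≤ ∑ x ∈ S.erase u, G.degree x := by
    refine Finset.sum_le_sum fun x _ => ?_
    have := hG.connected.preconnected.degree_pos_of_nontrivial x
    split_ifs with hx
    · have := (hD x hx).2.2
      omega
    · omega
  rw [Finset.sum_add_distrib, Finset.sum_ite_mem, Finset.inter_eq_right.2 hDS] at h1
  simp only [Finset.sum_const, smul_eq_mul, mul_one] at h1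
  rw [← Finset.add_sum_erase _ _ hu] at hS
  have h2 := Finset.card_erase_add_one hu
  have : cnt c (c u) = S.card := rfl
  omega

theorem lf_add (v : V) : lf G v + (Finset.univ.filter fun x => G.Adj v x ∧ G.degree x ≠ 1).card
    = G.degree v := by
  have h3 := Finset.card_filter_add_card_filter_not (s := G.neighborFinset v)
    (fun u => G.degree u = 1)
  rw [G.card_neighborFinset_eq_degree] at h3
  rw [← h3, lf]
  congr 2 <;> · ext x; simp

/-- Upper bound on the class of `u` for non-adjacent `u` and `v`, when at most one vertex `w` has
neither the colour of `u` nor that of `v`. If `v` has a neighbour `w'` of the third colour, the edge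
from `v` to `w'` misses the class of `u` and compensates for the loss of `w'` in the count. -/
theorem upper (hG : G.IsTree) {c : V → Fin 3} (hc : Proper G c) {u v w : V} (huv : c u ≠ c v)
    (hw : ∀ x, c x ≠ c u → c x ≠ c v → x = w) (hadj : ¬ G.Adj u v) :
    G.degree u + G.degree v + cnt c (c u) ≤ Fintype.card V + lf G v := by
  have hV : Nontrivial V := ⟨u, v, fun h => huv (h ▸ rfl)⟩
  have hl := lf_add (G := G) v
  have hne : ¬ G.Adj v u := fun h => hadj h.symm
  by_cases h : ∃ w', G.Adj v w' ∧ c w' ≠ c u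
  · obtain ⟨w', h1, h2⟩ := h
    have h3 : c w' ≠ c v := (hc _ _ h1).symm
    have hww := hw w' h2 h3
    have := degree_count hG hc u
      ((Finset.univ.filter fun x => G.Adj v x ∧ G.degree x ≠ 1).erase w') (by
        intro x hx
        simp only [Finset.mem_erase, Finset.mem_filter, Finset.mem_univ, true_and] at hx
        refine ⟨?_, ?_, hx.2.2⟩
        · by_contra hx1
          exact hx.1 ((hw x hx1 (hc _ _ hx.2.1).symm).trans hww.symm)
        · rintro rfl; exact hne hx.2.1) hV {s(v, w')} (by simpa using h1) (by
        intro e he x hx hxe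
        rw [Finset.mem_singleton.1 he, Sym2.mem_iff] at hxe
        rcases hxe with rfl | rfl
        · exact huv hx.symm
        · exact h2 hx)
    have h4 := Finset.pred_card_le_card_erase (a := w')
      (s := Finset.univ.filter fun x => G.Adj v x ∧ G.degree x ≠ 1)
    rw [Finset.card_singleton] at this
    omega
  · push Not at h
    have := degree_count hG hc u
      (Finset.univ.filter fun x => G.Adj v x ∧ G.degree x ≠ 1) (by
        intro x hx
        simp only [Finset.mem_filter, Finset.mem_univ, true_and] at hx
        refine ⟨h x hx.1, ?_, hx.2⟩
        rintro rfl; exact hne hx.1) hV ∅ (by simp) (by simp)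
    rw [Finset.card_empty] at this
    omega

/-- For a colouring with the two colours of `u` and `v`. If `u` and `v` are adjacent, `u` itself is one
of the non-leaf neighbours of `v`, which accounts for the loss of one compared with `upper`. -/
theorem upper_adj (hG : G.IsTree) {c : V → Fin 3} (hc : Proper G c) {u v : V} (huv : c u ≠ c v)
    (hw : ∀ x, c x ≠ c u → c x = c v) :
    G.degree u + G.degree v + cnt c (c u) ≤ Fintype.card V + lf G v + 1 := by
  have hV : Nontrivial V := ⟨u, v, fun h => huv (h ▸ rfl)⟩
  have hl := lf_add (G := G) v
  have := degree_count hG hc u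
    ((Finset.univ.filter fun x => G.Adj v x ∧ G.degree x ≠ 1).erase u) (by
      intro x hx
      simp only [Finset.mem_erase, Finset.mem_filter, Finset.mem_univ, true_and] at hx
      refine ⟨?_, hx.1, hx.2.2⟩
      by_contra hx1
      exact (hc _ _ hx.2.1).symm (hw x hx1)) hV ∅ (by simp) (by simp)
  have h4 := Finset.pred_card_le_card_erase (a := u)
    (s := Finset.univ.filter fun x => G.Adj v x ∧ G.degree x ≠ 1)
  rw [Finset.card_empty] at this
  omega

/-- A non-leaf of colour `c u`, other than `u` and not adjacent to `v`, improves the bound of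
`upper_adj` by one. -/
theorem upper_adj' (hG : G.IsTree) {c : V → Fin 3} (hc : Proper G c) {u v p : V} (huv : c u ≠ c v)
    (hw : ∀ x, c x ≠ c u → c x = c v) (hp : c p = c u) (hpu : p ≠ u) (hpd : G.degree p ≠ 1)
    (hpv : ¬ G.Adj v p) :
    G.degree u + G.degree v + cnt c (c u) ≤ Fintype.card V + lf G v := by
  have hV : Nontrivial V := ⟨u, v, fun h => huv (h ▸ rfl)⟩
  have hl := lf_add (G := G) v
  have := degree_count hG hc u (insert p
    ((Finset.univ.filter fun x => G.Adj v x ∧ G.degree x ≠ 1).erase u)) (by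
      intro x hx
      simp only [Finset.mem_insert, Finset.mem_erase, Finset.mem_filter, Finset.mem_univ,
        true_and] at hx
      rcases hx with rfl | hx
      · exact ⟨hp, hpu, hpd⟩
      refine ⟨?_, hx.1, hx.2.2⟩
      by_contra hx1
      exact (hc _ _ hx.2.1).symm (hw x hx1)) hV ∅ (by simp) (by simp)
  rw [Finset.card_insert_of_notMem (by simp [hpv])] at this
  have h4 := Finset.pred_card_le_card_erase (a := u)
    (s := Finset.univ.filter fun x => G.Adj v x ∧ G.degree x ≠ 1)
  rw [Finset.card_empty] at this
  omega

/-- The class of `u` has at least `deg v` vertices among `u` and the neighbours of `v`. The hypothesis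
`hadj` excludes the third colour when `u` and `v` are adjacent: there `u` is already counted. -/
theorem lower_aux {c : V → Fin 3} (hc : Proper G c) {u v w : V}
    (hw : ∀ x, c x ≠ c u → c x ≠ c v → x = w)
    (hadj : G.Adj u v → ∀ x, c x ≠ c u → c x = c v) :
    G.degree v ≤ (Finset.univ.filter fun x => c x = c u ∧ (G.Adj v x ∨ x = u)).card := by
  rw [← G.card_neighborFinset_eq_degree]
  by_cases h : ∃ z, G.Adj v z ∧ c z ≠ c u
  · obtain ⟨z, h1, h2⟩ := h
    have h3 : c z ≠ c v := (hc _ _ h1).symm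
    have hww := hw z h2 h3
    have hne : ¬ G.Adj v u := fun h => h3 (hadj h.symm z h2)
    -- `u` makes up for the neighbour `z` of the third colour
    have hsub : insert u ((G.neighborFinset v).erase z) ⊆
        Finset.univ.filter fun x => c x = c u ∧ (G.Adj v x ∨ x = u) := by
      intro x hx
      simp only [Finset.mem_insert, Finset.mem_erase, mem_neighborFinset] at hx
      simp only [Finset.mem_filter, Finset.mem_univ, true_and]
      rcases hx with rfl | ⟨hx1, hx2⟩
      · simp
      · refine ⟨?_, Or.inl hx2⟩
        by_contra hx3
        exact hx1 ((hw x hx3 (hc _ _ hx2).symm).trans hww.symm)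
    have h4 := Finset.card_le_card hsub
    rw [Finset.card_insert_of_notMem (by simp [hne]),
      Finset.card_erase_add_one (by simpa using h1)] at h4
    exact h4
  · push Not at h
    refine Finset.card_le_card fun x hx => ?_
    rw [mem_neighborFinset] at hx
    simp [hx, h x hx]

theorem lower {c : V → Fin 3} (hc : Proper G c) {u v w : V}
    (hw : ∀ x, c x ≠ c u → c x ≠ c v → x = w)
    (hadj : G.Adj u v → ∀ x, c x ≠ c u → c x = c v) :
    G.degree v ≤ cnt c (c u) :=
  (lower_aux hc hw hadj).trans (Finset.card_le_card fun x hx => by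
    simp only [Finset.mem_filter, Finset.mem_univ, true_and] at hx ⊢
    exact hx.1)

/-- A vertex `y` in the class of `u`, other than `u` and not adjacent to `v`, improves `lower` by
one. -/
theorem lower_succ {c : V → Fin 3} (hc : Proper G c) {u v w y : V}
    (hw : ∀ x, c x ≠ c u → c x ≠ c v → x = w)
    (hadj : G.Adj u v → ∀ x, c x ≠ c u → c x = c v)
    (hy : c y = c u) (hyv : ¬ G.Adj v y) (hyu : y ≠ u) :
    G.degree v + 1 ≤ cnt c (c u) := by
  refine (Nat.succ_le_succ (lower_aux hc hw hadj)).trans ?_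
  rw [Nat.succ_eq_add_one, ← Finset.card_insert_of_notMem (a := y) (by simp [hyv, hyu])]
  refine Finset.card_le_card fun x hx => ?_
  simp only [Finset.mem_insert, Finset.mem_filter, Finset.mem_univ, true_and] at hx ⊢
  rcases hx with rfl | hx
  exacts [hy, hx.1]

/-! ### Balancing by leaves, and moving a pre-leaf -/

/-- A proper colouring in which `u` and `v` have the distinct colours `i, j ≠ 2`, leaves adjacent
to `v` have colour `i`, and leaves adjacent to `u` have colour `j`. -/
structure Base (G : SimpleGraph V) [DecidableRel G.Adj] (u v : V) (i j : Fin 3)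
    (c : V → Fin 3) : Prop where
  proper : Proper G c
  cu : c u = i
  cv : c v = j
  ne : i ≠ j
  i2 : i ≠ 2
  j2 : j ≠ 2
  leafv : ∀ x, G.Adj v x → G.degree x = 1 → c x = i
  leafu : ∀ x, G.Adj u x → G.degree x = 1 → c x = j

/-- The classes `i` and `j` have at least `T` vertices, and recolouring leaves at `v` (in class `i`)
and leaves at `u` (in class `j`) with the third colour can bring them down to exactly `T`. -/
def Bounds (G : SimpleGraph V) [DecidableRel G.Adj] (T : ℕ) (u v : V) (i j : Fin 3)
    (c : V → Fin 3) : Prop :=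
  (T ≤ cnt c i ∧ cnt c i ≤ T + lf G v) ∧ (T ≤ cnt c j ∧ cnt c j ≤ T + lf G u)

theorem Base.symm {u v : V} {i j : Fin 3} {c : V → Fin 3} (h : Base G u v i j c) :
    Base G v u j i c :=
  ⟨h.proper, h.cv, h.cu, h.ne.symm, h.j2, h.i2, h.leafu, h.leafv⟩

theorem fin3 : ∀ {i j x : Fin 3}, i ≠ j → i ≠ 2 → j ≠ 2 → x ≠ i → x ≠ 2 → x = j := by decide

theorem fin3' : ∀ {i j x : Fin 3}, i ≠ j → i ≠ 2 → j ≠ 2 → x ≠ i → x ≠ j → x = 2 := by decide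

theorem Base.update {u v : V} {i j : Fin 3} {c : V → Fin 3} (h : Base G u v i j c) {x : V}
    {k : Fin 3} (hxu : x ≠ u) (hxv : x ≠ v)
    (hl : G.degree x = 1 → ¬ G.Adj u x ∧ ¬ G.Adj v x) (hk : ∀ z, G.Adj x z → c z ≠ k) :
    Base G u v i j (Function.update c x k) := by
  refine ⟨h.proper.update hk, ?_, ?_, h.ne, h.i2, h.j2, fun y hy hd => ?_, fun y hy hd => ?_⟩
  · rw [Function.update_of_ne hxu.symm, h.cu]
  · rw [Function.update_of_ne hxv.symm, h.cv]
  · rw [Function.update_of_ne, h.leafv y hy hd]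
    rintro rfl
    exact (hl hd).2 hy
  · rw [Function.update_of_ne, h.leafu y hy hd]
    rintro rfl
    exact (hl hd).1 hy

/-- A colouring within the bounds becomes balanced after giving the third colour to surplus leaves
at `v` and at `u`; non-leaves keep their colours. -/
theorem balance {u v : V} {i j : Fin 3} {c : V → Fin 3} (h : Base G u v i j c)
    (hb : Bounds G ((Fintype.card V + 1) / 3) u v i j c) (hu : G.degree u ≠ 1)
    (hv : G.degree v ≠ 1) :
    ∃ c' : V → Fin 3, Proper G c' ∧
      (∀ i j : Fin 3,
        |(({x | c' x = i} : Set V).ncard : ℤ) - (({x | c' x = j} : Set V).ncard : ℤ)| ≤ 1) ∧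
      ∀ x, G.degree x ≠ 1 → c' x = c x := by
  set T := (Fintype.card V + 1) / 3 with hT
  -- `S` and `R` are the surplus leaves, at `v` and at `u` respectively
  obtain ⟨⟨h1, h2⟩, h3, h4⟩ := hb
  obtain ⟨S, hS, hSc⟩ := Finset.exists_subset_card_eq (show cnt c i - T ≤
    (Finset.univ.filter fun x => G.Adj v x ∧ G.degree x = 1).card from by
      change _ ≤ lf G v
      omega)
  obtain ⟨R, hR, hRc⟩ := Finset.exists_subset_card_eq (show cnt c j - T ≤
    (Finset.univ.filter fun x => G.Adj u x ∧ G.degree x = 1).card from by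
      change _ ≤ lf G u
      omega)
  have hS' : ∀ x ∈ S, G.Adj v x ∧ G.degree x = 1 := fun x hx => by simpa using hS hx
  have hR' : ∀ x ∈ R, G.Adj u x ∧ G.degree x = 1 := fun x hx => by simpa using hR hx
  have hSi : ∀ x ∈ S, c x = i := fun x hx => h.leafv x (hS' x hx).1 (hS' x hx).2
  have hRj : ∀ x ∈ R, c x = j := fun x hx => h.leafu x (hR' x hx).1 (hR' x hx).2
  have hleaf : ∀ x, x ∈ S ∨ x ∈ R → G.degree x = 1 := by
    rintro x (hx | hx)
    exacts [(hS' x hx).2, (hR' x hx).2]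
  have hnbr : ∀ a b, (a ∈ S ∨ a ∈ R) → G.Adj a b → (b = u ∨ b = v) := by
    rintro a b (ha | ha) hab
    · exact Or.inr (leaf_nbr (hS' a ha).2 hab (hS' a ha).1.symm)
    · exact Or.inl (leaf_nbr (hR' a ha).2 hab (hR' a ha).1.symm)
  have key : ∀ a b, (a ∈ S ∨ a ∈ R) → G.Adj a b → ¬ (b ∈ S ∨ b ∈ R) ∧ c b ≠ 2 := by
    intro a b ha hab
    rcases hnbr a b ha hab with rfl | rfl
    · exact ⟨fun hb => hu (hleaf _ hb), h.cu ▸ h.i2⟩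
    · exact ⟨fun hb => hv (hleaf _ hb), h.cv ▸ h.j2⟩
  set c' : V → Fin 3 := fun x => if x ∈ S ∨ x ∈ R then 2 else c x with hc'
  have hi : cnt c' i = T := by
    have : (Finset.univ.filter fun x => c' x = i) = (Finset.univ.filter fun x => c x = i) \ S := by
      ext x
      simp only [hc', Finset.mem_filter, Finset.mem_univ, true_and, Finset.mem_sdiff]
      by_cases hxS : x ∈ S
      · simp [hxS, h.i2.symm]
      by_cases hxR : x ∈ R
      · simp [hxR, h.i2.symm, hRj x hxR, h.ne.symm]
      · simp [hxS, hxR]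
    rw [cnt, this, Finset.card_sdiff_of_subset (fun x hx => by simp [hSi x hx]), hSc]
    change cnt c i - _ = _
    omega
  have hj : cnt c' j = T := by
    have : (Finset.univ.filter fun x => c' x = j) = (Finset.univ.filter fun x => c x = j) \ R := by
      ext x
      simp only [hc', Finset.mem_filter, Finset.mem_univ, true_and, Finset.mem_sdiff]
      by_cases hxR : x ∈ R
      · simp [hxR, h.j2.symm]
      by_cases hxS : x ∈ S
      · simp [hxS, h.j2.symm, hSi x hxS, h.ne]
      · simp [hxS, hxR]
    rw [cnt, this, Finset.card_sdiff_of_subset (fun x hx => by simp [hRj x hx]), hRc]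
    change cnt c j - _ = _
    omega
  have h01 : cnt c' 0 = T ∧ cnt c' 1 = T := by
    have hne := h.ne
    have hi2 := h.i2
    have hj2 := h.j2
    clear * - hi hj hne hi2 hj2
    fin_cases i <;> fin_cases j <;> simp_all
  have hsum := cnt_sum c'
  refine ⟨c', ?_, ?_, ?_⟩
  · intro a b hab
    simp only [hc']
    by_cases ha : a ∈ S ∨ a ∈ R
    · have := key a b ha hab
      rw [if_pos ha, if_neg this.1]
      exact this.2.symm
    · by_cases hb : b ∈ S ∨ b ∈ R
      · have := key b a hb hab.symm
        rw [if_pos hb, if_neg this.1]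
        exact this.2
      · rw [if_neg ha, if_neg hb]
        exact h.proper a b hab
  · have hnc : ∀ i, ({x | c' x = i} : Set V).ncard = cnt c' i := by
      intro i
      rw [cnt, ← Set.ncard_coe_finset]
      congr 1
      ext x; simp
    have h2' : cnt c' 2 = Fintype.card V - 2 * T := by omega
    intro a b
    rw [hnc, hnc, abs_le]
    fin_cases a <;> fin_cases b <;> simp only [Fin.zero_eta, Fin.mk_one, Fin.reduceFinMk] <;> omega
  · intro x hx
    simp only [hc']
    rw [if_neg fun h => hx (hleaf x h)]

/-- The moving step: a pre-leaf `p` takes the third colour and one of its leaves takes the former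
colour `i` of `p`. Class `i` keeps its size and class `j` loses one vertex. -/
theorem move {T : ℕ} {u v w p : V} {i j : Fin 3} {c : V → Fin 3} (h : Base G u v i j c)
    (hu : G.degree u ≠ 1) (hv : G.degree v ≠ 1) (hTu : T ≤ G.degree u) (hTv : T ≤ G.degree v)
    (hw : ∀ x, c x = 2 → x = w) (hadj : G.Adj u v → ∀ x, c x ≠ 2)
    (hp : IsPreLeaf G p) (hpu : p ≠ u) (hpv : p ≠ v) (hpi : c p = i)
    (hp2 : ∀ z, G.Adj p z → c z ≠ 2) (hi : cnt c i ≤ T + lf G v)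
    (hj : cnt c j ≤ T + lf G u + 1) :
    ∃ c', Base G u v i j c' ∧ Bounds G T u v i j c' ∧ c' p = 2 ∧
      ∀ x, x ≠ p → G.degree x ≠ 1 → c' x = c x := by
  obtain ⟨r, y, hr, hr1, hr2, hpy, hy1⟩ := preLeaf_spec hp
  have hyu : ¬ G.Adj u y := fun h => hpu (leaf_nbr hy1 hpy.symm h.symm)
  have hyv : ¬ G.Adj v y := fun h => hpv (leaf_nbr hy1 hpy.symm h.symm)
  have hyp : y ≠ p := hpy.ne.symm
  have hynu : y ≠ u := by rintro rfl; exact hu hy1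
  have hynv : y ≠ v := by rintro rfl; exact hv hy1
  have hcy : c y = j :=
    fin3 h.ne h.i2 h.j2 (fun e => h.proper p y hpy (hpi.trans e.symm)) (hp2 y hpy)
  have hlo : T ≤ cnt c i := by
    have := lower h.proper (u := u) (v := v) (w := w)
      (fun x h1 h2 => hw x (by rw [h.cu] at h1; rw [h.cv] at h2; exact fin3' h.ne h.i2 h.j2 h1 h2))
      (fun hh x h1 => by rw [h.cu] at h1; rw [h.cv]; exact fin3 h.ne h.i2 h.j2 h1 (hadj hh x))
    rw [h.cu] at this
    omega
  have hlo2 : T + 1 ≤ cnt c j := by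
    have := lower_succ h.proper (u := v) (v := u) (w := w) (y := y)
      (fun x h1 h2 => hw x (by rw [h.cv] at h1; rw [h.cu] at h2; exact fin3' h.ne h.i2 h.j2 h2 h1))
      (fun hh x h1 => by
        rw [h.cv] at h1; rw [h.cu]; exact fin3 h.ne.symm h.j2 h.i2 h1 (hadj hh.symm x))
      (hcy.trans h.cv.symm) hyu hynv
    rw [h.cv] at this
    omega
  have b1 := h.update (x := p) (k := 2) hpu hpv (fun e => absurd e hp.1) hp2
  have b2 := b1.update (x := y) (k := i) hynu hynv (fun _ => ⟨hyu, hyv⟩) (by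
    intro z hz
    rw [leaf_nbr hy1 hz hpy.symm, Function.update_self]
    exact h.i2.symm)
  refine ⟨_, b2, ?_, ?_, ?_⟩
  · have e1 := cnt_update c p 2 i
    have e2 := cnt_update c p 2 j
    have e3 := cnt_update (Function.update c p 2) y i i
    have e4 := cnt_update (Function.update c p 2) y i j
    rw [Function.update_of_ne hyp, hcy] at e3 e4
    rw [hpi] at e1 e2
    simp only [h.ne, h.ne.symm, h.i2.symm, h.j2.symm, if_true, if_false] at e1 e2 e3 e4
    unfold Bounds
    omega
  · rw [Function.update_of_ne hyp.symm, Function.update_self]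
  · intro x hx hd
    rw [Function.update_of_ne (by rintro rfl; exact hd hy1), Function.update_of_ne hx]

/-! ### The case of non-adjacent `u` and `v` -/

/-- For non-adjacent `u` and `v`, every proper colouring that separates them and uses the third colour
at most once, on a non-leaf, satisfies `Base` and `Bounds`. -/
theorem base_of_not_adj (hG : G.IsTree) {T : ℕ} {u v w : V} {i j : Fin 3} {c : V → Fin 3}
    (hc : Proper G c) (cu : c u = i) (cv : c v = j) (ne : i ≠ j) (i2 : i ≠ 2) (j2 : j ≠ 2)
    (hw : ∀ x, c x = 2 → x = w) (hwd : G.degree w ≠ 1) (hadj : ¬ G.Adj u v)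
    (hTu : T ≤ G.degree u) (hTv : T ≤ G.degree v)
    (hn : Fintype.card V ≤ G.degree u + G.degree v + T) :
    Base G u v i j c ∧ Bounds G T u v i j c := by
  subst cu cv
  have hw' : ∀ x, c x ≠ c u → c x ≠ c v → x = w := fun x h1 h2 => hw x (fin3' ne i2 j2 h1 h2)
  have hw'' : ∀ x, c x ≠ c v → c x ≠ c u → x = w := fun x h1 h2 => hw' x h2 h1
  have hadj' : ¬ G.Adj v u := fun h => hadj h.symm
  refine ⟨⟨hc, rfl, rfl, ne, i2, j2, fun x hx hd => ?_, fun x hx hd => ?_⟩, ⟨?_, ?_⟩, ?_, ?_⟩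
  · by_contra h
    exact hwd (hw' x h (hc _ _ hx).symm ▸ hd)
  · by_contra h
    exact hwd (hw'' x h (hc _ _ hx).symm ▸ hd)
  · exact hTv.trans (lower hc hw' fun h => absurd h hadj)
  · have := upper hG hc ne hw' hadj
    omega
  · exact hTu.trans (lower hc hw'' fun h => absurd h hadj')
  · have := upper hG hc ne.symm hw'' hadj'
    omega

theorem exists_two_coloring (hG : G.IsTree) : ∃ d : V → Fin 3, Proper G d ∧ ∀ x, d x ≠ 2 := by
  obtain ⟨C⟩ := hG.colorable_two
  refine ⟨fun x => (C x).castSucc, fun a b hab h => C.valid hab (Fin.castSucc_injective _ h), ?_⟩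
  intro x h
  have := congrArg Fin.val h
  have := (C x).isLt
  simp at *
  omega

/-- Deleting the edges at a suitable non-leaf `w` separates non-adjacent vertices of a tree. -/
theorem exists_separator (hG : G.IsTree) {u v : V} (huv : u ≠ v) (hadj : ¬ G.Adj u v) :
    ∃ w, w ≠ u ∧ w ≠ v ∧ G.degree w ≠ 1 ∧
      ¬ (G.deleteEdges (G.incidenceSet w)).Reachable u v := by
  obtain ⟨P, hP⟩ := (hG.connected.preconnected u v).exists_isPath
  cases P with
  | nil => exact absurd rfl huv
  | @cons _ w _ h P' =>
    cases P' with
    | nil => exact absurd h hadj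
    | @cons _ x _ h' P'' =>
      have hP' := hP
      simp only [Walk.cons_isPath_iff, Walk.support_cons, List.mem_cons, not_or] at hP'
      obtain ⟨⟨hP1, hwP⟩, huw, huP⟩ := hP'
      have hwv : w ≠ v := by rintro rfl; exact hwP P''.end_mem_support
      refine ⟨w, fun e => huw e.symm, hwv, ?_, ?_⟩
      · intro hd
        have := leaf_nbr hd h.symm h'
        subst this
        exact huP P''.start_mem_support
      · intro hr
        obtain ⟨Q, hQ⟩ := hr.exists_isPath
        have hle : G.deleteEdges (G.incidenceSet w) ≤ G := G.deleteEdges_le _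
        have heq := (hG.isAcyclic.subsingleton_path u v).elim ⟨_, hP⟩ ⟨_, hQ.mapLe hle⟩
        have hmem : w ∈ (Q.mapLe hle).support := by
          rw [← congrArg (fun p : G.Path u v => p.1.support) heq]
          simp
        rw [Walk.support_mapLe_eq_support] at hmem
        have hiso : ∀ z, ¬ (G.deleteEdges (G.incidenceSet w)).Adj z w := by
          intro z hz
          rw [deleteEdges_adj] at hz
          exact hz.2 ⟨hz.1, Sym2.mem_mk_right z w⟩
        -- the initial segment of `Q` up to `w` would end with an edge at `w`
        obtain ⟨R⟩ : (G.deleteEdges (G.incidenceSet w)).Reachable w u :=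
          ⟨(Q.takeUntil w hmem).reverse⟩
        cases R with
        | nil => exact huw rfl
        | cons h1 _ => exact hiso _ h1.symm

/-- For non-adjacent `u` and `v` there is a proper colouring that separates them and uses the third
colour at most once, on a non-leaf. If the bipartite colouring does not separate them, the third
colour goes to a separating vertex, and the colours are swapped where `u` is not reachable. -/
theorem exists_base_coloring (hG : G.IsTree) {u v : V} (huv : u ≠ v) (hadj : ¬ G.Adj u v)
    (hu : G.degree u ≠ 1) :
    ∃ c w, Proper G c ∧ c u ≠ 2 ∧ c v ≠ 2 ∧ c u ≠ c v ∧ (∀ x, c x = 2 → x = w) ∧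
      G.degree w ≠ 1 := by
  classical
  obtain ⟨d, hd, hd2⟩ := exists_two_coloring hG
  by_cases h : d u = d v
  swap
  · exact ⟨d, u, hd, hd2 u, hd2 v, h, fun x hx => absurd hx (hd2 x), hu⟩
  obtain ⟨w, hwu, hwv, hwd, hr⟩ := exists_separator hG huv hadj
  set H := G.deleteEdges (G.incidenceSet w)
  let s : Fin 3 → Fin 3 := fun x => 1 - x
  have hs : ∀ x y : Fin 3, x ≠ 2 → y ≠ 2 → (s x ≠ 2 ∧ s x ≠ x ∧ (x ≠ y → s x ≠ s y)) := by decide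
  refine ⟨fun x => if x = w then 2 else if H.Reachable u x then d x else s (d x), w,
    ?_, ?_, ?_, ?_, ?_, hwd⟩
  · intro a b hab
    by_cases ha : a = w
    · have hb : b ≠ w := fun e => hab.ne (ha.trans e.symm)
      simp only [if_pos ha, if_neg hb]
      split_ifs
      exacts [(hd2 b).symm, (hs _ _ (hd2 b) (hd2 b)).1.symm]
    · by_cases hb : b = w
      · simp only [if_neg ha, if_pos hb]
        split_ifs
        exacts [hd2 a, (hs _ _ (hd2 a) (hd2 a)).1]
      · have hH : H.Adj a b := by
          rw [deleteEdges_adj]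
          refine ⟨hab, fun hm => ?_⟩
          rcases Sym2.mem_iff.1 hm.2 with e | e
          exacts [ha e.symm, hb e.symm]
        have hiff : H.Reachable u a ↔ H.Reachable u b :=
          ⟨fun h => h.trans hH.reachable, fun h => h.trans hH.symm.reachable⟩
        simp only [if_neg ha, if_neg hb, hiff]
        split_ifs
        exacts [hd a b hab, (hs _ _ (hd2 a) (hd2 b)).2.2 (hd a b hab)]
  · simp [hwu.symm, hd2]
  · simp only [if_neg hwv.symm, if_neg hr]
    exact (hs _ _ (hd2 v) (hd2 v)).1
  · simp only [if_neg hwv.symm, if_neg hr, if_neg hwu.symm, Reachable.refl, if_true, h]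
    exact (hs _ _ (hd2 v) (hd2 v)).2.1.symm
  · intro x hx
    by_contra hxw
    simp only [if_neg hxw] at hx
    split_ifs at hx
    exacts [hd2 x hx, (hs _ _ (hd2 x) (hd2 x)).1 hx]

/-- For non-adjacent `u` and `v`: a pre-leaf `p` other than `u` and `v` can be recoloured to differ
from a vertex `q` of the same colour. -/
theorem separate_aux (hG : G.IsTree) {T : ℕ} {u v w p q : V} {i j : Fin 3} {c : V → Fin 3}
    (h : Base G u v i j c) (hb : Bounds G T u v i j c)
    (hw : ∀ x, c x = 2 → x = w) (hwd : G.degree w ≠ 1) (hadj : ¬ G.Adj u v)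
    (hu : G.degree u ≠ 1) (hv : G.degree v ≠ 1)
    (hTu : T ≤ G.degree u) (hTv : T ≤ G.degree v)
    (hn : Fintype.card V ≤ G.degree u + G.degree v + T)
    (hp : IsPreLeaf G p) (hpq : p ≠ q) (hq : G.degree q ≠ 1) (hpu : p ≠ u) (hpv : p ≠ v)
    (hpi : c p = i) (hqi : c q = i) :
    ∃ c', Base G u v i j c' ∧ Bounds G T u v i j c' ∧ c' p ≠ c' q := by
  by_cases hpw : ∃ z, G.Adj p z ∧ c z = 2
  swap
  · push Not at hpw
    obtain ⟨c', h1, h2, h3, h4⟩ := move h hu hv hTu hTv hw (fun e => absurd e hadj) hp hpu hpv hpi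
      hpw hb.1.2 (hb.2.2.trans (Nat.le_succ _))
    refine ⟨c', h1, h2, ?_⟩
    rw [h3, h4 q hpq.symm hq, hqi]
    exact h.i2.symm
  -- the non-leaf neighbour of `p` has the third colour, so swapping the colours on `p` and its
  -- leaves keeps the colouring proper
  obtain ⟨z, hpz, hz⟩ := hpw
  obtain rfl := hw z hz
  obtain ⟨r, y, hr, hr1, hr2, hpy, hy1⟩ := preLeaf_spec hp
  obtain rfl := hr2 z hpz hwd
  let c' : V → Fin 3 := fun x => if x = p then j else if G.Adj p x ∧ G.degree x = 1 then i else c x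
  have hcp : c' p = j := if_pos rfl
  have hcx : ∀ x, x ≠ p → G.degree x ≠ 1 → c' x = c x := fun x h1 h2 => by simp [c', h1, h2]
  have hpn : ∀ b, G.Adj p b → c' b ≠ j := by
    intro b hpb
    have hbp := hpb.ne.symm
    by_cases hb1 : G.degree b = 1
    · simp only [c', if_neg hbp, if_pos (And.intro hpb hb1)]
      exact h.ne
    · rw [hcx b hbp hb1, hr2 b hpb hb1, hz]
      exact h.j2.symm
  have hprop : Proper G c' := by
    intro a b hab
    by_cases ha : a = p
    · subst ha
      rw [hcp]
      exact (hpn b hab).symm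
    by_cases hb' : b = p
    · subst hb'
      rw [hcp]
      exact hpn a hab.symm
    · have h1 : ¬ (G.Adj p a ∧ G.degree a = 1) := fun hh => hb' (leaf_nbr hh.2 hab hh.1.symm)
      have h2 : ¬ (G.Adj p b ∧ G.degree b = 1) := fun hh => ha (leaf_nbr hh.2 hab.symm hh.1.symm)
      simp only [c', if_neg ha, if_neg hb', if_neg h1, if_neg h2]
      exact h.proper a b hab
  have hbase := base_of_not_adj hG (T := T) (w := z) hprop ((hcx u hpu.symm hu).trans h.cu)
    ((hcx v hpv.symm hv).trans h.cv) h.ne h.i2 h.j2 (by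
      intro x hx
      simp only [c'] at hx
      split_ifs at hx
      exacts [absurd hx h.j2, absurd hx h.i2, hw x hx]) hwd hadj hTu hTv hn
  refine ⟨c', hbase.1, hbase.2, ?_⟩
  rw [hcp, hcx q hpq.symm hq, hqi]
  exact h.ne.symm

theorem Bounds.symm {T : ℕ} {u v : V} {i j : Fin 3} {c : V → Fin 3} (h : Bounds G T u v i j c) :
    Bounds G T v u j i c := ⟨h.2, h.1⟩

theorem not_adj_case (hG : G.IsTree) {T : ℕ} {u v p q : V} (huv : u ≠ v) (hadj : ¬ G.Adj u v)
    (hu : G.degree u ≠ 1) (hv : G.degree v ≠ 1)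
    (hTu : T ≤ G.degree u) (hTv : T ≤ G.degree v)
    (hn : Fintype.card V ≤ G.degree u + G.degree v + T)
    (hp : IsPreLeaf G p) (hq : IsPreLeaf G q) (hpq : p ≠ q) :
    ∃ i j c, Base G u v i j c ∧ Bounds G T u v i j c ∧ c p ≠ c q := by
  obtain ⟨c, w, hc, cu2, cv2, ne, hw, hwd⟩ := exists_base_coloring hG huv hadj hu
  obtain ⟨h, hb⟩ := base_of_not_adj hG hc rfl rfl ne cu2 cv2 hw hwd hadj hTu hTv hn
  by_cases hcpq : c p = c q
  swap
  · exact ⟨_, _, c, h, hb, hcpq⟩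
  have main : ∀ p q, IsPreLeaf G p → IsPreLeaf G q → p ≠ q → c p = c q → p ≠ u → p ≠ v →
      ∃ i j c, Base G u v i j c ∧ Bounds G T u v i j c ∧ c p ≠ c q := by
    intro p q hp hq hpq hcpq hpu hpv
    have hp2 : c p ≠ 2 := fun e => hpq ((hw p e).trans (hw q (hcpq ▸ e)).symm)
    by_cases hpi : c p = c u
    · obtain ⟨c', h1, h2, h3⟩ := separate_aux hG h hb hw hwd hadj hu hv hTu hTv hn hp hpq hq.1
        hpu hpv hpi (hcpq ▸ hpi)
      exact ⟨_, _, c', h1, h2, h3⟩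
    · have hpj : c p = c v := fin3 ne cu2 cv2 hpi hp2
      obtain ⟨c', h1, h2, h3⟩ := separate_aux hG h.symm hb.symm hw hwd (fun e => hadj e.symm) hv hu
        hTv hTu (by omega) hp hpq hq.1 hpv hpu hpj (hcpq ▸ hpj)
      exact ⟨_, _, c', h1.symm, h2.symm, h3⟩
  by_cases hpuv : p ≠ u ∧ p ≠ v
  · exact main p q hp hq hpq hcpq hpuv.1 hpuv.2
  · obtain ⟨i, j, c', h1, h2, h3⟩ := main q p hq hp hpq.symm hcpq.symm
      (by rintro rfl; apply hpuv; exact ⟨hpq, by rintro rfl; exact ne hcpq.symm⟩)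
      (by rintro rfl; apply hpuv; exact ⟨by rintro rfl; exact ne hcpq, hpq⟩)
    exact ⟨i, j, c', h1, h2, h3.symm⟩

/-! ### The case of adjacent `u` and `v` -/

theorem lf_of_preLeaf {u : V} (hp : IsPreLeaf G u) : lf G u + 1 = G.degree u := by
  obtain ⟨r, y, hr, hr1, hr2, -⟩ := preLeaf_spec hp
  rw [← lf_add u]
  have : (Finset.univ.filter fun x => G.Adj u x ∧ G.degree x ≠ 1) = {r} := by
    ext x
    simp only [Finset.mem_filter, Finset.mem_univ, true_and, Finset.mem_singleton]
    exact ⟨fun h => hr2 x h.1 h.2, by rintro rfl; exact ⟨hr, hr1⟩⟩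
  rw [this, Finset.card_singleton]

/-- The remaining case of the moving step: class `i`, which contains the pre-leaf `p`, exceeds its
bound by one. Then either `p` itself or a leaf at `p` takes the third colour. -/
theorem adj_aux {T : ℕ} {u v p q : V} {i j : Fin 3} {c : V → Fin 3}
    (h : Base G u v i j c) (hc2 : ∀ x, c x ≠ 2) (hadj : G.Adj u v)
    (hu : G.degree u ≠ 1) (hv : G.degree v ≠ 1)
    (hTu : T ≤ G.degree u) (hn : Fintype.card V ≤ 2 * T + G.degree u)
    (hTj : T ≤ cnt c j) (hi : cnt c i = T + lf G v + 1) (hj : cnt c j ≤ T + lf G u + 1)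
    (hp : IsPreLeaf G p) (hpq : p ≠ q) (hq : IsPreLeaf G q) (hpu : p ≠ u) (hpv : p ≠ v)
    (hpi : c p = i) (hvp : G.Adj v p)
    (hqj : q ≠ u → q ≠ v → c q = j → cnt c j = T + lf G u + 1) :
    ∃ c', Base G u v i j c' ∧ Bounds G T u v i j c' ∧ c' p ≠ c' q := by
  have hp2 : Base G u v i j (Function.update c p 2) :=
    h.update hpu hpv (fun e => absurd e hp.1) fun z _ => hc2 z
  have e1 := cnt_update c p 2 i
  have e2 := cnt_update c p 2 j
  simp only [hpi, h.ne, h.i2.symm, h.j2.symm, if_true, if_false] at e1 e2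
  by_cases hqv : q = v
  · subst hqv
    obtain ⟨r, -, -, -, hr, -⟩ := preLeaf_spec hq
    exact absurd ((hr p hvp hp.1).trans (hr u hadj.symm hu).symm) hpu
  by_cases hqu : q = u
  · subst hqu
    refine ⟨_, hp2, ?_, ?_⟩
    · have h1 := lf_of_preLeaf hq
      have h2 : cnt c i + cnt c j ≤ Fintype.card V := by
        rw [cnt, cnt, ← Finset.card_union_of_disjoint]
        · exact Finset.card_le_univ _
        · rw [Finset.disjoint_left]
          intro x hx hx'
          simp only [Finset.mem_filter, Finset.mem_univ, true_and] at hx hx'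
          exact h.ne (hx.symm.trans hx')
      unfold Bounds
      omega
    · rw [Function.update_self, Function.update_of_ne hpq.symm]
      exact (hc2 q).symm
  -- facts about a leaf `y` at a pre-leaf `p'` other than `u` and `v`
  have leaf : ∀ p' y, p' ≠ u → p' ≠ v → G.Adj p' y → G.degree y = 1 →
      y ≠ u ∧ y ≠ v ∧ ¬ G.Adj u y ∧ ¬ G.Adj v y := by
    intro p' y h1 h2 h3 h4
    exact ⟨by rintro rfl; exact hu h4, by rintro rfl; exact hv h4,
      fun e => h1 (leaf_nbr h4 h3.symm e.symm), fun e => h2 (leaf_nbr h4 h3.symm e.symm)⟩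
  obtain ⟨-, y, -, -, -, hqy, hy1⟩ := preLeaf_spec hq
  obtain ⟨hyu, hyv, hyu', hyv'⟩ := leaf q y hqu hqv hqy hy1
  have hyq : y ≠ q := hqy.ne.symm
  by_cases hqi : c q = i
  · have hcy : c y = j :=
      fin3 h.ne h.i2 h.j2 (fun e => h.proper q y hqy (hqi.trans e.symm)) (hc2 y)
    have hlo : T + 1 ≤ cnt c j := by
      have := lower_succ h.proper (u := v) (v := u) (w := u) (y := y)
        (fun x h1 h2 => by
          rw [h.cv] at h1; rw [h.cu] at h2
          exact absurd (fin3' h.ne h.i2 h.j2 h2 h1) (hc2 x))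
        (fun hh x h1 => by
          rw [h.cv] at h1; rw [h.cu]; exact fin3 h.ne.symm h.j2 h.i2 h1 (hc2 x))
        (hcy.trans h.cv.symm) hyu' hyv
      rw [h.cv] at this
      omega
    have hyp : y ≠ p := by rintro rfl; exact hp.1 hy1
    refine ⟨_, hp2.update (x := y) (k := 2) hyu hyv (fun _ => ⟨hyu', hyv'⟩) ?_, ?_, ?_⟩
    · intro z hz
      rw [leaf_nbr hy1 hz hqy.symm, Function.update_of_ne hpq.symm]
      exact hc2 q
    · have e3 := cnt_update (Function.update c p 2) y 2 i
      have e4 := cnt_update (Function.update c p 2) y 2 j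
      rw [Function.update_of_ne hyp, hcy] at e3 e4
      simp only [h.ne.symm, h.i2.symm, h.j2.symm, if_true, if_false] at e3 e4
      unfold Bounds
      omega
    · rw [Function.update_of_ne hyp.symm, Function.update_self, Function.update_of_ne hyq.symm,
        Function.update_of_ne hpq.symm]
      exact (hc2 q).symm
  · have hqj' : c q = j := fin3 h.ne h.i2 h.j2 hqi (hc2 q)
    have hj' := hqj hqu hqv hqj'
    have hcy : c y = i :=
      fin3 h.ne.symm h.j2 h.i2 (fun e => h.proper q y hqy (hqj'.trans e.symm)) (hc2 y)
    obtain ⟨-, z, -, -, -, hpz, hz1⟩ := preLeaf_spec hp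
    obtain ⟨hzu, hzv, hzu', hzv'⟩ := leaf p z hpu hpv hpz hz1
    have hcz : c z = j :=
      fin3 h.ne h.i2 h.j2 (fun e => h.proper p z hpz (hpi.trans e.symm)) (hc2 z)
    have hyz : y ≠ z := by rintro rfl; exact h.ne (hcy.symm.trans hcz)
    have hqz : q ≠ z := by rintro rfl; exact hq.1 hz1
    have hpy : p ≠ y := by rintro rfl; exact hp.1 hy1
    have b1 := h.update (x := z) (k := 2) hzu hzv (fun _ => ⟨hzu', hzv'⟩) fun x _ => hc2 x
    refine ⟨_, b1.update (x := y) (k := 2) hyu hyv (fun _ => ⟨hyu', hyv'⟩) ?_, ?_, ?_⟩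
    · intro x hx
      rw [leaf_nbr hy1 hx hqy.symm, Function.update_of_ne hqz]
      exact hc2 q
    · have e3 := cnt_update c z 2 i
      have e4 := cnt_update c z 2 j
      have e5 := cnt_update (Function.update c z 2) y 2 i
      have e6 := cnt_update (Function.update c z 2) y 2 j
      rw [Function.update_of_ne hyz, hcy] at e5 e6
      rw [hcz] at e3 e4
      simp only [h.ne, h.ne.symm, h.i2.symm, h.j2.symm, if_true, if_false] at e3 e4 e5 e6
      unfold Bounds
      omega
    · rw [Function.update_of_ne hpy, Function.update_of_ne hpz.ne, Function.update_of_ne hyq.symm,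
        Function.update_of_ne hqz, hpi, hqj']
      exact h.ne

/-- In a double star with centres `u` and `v`, the class of `u` is within its bound. -/
theorem double_star (hG : G.IsTree) {u v : V} {i j : Fin 3} {c : V → Fin 3}
    (h : Base G u v i j c) (hadj : G.Adj u v) (hu : IsPreLeaf G u) (hv : IsPreLeaf G v) :
    cnt c i ≤ lf G v + 1 := by
  obtain ⟨r, -, -, -, hr, -⟩ := preLeaf_spec hu
  obtain ⟨s, -, -, -, hs, -⟩ := preLeaf_spec hv
  have hclosed : ∀ a b, G.Adj a b → (G.Adj u a ∨ G.Adj v a) → (G.Adj u b ∨ G.Adj v b) := by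
    rintro a b hab (ha | ha)
    · by_cases h1 : G.degree a = 1
      · exact Or.inr (leaf_nbr h1 hab ha.symm ▸ hadj.symm)
      · exact Or.inr (((hr a ha h1).trans (hr v hadj hv.1).symm) ▸ hab)
    · by_cases h1 : G.degree a = 1
      · exact Or.inl (leaf_nbr h1 hab ha.symm ▸ hadj)
      · exact Or.inl (((hs a ha h1).trans (hs u hadj.symm hu.1).symm) ▸ hab)
  have hall : ∀ x, G.Adj u x ∨ G.Adj v x := by
    intro x
    obtain ⟨P⟩ := hG.connected.preconnected v x
    have : ∀ a b, G.Walk a b → (G.Adj u a ∨ G.Adj v a) → (G.Adj u b ∨ G.Adj v b) := by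
      intro a b P
      induction P with
      | nil => exact id
      | cons hab _ ih => exact fun ha => ih (hclosed _ _ hab ha)
    exact this v x P (Or.inl hadj)
  rw [lf_of_preLeaf hv, ← G.card_neighborFinset_eq_degree]
  refine Finset.card_le_card fun x hx => ?_
  simp only [Finset.mem_filter, Finset.mem_univ, true_and] at hx
  rw [mem_neighborFinset]
  rcases hall x with hx1 | hx1
  · by_cases hd : G.degree x = 1
    · exact absurd (hx.symm.trans (h.leafu x hx1 hd)) h.ne
    · obtain rfl := (hr x hx1 hd).trans (hr v hadj hv.1).symm
      exact absurd (hx.symm.trans h.cv) h.ne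
  · exact hx1

/-- Separation of `p` from `q` for adjacent `u` and `v`, where `p` has the colour of `u`: either `move`
does it, or the class of `u` exceeds its bound by one. In the latter case separation is possible
unless `q`, outside `u` and `v`, lies in the class of `v` and that class is within its bound. -/
theorem adj_step (hG : G.IsTree) {T : ℕ} {u v p q : V} {c : V → Fin 3} (hc : Proper G c)
    (hc2 : ∀ x, c x ≠ 2) (h : Base G u v (c u) (c v) c) (hadj : G.Adj u v)
    (hu : G.degree u ≠ 1) (hv : G.degree v ≠ 1)
    (hTu : T ≤ G.degree u) (hTv : T ≤ G.degree v)
    (hn : Fintype.card V ≤ G.degree u + G.degree v + T)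
    (hnu : Fintype.card V ≤ 2 * T + G.degree u) (lov : T ≤ cnt c (c v))
    (hiu : cnt c (c u) ≤ T + lf G v + 1) (hiv : cnt c (c v) ≤ T + lf G u + 1)
    (hp : IsPreLeaf G p) (hq : IsPreLeaf G q) (hpq : p ≠ q) (hpu : p ≠ u) (hpv : p ≠ v)
    (hpi : c p = c u) :
    (∃ c', Base G u v (c u) (c v) c' ∧ Bounds G T u v (c u) (c v) c' ∧ c' p ≠ c' q) ∨
      cnt c (c u) = T + lf G v + 1 ∧
      ((q ≠ u → q ≠ v → c q = c v → cnt c (c v) = T + lf G u + 1) →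
      ∃ c', Base G u v (c u) (c v) c' ∧ Bounds G T u v (c u) (c v) c' ∧ c' p ≠ c' q) := by
  have hw : ∀ x, c x ≠ c u → c x = c v := fun x hx => fin3 h.ne h.i2 h.j2 hx (hc2 x)
  by_cases hle : cnt c (c u) ≤ T + lf G v
  · left
    obtain ⟨c', h1, h2, h3, h4⟩ := move h hu hv hTu hTv (w := u)
      (fun x hx => absurd hx (hc2 x)) (fun _ => hc2) hp hpu hpv hpi (fun z _ => hc2 z) hle hiv
    refine ⟨c', h1, h2, ?_⟩
    rw [h3, h4 q hpq.symm hq.1]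
    exact (hc2 q).symm
  · right
    refine ⟨by omega, fun hqj => ?_⟩
    have hvp : G.Adj v p := by
      by_contra hvp
      have := upper_adj' hG hc h.ne hw hpi hpu hp.1 hvp
      omega
    exact adj_aux h hc2 hadj hu hv hTu hnu lov (by omega) hiv hp hpq hq hpu hpv hpi hvp hqj

theorem adj_case (hG : G.IsTree) {T : ℕ} {u v p q : V} (hadj : G.Adj u v)
    (hu : G.degree u ≠ 1) (hv : G.degree v ≠ 1) (hT : 1 ≤ T)
    (hTu : T ≤ G.degree u) (hTv : T ≤ G.degree v)
    (hn : Fintype.card V ≤ G.degree u + G.degree v + T)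
    (hnu : Fintype.card V ≤ 2 * T + G.degree u) (hnv : Fintype.card V ≤ 2 * T + G.degree v)
    (hp : IsPreLeaf G p) (hq : IsPreLeaf G q) (hpq : p ≠ q) :
    ∃ i j c, Base G u v i j c ∧ Bounds G T u v i j c ∧ c p ≠ c q := by
  obtain ⟨c, hc, hc2⟩ := exists_two_coloring hG
  have ne : c u ≠ c v := hc u v hadj
  have hw : ∀ x, c x ≠ c u → c x = c v := fun x hx => fin3 ne (hc2 u) (hc2 v) hx (hc2 x)
  have hw' : ∀ x, c x ≠ c v → c x = c u := fun x hx => fin3 ne.symm (hc2 v) (hc2 u) hx (hc2 x)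
  have h : Base G u v (c u) (c v) c := ⟨hc, rfl, rfl, ne, hc2 u, hc2 v,
    fun x hx _ => hw' x (hc _ _ hx).symm, fun x hx _ => hw x (hc _ _ hx).symm⟩
  have lou : T ≤ cnt c (c u) :=
    hTv.trans (lower hc (w := u) (fun x h1 h2 => absurd (hw x h1) h2) fun _ => hw)
  have lov : T ≤ cnt c (c v) :=
    hTu.trans (lower hc (w := u) (fun x h1 h2 => absurd (hw' x h1) h2) fun _ => hw')
  have hiu : cnt c (c u) ≤ T + lf G v + 1 := by
    have := upper_adj hG hc ne hw
    omega
  have hiv : cnt c (c v) ≤ T + lf G u + 1 := by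
    have := upper_adj hG hc ne.symm hw'
    omega
  -- `K x` says that the colour class of `x` exceeds its bound
  let K : V → Prop := fun x => (c x = c u → cnt c (c u) = T + lf G v + 1) ∧
    (c x = c v → cnt c (c v) = T + lf G u + 1)
  let Goal : V → V → Prop := fun p q =>
    ∃ i j c, Base G u v i j c ∧ Bounds G T u v i j c ∧ c p ≠ c q
  have step : ∀ p q, IsPreLeaf G p → IsPreLeaf G q → p ≠ q → p ≠ u → p ≠ v →
      Goal p q ∨ K p ∧ ((q ≠ u → q ≠ v → K q) → Goal p q) := by
    intro p q hp hq hpq hpu hpv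
    by_cases hpi : c p = c u
    · rcases adj_step hG hc hc2 h hadj hu hv hTu hTv hn hnu lov hiu hiv hp hq hpq hpu hpv hpi with
        ⟨c', h1, h2, h3⟩ | ⟨hK, hh⟩
      · exact Or.inl ⟨_, _, c', h1, h2, h3⟩
      · refine Or.inr ⟨⟨fun _ => hK, fun e => absurd (hpi.symm.trans e) ne⟩, fun hq' => ?_⟩
        obtain ⟨c', h1, h2, h3⟩ := hh fun a b e => (hq' a b).2 e
        exact ⟨_, _, c', h1, h2, h3⟩
    · have hpj := hw p hpi
      rcases adj_step hG hc hc2 h.symm hadj.symm hv hu hTv hTu (by omega) hnv lou hiv hiu hp hq hpq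
        hpv hpu hpj with ⟨c', h1, h2, h3⟩ | ⟨hK, hh⟩
      · exact Or.inl ⟨_, _, c', h1.symm, h2.symm, h3⟩
      · refine Or.inr ⟨⟨fun e => absurd e hpi, fun _ => hK⟩, fun hq' => ?_⟩
        obtain ⟨c', h1, h2, h3⟩ := hh fun a b e => (hq' b a).1 e
        exact ⟨_, _, c', h1.symm, h2.symm, h3⟩
  have goal_symm : ∀ p q, Goal p q → Goal q p := fun p q ⟨i, j, c', h1, h2, h3⟩ =>
    ⟨i, j, c', h1, h2, h3.symm⟩
  by_cases hpuv : p ≠ u ∧ p ≠ v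
  · rcases step p q hp hq hpq hpuv.1 hpuv.2 with hg | ⟨-, hg⟩
    · exact hg
    by_cases hquv : q ≠ u ∧ q ≠ v
    · rcases step q p hq hp hpq.symm hquv.1 hquv.2 with hg' | ⟨hK, -⟩
      · exact goal_symm _ _ hg'
      · exact hg fun _ _ => hK
    · exact hg fun a b => absurd ⟨a, b⟩ hquv
  by_cases hquv : q ≠ u ∧ q ≠ v
  · rcases step q p hq hp hpq.symm hquv.1 hquv.2 with hg | ⟨-, hg⟩
    · exact goal_symm _ _ hg
    · exact goal_symm _ _ (hg fun a b => absurd ⟨a, b⟩ hpuv)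
  have hpuv' : p = u ∨ p = v := by tauto
  have hquv' : q = u ∨ q = v := by tauto
  have star : IsPreLeaf G u → IsPreLeaf G v → Bounds G T u v (c u) (c v) c := fun a b => by
    have := double_star hG h hadj a b
    have := double_star hG h.symm hadj.symm b a
    unfold Bounds
    omega
  rcases hpuv' with rfl | rfl <;> rcases hquv' with rfl | rfl
  · exact absurd rfl hpq
  · exact ⟨_, _, c, h, star hp hq, ne⟩
  · exact ⟨_, _, c, h, star hq hp, ne.symm⟩
  · exact absurd rfl hpq

theorem four_le_card {p q : V} (hp : IsPreLeaf G p) (hq : IsPreLeaf G q) (hpq : p ≠ q) :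
    4 ≤ Fintype.card V := by
  obtain ⟨-, y, -, -, -, hpy, hy1⟩ := preLeaf_spec hp
  obtain ⟨-, z, -, -, -, hqz, hz1⟩ := preLeaf_spec hq
  have hyz : y ≠ z := by rintro rfl; exact hpq (leaf_nbr hy1 hpy.symm hqz.symm)
  have h1 : p ≠ z := by rintro rfl; exact hp.1 hz1
  have h2 : q ≠ y := by rintro rfl; exact hq.1 hy1
  have : ({p, q, y, z} : Finset V).card = 4 := by
    rw [Finset.card_insert_of_notMem (by simp [hpq, hpy.ne, h1]),
      Finset.card_insert_of_notMem (by simp [h2, hqz.ne]), Finset.card_pair hyz]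
  rw [← this]
  exact Finset.card_le_univ _

end BalancedTree

theorem strongly3Balanced_coloring_separating {V : Type*} [Fintype V] [DecidableEq V]
    (G : SimpleGraph V) [DecidableRel G.Adj] (hG : G.IsTree)
    (u v : V) (huv : u ≠ v)
    (hu : (Fintype.card V : ℝ) / 3 ≤ (G.degree u : ℝ))
    (hv : (Fintype.card V : ℝ) / 3 ≤ (G.degree v : ℝ))
    (p q : V) (hpq : p ≠ q) (hp : IsPreLeaf G p) (hq : IsPreLeaf G q) :
    ∃ c : V → Fin 3,
      (∀ a b : V, G.Adj a b → c a ≠ c b) ∧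
      (∀ i j : Fin 3,
        |(({x | c x = i} : Set V).ncard : ℤ) - (({x | c x = j} : Set V).ncard : ℤ)| ≤ 1) ∧
      c u ≠ c v ∧ c p ≠ c q := by
  have h4 := BalancedTree.four_le_card hp hq hpq
  have hu' : Fintype.card V ≤ 3 * G.degree u := by
    rw [div_le_iff₀ (by norm_num)] at hu
    have : Fintype.card V ≤ G.degree u * 3 := by exact_mod_cast hu
    omega
  have hv' : Fintype.card V ≤ 3 * G.degree v := by
    rw [div_le_iff₀ (by norm_num)] at hv
    have : Fintype.card V ≤ G.degree v * 3 := by exact_mod_cast hv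
    omega
  have hu1 : G.degree u ≠ 1 := by omega
  have hv1 : G.degree v ≠ 1 := by omega
  obtain ⟨i, j, c, h, hb, hcpq⟩ : ∃ i j c, BalancedTree.Base G u v i j c ∧
      BalancedTree.Bounds G ((Fintype.card V + 1) / 3) u v i j c ∧ c p ≠ c q := by
    by_cases hadj : G.Adj u v
    · exact BalancedTree.adj_case hG hadj hu1 hv1 (by omega) (by omega) (by omega) (by omega)
        (by omega) (by omega) hp hq hpq
    · exact BalancedTree.not_adj_case hG huv hadj hu1 hv1 (by omega) (by omega) (by omega) hp hq hpq
  obtain ⟨c', h1, h2, h3⟩ := BalancedTree.balance h hb hu1 hv1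
  refine ⟨c', h1, h2, ?_, ?_⟩
  · rw [h3 u hu1, h3 v hv1, h.cu, h.cv]
    exact h.ne
  · rw [h3 p hp.1, h3 q hq.1]
    exact hcpq
end

section
/- Let G = (V,E) be a tree with n vertices whose maximal degree satisfies d_max(G) ≤ n/3. Then G is strongly 3-balanced; moreover, for any two distinct pre-leaf vertices p and q of G there exists a strongly 3-balanced coloring c : V → {1,2,3} such that c(p) ≠ c(q). -/
/-!
The theorem is proved for forests, by strong induction on the vertex set `S`, under the relaxed degree
bound `deg ≤ bd |S|` with `bd n = n - 2⌊n/3⌋ + 1`. This bound follows from `3 d_max ≤ n`, and it drops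
by exactly one when three vertices are removed. The induction carries both claims (`Q`): a balanced
coloring exists, and any two pre-leaf vertices can be separated by one.

The inductive step removes three vertices and gives them three different colors, so that balance is
preserved. Such an extension exists either when one of the three has no neighbour among the remaining
vertices and the other two have at most one each (`extend_one`), or when the three are leaves, two of
them hanging at vertices known to have different colors (`extend_three`). The triple must touch every
*big* vertex, one attaining the bound, so that the bound survives (`Q_remove`). Counting the excess
`∑ (deg - 1)⁺ ≤ |S| - 2` of a forest (`Forest.excess`) gives control over big vertices: there are at
most two (`not_three_big`), two of them cannot both be leafless (`leaf_of_two_big`), and the branches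
of a big vertex are mostly leaves and pendant paths of length two (`big_count`).

For a pair `p`, `q` of pre-leaf vertices a suitable triple is found by a case distinction on the big
vertices (`pair_two_big`, `pair_one_big`). The delicate case has two big vertices without pendant
paths: there one leaf of each is removed, and the two big vertices receive different colors in every
balanced coloring of the rest, since otherwise their neighbourhoods would be disjoint from a color
class too large to fit (`deg_le_of_same_color`).

Existence without a prescribed pair follows by applying the separation claim to two ends of the forest
formed by the vertices of degree at least two; if there are not two such vertices, the forest is a
star with a matching and isolated vertices (`good_of_one_inner`).
-/

open SimpleGraph

/-- A finite simple graph is *strongly 3-balanced* if there is a coloring of the vertices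
with 3 colors such that no edge has both endpoints of the same color and the numbers of
vertices of any two colors differ by at most 1. -/
def Strongly3Balanced {V : Type*} (G : SimpleGraph V) : Prop :=
  ∃ c : V → Fin 3,
    (∀ u w : V, G.Adj u w → c u ≠ c w) ∧
    ∀ i j : Fin 3,
      |(({v | c v = i} : Set V).ncard : ℤ) - (({v | c v = j} : Set V).ncard : ℤ)| ≤ 1

/-! ### Forests, colorings and the induction statement -/

/-- The neighbours of `v` inside the vertex set `S`. -/
def nb {V : Type*} (G : SimpleGraph V) [DecidableRel G.Adj] (S : Finset V) (v : V) : Finset V :=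
  S.filter (fun w => G.Adj v w)

/-- Every nonempty vertex set contains a vertex with at most one neighbour in that set. This form
of acyclicity passes to induced subgraphs without changing the vertex type. -/
def Forest {V : Type*} (G : SimpleGraph V) [DecidableRel G.Adj] : Prop :=
  ∀ S : Finset V, S.Nonempty → ∃ v ∈ S, (nb G S v).card ≤ 1

/-- `c` restricts to a strongly 3-balanced coloring of the subgraph induced on `S`; the values
outside `S` are irrelevant. -/
def Good {V : Type*} (G : SimpleGraph V) (S : Finset V) (c : V → Fin 3) : Prop :=
  (∀ u ∈ S, ∀ w ∈ S, G.Adj u w → c u ≠ c w) ∧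
    ∀ i j : Fin 3, (S.filter (fun v => c v = i)).card ≤ (S.filter (fun v => c v = j)).card + 1

/-- A pre-leaf vertex of the forest induced on `S`: degree at least two, and at most one
neighbour which is not a leaf. -/
def PL {V : Type*} (G : SimpleGraph V) [DecidableRel G.Adj] (S : Finset V) (p : V) : Prop :=
  2 ≤ (nb G S p).card ∧ ((nb G S p).filter (fun w => 2 ≤ (nb G S w).card)).card ≤ 1

/-- The relaxed degree bound for a forest on `n` vertices. It drops by exactly one when `n` drops
by three. -/
def bd (n : ℕ) : ℕ := n - 2 * (n / 3) + 1

/-- Every vertex of the forest on `S` satisfies the relaxed degree bound. -/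
def Bdd {V : Type*} (G : SimpleGraph V) [DecidableRel G.Adj] (S : Finset V) : Prop :=
  ∀ v ∈ S, (nb G S v).card ≤ bd S.card

/-- The statement proved by induction on `S`: the forest on `S` has a strongly 3-balanced coloring,
and any two pre-leaf vertices can be separated by such a coloring. -/
def Q {V : Type*} (G : SimpleGraph V) [DecidableRel G.Adj] (S : Finset V) : Prop :=
  (∃ c, Good G S c) ∧
    ∀ p ∈ S, ∀ q ∈ S, p ≠ q → PL G S p → PL G S q → ∃ c, Good G S c ∧ c p ≠ c q

/-- The induction hypothesis at `S`: `Q` for all smaller vertex sets satisfying the bound. -/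
def IndHyp {V : Type*} (G : SimpleGraph V) [DecidableRel G.Adj] (S : Finset V) : Prop :=
  ∀ T : Finset V, T.card < S.card → Bdd G T → Q G T

/-- A vertex attaining the degree bound. For `S.card ≤ 8` the bound of any forest on
`S.card - 3` vertices is automatic, so such small `S` are declared to have no big vertices. -/
def Big {V : Type*} (G : SimpleGraph V) [DecidableRel G.Adj] (S : Finset V) (v : V) : Prop :=
  v ∈ S ∧ 9 ≤ S.card ∧ (nb G S v).card = bd S.card

set_option linter.unusedSectionVars false

section
variable {V : Type*} [DecidableEq V] {G : SimpleGraph V} [DecidableRel G.Adj]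

/-! ### Basic facts on induced forests -/

theorem mem_nb {S : Finset V} {v w : V} : w ∈ nb G S v ↔ w ∈ S ∧ G.Adj v w := by
  simp [nb]

theorem nb_mono {S T : Finset V} (h : S ⊆ T) (v : V) : nb G S v ⊆ nb G T v :=
  Finset.filter_subset_filter _ h

theorem leaf_unique {S : Finset V} {z r w : V} (h : (nb G S z).card ≤ 1) (hr : r ∈ S)
    (hzr : G.Adj z r) (hw : w ∈ S) (hzw : G.Adj z w) : w = r :=
  Finset.card_le_one.1 h w (mem_nb.2 ⟨hw, hzw⟩) r (mem_nb.2 ⟨hr, hzr⟩)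

theorem forest_of_acyclic (hG : G.IsAcyclic) : Forest G := by
  intro S hS
  by_cases h1 : S.card ≤ 1
  · obtain ⟨v, hv⟩ := hS
    refine ⟨v, hv, (Finset.card_le_card ?_).trans h1⟩
    exact Finset.filter_subset _ _
  have hnt : Nontrivial (S : Set V) := by
    obtain ⟨a, ha, b, hb, hab⟩ := Finset.one_lt_card.1 (not_le.1 h1)
    exact ⟨⟨a, ha⟩, ⟨b, hb⟩, fun h => hab (congrArg Subtype.val h)⟩
  obtain ⟨T, hle, -, hT⟩ := (connected_top : (⊤ : SimpleGraph (S : Set V)).Connected).exists_isTree_le_of_le_of_isAcyclic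
    (H := G.induce (S : Set V)) le_top (hG.induce _)
  classical
  obtain ⟨v, hv⟩ := hT.exists_vert_degree_one_of_nontrivial
  refine ⟨v.1, v.2, Finset.card_le_one.2 fun x hx y hy => ?_⟩
  rw [mem_nb] at hx hy
  have key := Finset.card_le_one.1 hv.le
  have := key ⟨x, hx.1⟩ (by simpa using hle (by simpa using hx.2)) ⟨y, hy.1⟩
    (by simpa using hle (by simpa using hy.2))
  exact congrArg Subtype.val this

theorem Forest.no_triangle (hF : Forest G) {a b d : V} (h1 : G.Adj a b) (h2 : G.Adj b d)
    (h3 : G.Adj a d) : False := by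
  obtain ⟨v, hv, h⟩ := hF {a, b, d} ⟨a, by simp⟩
  rw [Finset.card_le_one] at h
  have n1 := h1.ne
  have n2 := h2.ne
  have n3 := h3.ne
  simp only [mem_nb, Finset.mem_insert, Finset.mem_singleton] at h hv
  rcases hv with rfl | rfl | rfl
  · exact n2 (h b ⟨by simp, h1⟩ d ⟨by simp, h3⟩)
  · exact n3 (h a ⟨by simp, h1.symm⟩ d ⟨by simp, h2⟩)
  · exact n1 (h a ⟨by simp, h3.symm⟩ b ⟨by simp, h2.symm⟩)

theorem Forest.common_nb (hF : Forest G) {a b x y : V} (hab : a ≠ b) (h1 : G.Adj a x)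
    (h2 : G.Adj b x) (h3 : G.Adj a y) (h4 : G.Adj b y) : x = y := by
  by_contra hxy
  obtain ⟨v, hv, h⟩ := hF {a, b, x, y} ⟨a, by simp⟩
  rw [Finset.card_le_one] at h
  simp only [mem_nb, Finset.mem_insert, Finset.mem_singleton] at h hv
  rcases hv with rfl | rfl | rfl | rfl
  · exact hxy (h x ⟨by simp, h1⟩ y ⟨by simp, h3⟩)
  · exact hxy (h x ⟨by simp, h2⟩ y ⟨by simp, h4⟩)
  · exact hab (h a ⟨by simp, h1.symm⟩ b ⟨by simp, h2.symm⟩)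
  · exact hab (h a ⟨by simp, h3.symm⟩ b ⟨by simp, h4.symm⟩)

theorem card_nb_erase {S : Finset V} {v w : V} (hv : v ∈ S) :
    (nb G S w).card = (nb G (S.erase v) w).card + if G.Adj w v then 1 else 0 := by
  have : nb G S w = if G.Adj w v then insert v (nb G (S.erase v) w) else nb G (S.erase v) w := by
    split_ifs with h
    · ext x; simp only [mem_nb, Finset.mem_insert, Finset.mem_erase]; grind
    · ext x; simp only [mem_nb, Finset.mem_erase]; grind
  rw [this]
  split_ifs with h
  · rw [Finset.card_insert_of_notMem (by simp [mem_nb])]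
  · rfl

/-- The excess bound: deleting leaves one at a time, each deletion lowers
`∑ (deg - 1)⁺` by at most one. -/
theorem Forest.excess (hF : Forest G) : ∀ (n : ℕ) (S : Finset V), S.card = n → 2 ≤ n →
    ∑ v ∈ S, ((nb G S v).card - 1) + 2 ≤ n := by
  intro n
  induction n with
  | zero => intro S _ h; omega
  | succ n ih =>
    intro S hS hn
    obtain ⟨v, hv, h1⟩ := hF S (Finset.card_pos.1 (by omega))
    by_cases hn2 : n = 1
    · subst hn2
      have : ∑ v ∈ S, ((nb G S v).card - 1) = 0 := by
        refine Finset.sum_eq_zero fun w hw => ?_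
        have : nb G S w ⊆ S.erase w := fun x hx => by
          rw [mem_nb] at hx
          exact Finset.mem_erase.2 ⟨hx.2.ne', hx.1⟩
        have := Finset.card_le_card this
        rw [Finset.card_erase_of_mem hw] at this
        omega
      omega
    have ih' := ih (S.erase v) (by rw [Finset.card_erase_of_mem hv]; omega) (by omega)
    have : ∑ w ∈ S, ((nb G S w).card - 1) ≤
        ∑ w ∈ S.erase v, ((nb G (S.erase v) w).card - 1) + 1 := by
      rw [← Finset.add_sum_erase S _ hv]
      have h2 : (nb G S v).card - 1 = 0 := by omega
      rw [h2, zero_add]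
      calc ∑ w ∈ S.erase v, ((nb G S w).card - 1)
          ≤ ∑ w ∈ S.erase v, (((nb G (S.erase v) w).card - 1) + if G.Adj w v then 1 else 0) := by
            refine Finset.sum_le_sum fun w hw => ?_
            rw [card_nb_erase (w := w) hv]
            split_ifs <;> omega
        _ = ∑ w ∈ S.erase v, ((nb G (S.erase v) w).card - 1) +
              ((S.erase v).filter (fun w => G.Adj w v)).card := by
            rw [Finset.sum_add_distrib, Finset.card_filter]
        _ ≤ _ := by
            refine Nat.add_le_add_left (le_trans (Finset.card_le_card ?_) h1) _
            intro x hx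
            simp only [Finset.mem_filter, Finset.mem_erase] at hx
            exact mem_nb.2 ⟨hx.1.2, hx.2.symm⟩
    omega

/-- Handshake bound in a forest. -/
theorem Forest.sum_deg (hF : Forest G) : ∀ (n : ℕ) (S : Finset V), S.card = n → 1 ≤ n →
    ∑ v ∈ S, (nb G S v).card + 2 ≤ 2 * n := by
  intro n
  induction n with
  | zero => intro S _ h; omega
  | succ n ih =>
    intro S hS hn
    obtain ⟨v, hv, h1⟩ := hF S (Finset.card_pos.1 (by omega))
    have : ∑ w ∈ S, (nb G S w).card ≤
        ∑ w ∈ S.erase v, (nb G (S.erase v) w).card + 2 * (nb G S v).card := by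
      rw [← Finset.add_sum_erase S _ hv]
      have : ∑ w ∈ S.erase v, (nb G S w).card ≤
        ∑ w ∈ S.erase v, (nb G (S.erase v) w).card + (nb G S v).card := by
        calc ∑ w ∈ S.erase v, (nb G S w).card
            = ∑ w ∈ S.erase v, ((nb G (S.erase v) w).card + if G.Adj w v then 1 else 0) := by
              refine Finset.sum_congr rfl fun w hw => ?_
              rw [card_nb_erase (w := w) hv]
          _ = ∑ w ∈ S.erase v, (nb G (S.erase v) w).card +
              ((S.erase v).filter (fun w => G.Adj w v)).card := by
            rw [Finset.sum_add_distrib, Finset.card_filter]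
          _ ≤ _ := by
            refine Nat.add_le_add_left (Finset.card_le_card ?_) _
            intro x hx
            simp only [Finset.mem_filter, Finset.mem_erase] at hx
            exact mem_nb.2 ⟨hx.1.2, hx.2.symm⟩
      omega
    by_cases hn2 : n = 0
    · subst hn2
      obtain ⟨x, rfl⟩ := Finset.card_eq_one.1 hS
      simp [nb, Finset.filter_singleton]
    have ih' := ih (S.erase v) (by rw [Finset.card_erase_of_mem hv]; omega) (by omega)
    omega

/-! ### Extending a coloring by three vertices -/

/-- Three new vertices with pairwise different colors keep the coloring balanced, since every color
class grows by one. -/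
theorem good_extend {S : Finset V} {a b d : V} (ha : a ∈ S) (hb : b ∈ S) (hd : d ∈ S)
    (hab : a ≠ b) (had : a ≠ d) (hbd : b ≠ d) {c : V → Fin 3}
    (hc : Good G (S \ {a, b, d}) c) {x y z : Fin 3} (hxy : x ≠ y) (hxz : x ≠ z) (hyz : y ≠ z)
    (h1 : ∀ w ∈ S \ {a, b, d}, G.Adj a w → c w ≠ x)
    (h2 : ∀ w ∈ S \ {a, b, d}, G.Adj b w → c w ≠ y)
    (h3 : ∀ w ∈ S \ {a, b, d}, G.Adj d w → c w ≠ z) :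
    ∃ c', Good G S c' ∧ (∀ v ∈ S \ {a, b, d}, c' v = c v) ∧ c' a = x := by
  let c' : V → Fin 3 := fun v => if v = a then x else if v = b then y else if v = d then z else c v
  have ca : c' a = x := by simp [c']
  have cb : c' b = y := by simp [c', hab.symm]
  have cd : c' d = z := by simp [c', had.symm, hbd.symm]
  have cS : ∀ v ∈ S \ {a, b, d}, c' v = c v := by
    intro v hv
    simp only [Finset.mem_sdiff, Finset.mem_insert, Finset.mem_singleton, not_or] at hv
    simp [c', hv.2.1, hv.2.2.1, hv.2.2.2]
  have hsub : ({a, b, d} : Finset V) ⊆ S := by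
    intro v; simp only [Finset.mem_insert, Finset.mem_singleton]; rintro (rfl | rfl | rfl) <;> assumption
  have hcount : ∀ i, (S.filter (fun v => c' v = i)).card =
      ((S \ {a, b, d}).filter (fun v => c v = i)).card + 1 := by
    intro i
    rw [Finset.card_filter, ← Finset.sum_sdiff hsub, Finset.card_filter]
    congr 1
    · exact Finset.sum_congr rfl fun v hv => by rw [cS v hv]
    · rw [Finset.sum_insert (by simp [hab, had]), Finset.sum_insert (by simp [hbd]),
        Finset.sum_singleton, ca, cb, cd]
      clear * - hxy hxz hyz
      revert x y z i; decide
  refine ⟨c', ⟨?_, ?_⟩, cS, ca⟩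
  · have key : ∀ u ∈ S, u = a ∨ u = b ∨ u = d ∨ u ∈ S \ {a, b, d} := by
      intro u hu
      simp only [Finset.mem_sdiff, Finset.mem_insert, Finset.mem_singleton]
      tauto
    intro u hu w hw huw
    have hne := huw.ne
    rcases key u hu with rfl | rfl | rfl | hu' <;> rcases key w hw with rfl | rfl | rfl | hw'
    all_goals first | exact absurd rfl hne | skip
    all_goals try simp only [ca, cb, cd]
    all_goals first | assumption | (apply Ne.symm; assumption) | skip
    · rw [cS _ hw']; exact (h1 w hw' huw).symm
    · rw [cS _ hw']; exact (h2 w hw' huw).symm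
    · rw [cS _ hw']; exact (h3 w hw' huw).symm
    · rw [cS _ hu']; exact (h1 u hu' huw.symm)
    · rw [cS _ hu']; exact (h2 u hu' huw.symm)
    · rw [cS _ hu']; exact (h3 u hu' huw.symm)
    · rw [cS _ hu', cS _ hw']; exact hc.1 u hu' w hw' huw
  · intro i j
    rw [hcount, hcount]
    exact Nat.add_le_add_right (hc.2 i j) 1

/-- A vertex with at most one neighbour in `T` sees at most one color there. -/
theorem exists_forbidden {T : Finset V} {a : V} (c : V → Fin 3)
    (h : ∀ u ∈ T, ∀ w ∈ T, G.Adj a u → G.Adj a w → u = w) :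
    ∃ α, ∀ w ∈ T, G.Adj a w → c w = α := by
  by_cases h' : ∃ u ∈ T, G.Adj a u
  · obtain ⟨u, hu, hau⟩ := h'
    exact ⟨c u, fun w hw haw => by rw [h u hu w hw hau haw]⟩
  · push Not at h'
    exact ⟨0, fun w hw haw => absurd haw (h' w hw)⟩

/-- If `b` has no neighbour outside the triple, while `a` and `d` have at most one each, then `b` can
absorb whatever color is left, and one further color `α` may be forbidden at `a`. -/
theorem extend_one {S : Finset V} {a b d : V} (ha : a ∈ S) (hb : b ∈ S) (hd : d ∈ S)
    (hab : a ≠ b) (had : a ≠ d) (hbd : b ≠ d) {c : V → Fin 3}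
    (hc : Good G (S \ {a, b, d}) c)
    (h1 : ∀ u ∈ S \ {a, b, d}, ∀ w ∈ S \ {a, b, d}, G.Adj a u → G.Adj a w → u = w)
    (h2 : ∀ w ∈ S \ {a, b, d}, ¬ G.Adj b w)
    (h3 : ∀ u ∈ S \ {a, b, d}, ∀ w ∈ S \ {a, b, d}, G.Adj d u → G.Adj d w → u = w)
    (α : Fin 3) :
    ∃ c', Good G S c' ∧ (∀ v ∈ S \ {a, b, d}, c' v = c v) ∧ c' a ≠ α := by
  obtain ⟨β, hβ⟩ := exists_forbidden c h1
  obtain ⟨γ, hγ⟩ := exists_forbidden c h3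
  have : ∀ α β γ : Fin 3, ∃ x y z : Fin 3, x ≠ y ∧ x ≠ z ∧ y ≠ z ∧ x ≠ α ∧ x ≠ β ∧ z ≠ γ := by
    decide
  obtain ⟨x, y, z, hxy, hxz, hyz, hxα, hxβ, hzγ⟩ := this α β γ
  obtain ⟨c', h, h', h''⟩ := good_extend ha hb hd hab had hbd hc hxy hxz hyz
    (fun w hw haw => by rw [hβ w hw haw]; exact hxβ.symm)
    (fun w hw haw => absurd haw (h2 w hw))
    (fun w hw haw => by rw [hγ w hw haw]; exact hzγ.symm)
  exact ⟨c', h, h', h'' ▸ hxα⟩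

/-- If each vertex of the triple sees at most one color outside it, the only obstruction to distinct
colors is that all three see the same color. It is absent when the neighbours `r₁` of `a` and `r₂` of
`b` are colored differently. -/
theorem extend_three {S : Finset V} {a b d r₁ r₂ : V} (ha : a ∈ S) (hb : b ∈ S) (hd : d ∈ S)
    (hab : a ≠ b) (had : a ≠ d) (hbd : b ≠ d) {c : V → Fin 3}
    (hc : Good G (S \ {a, b, d}) c)
    (h1 : ∀ w ∈ S \ {a, b, d}, G.Adj a w → w = r₁)
    (h2 : ∀ w ∈ S \ {a, b, d}, G.Adj b w → w = r₂)
    (h3 : ∀ u ∈ S \ {a, b, d}, ∀ w ∈ S \ {a, b, d}, G.Adj d u → G.Adj d w → u = w)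
    (hr : c r₁ ≠ c r₂) :
    ∃ c', Good G S c' ∧ (∀ v ∈ S \ {a, b, d}, c' v = c v) := by
  obtain ⟨γ, hγ⟩ := exists_forbidden c h3
  have : ∀ α β γ : Fin 3, α ≠ β → ∃ x y z : Fin 3, x ≠ y ∧ x ≠ z ∧ y ≠ z ∧ x ≠ α ∧ y ≠ β ∧ z ≠ γ := by
    decide
  obtain ⟨x, y, z, hxy, hxz, hyz, hxα, hxβ, hzγ⟩ := this _ _ γ hr
  obtain ⟨c', h, h', h''⟩ := good_extend ha hb hd hab had hbd hc hxy hxz hyz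
    (fun w hw haw => by rw [h1 w hw haw]; exact hxα.symm)
    (fun w hw haw => by rw [h2 w hw haw]; exact hxβ.symm)
    (fun w hw haw => by rw [hγ w hw haw]; exact hzγ.symm)
  exact ⟨c', h, h'⟩

/-! ### Counting around vertices of large degree -/

/-- `z` is a leaf of the forest on `S`, adjacent to `r`. -/
def LeafAt (G : SimpleGraph V) [DecidableRel G.Adj] (S : Finset V) (r z : V) : Prop :=
  z ∈ S ∧ G.Adj r z ∧ (nb G S z).card ≤ 1

/-- `r - u - v` is a path hanging at `r`: `u` has degree two and `v` is a leaf. -/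
def Pend (G : SimpleGraph V) [DecidableRel G.Adj] (S : Finset V) (r u v : V) : Prop :=
  u ∈ S ∧ v ∈ S ∧ G.Adj r u ∧ G.Adj u v ∧ v ≠ r ∧ (nb G S u).card = 2 ∧ (nb G S v).card ≤ 1

theorem LeafAt.eq {S : Finset V} {r z w : V} (h : LeafAt G S r z) (hr : r ∈ S) (hw : w ∈ S)
    (hzw : G.Adj z w) : w = r :=
  leaf_unique h.2.2 hr h.2.1.symm hw hzw

theorem Pend.leafAt {S : Finset V} {r u v : V} (h : Pend G S r u v) : LeafAt G S u v :=
  ⟨h.2.1, h.2.2.2.1, h.2.2.2.2.2.2⟩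

theorem Pend.nb_mid {S : Finset V} {r u v w : V} (h : Pend G S r u v) (hr : r ∈ S) (hw : w ∈ S)
    (huw : G.Adj u w) : w = r ∨ w = v := by
  obtain ⟨hu, hv, hru, huv, hvr, h2, -⟩ := h
  have : ({r, v} : Finset V) = nb G S u := by
    refine Finset.eq_of_subset_of_card_le ?_ (by rw [h2, Finset.card_pair hvr.symm])
    intro x hx
    simp only [Finset.mem_insert, Finset.mem_singleton] at hx
    rcases hx with rfl | rfl
    · exact mem_nb.2 ⟨hr, hru.symm⟩
    · exact mem_nb.2 ⟨hv, huv⟩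
  have hx : w ∈ ({r, v} : Finset V) := this ▸ mem_nb.2 ⟨hw, huw⟩
  simpa using hx

theorem Big.four_le {S : Finset V} {r : V} (h : Big G S r) : 4 ≤ (nb G S r).card := by
  obtain ⟨-, h9, h⟩ := h
  rw [h, bd]; omega

theorem bd_sub {n : ℕ} (h : 3 ≤ n) : bd (n - 3) + 1 = bd n := by
  unfold bd; omega

theorem sum_excess_le (hF : Forest G) {S T : Finset V} (hT : T ⊆ S) (h2 : 2 ≤ S.card) :
    ∑ v ∈ T, ((nb G S v).card - 1) + 2 ≤ S.card :=
  le_trans (Nat.add_le_add_right (Finset.sum_le_sum_of_subset hT) 2) (hF.excess _ S rfl h2)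

/-- Three vertices attaining the bound would have total excess at least `|S|`. -/
theorem not_three_big (hF : Forest G) {S : Finset V} {r s t : V} (hr : Big G S r) (hs : Big G S s)
    (ht : Big G S t) (hrs : r ≠ s) (hrt : r ≠ t) (hst : s ≠ t) : False := by
  have hsub : ({r, s, t} : Finset V) ⊆ S := by
    intro v; simp only [Finset.mem_insert, Finset.mem_singleton]
    rintro (rfl | rfl | rfl)
    exacts [hr.1, hs.1, ht.1]
  have h9 := hr.2.1
  have := sum_excess_le hF hsub (by omega)
  rw [Finset.sum_insert (by simp [hrs, hrt]), Finset.sum_insert (by simp [hst]),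
    Finset.sum_singleton, hr.2.2, hs.2.2, ht.2.2] at this
  unfold bd at this
  omega

/-- Two vertices of a forest share at most one neighbour. -/
theorem card_union_nb (hF : Forest G) {S : Finset V} {r s : V} (hrs : r ≠ s) :
    (nb G S r).card + (nb G S s).card ≤ (nb G S r ∪ nb G S s).card + 1 := by
  rw [← Finset.card_union_add_card_inter]
  refine Nat.add_le_add_left (Finset.card_le_one.2 fun x hx y hy => ?_) _
  simp only [Finset.mem_inter, mem_nb] at hx hy
  exact hF.common_nb hrs hx.1.2 hx.2.2 hy.1.2 hy.2.2

/-- If two vertices attain the bound, one of them has a leaf: otherwise all their neighbours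
contribute to the excess. -/
theorem leaf_of_two_big (hF : Forest G) {S : Finset V} {r s : V} (hr : Big G S r) (hs : Big G S s)
    (hrs : r ≠ s) : (∃ z, LeafAt G S r z) ∨ (∃ z, LeafAt G S s z) := by
  by_contra! hcon
  obtain ⟨h1, h2⟩ := hcon
  set T := (nb G S r ∪ nb G S s) \ {r, s} with hT
  have hsub : {r, s} ∪ T ⊆ S := by
    intro v
    simp only [hT, Finset.mem_union, Finset.mem_insert, Finset.mem_singleton, Finset.mem_sdiff,
      mem_nb]
    rintro ((rfl | rfl) | ⟨h | h, -⟩)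
    exacts [hr.1, hs.1, h.1, h.1]
  have h9 := hr.2.1
  have hsum := sum_excess_le hF hsub (by omega)
  have hd : Disjoint {r, s} T := Finset.disjoint_sdiff
  rw [Finset.sum_union hd, Finset.sum_pair hrs, hr.2.2, hs.2.2] at hsum
  have hTsum : T.card ≤ ∑ v ∈ T, ((nb G S v).card - 1) := by
    rw [Finset.card_eq_sum_ones]
    refine Finset.sum_le_sum fun v hv => ?_
    simp only [hT, Finset.mem_union, Finset.mem_sdiff, mem_nb] at hv
    rcases hv.1 with h | h
    · have := h1 v
      simp only [LeafAt, h.1, h.2, true_and] at this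
      omega
    · have := h2 v
      simp only [LeafAt, h.1, h.2, true_and] at this
      omega
  have hTc : (nb G S r ∪ nb G S s).card ≤ T.card + 2 := by
    have := Finset.le_card_sdiff {r, s} (nb G S r ∪ nb G S s)
    rw [← hT] at this
    have h2 : ({r, s} : Finset V).card ≤ 2 := Finset.card_le_two
    omega
  have hU := card_union_nb (S := S) hF hrs
  rw [hr.2.2, hs.2.2] at hU
  unfold bd at hU hsum
  omega

/-- A vertex attaining the bound has mostly small branches: a branch of three or more
vertices uses up two units of excess, a pendant path one, a leaf none. -/
theorem big_count (hF : Forest G) {S : Finset V} {r : V} (hr : Big G S r) :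
    ∃ L P : Finset V, (∀ z ∈ L, LeafAt G S r z) ∧ (∀ u ∈ P, ∃ v, Pend G S r u v) ∧
      4 ≤ 2 * L.card + P.card := by
  classical
  have h9 := hr.2.1
  set N := nb G S r with hN
  -- the excess found in the branch at the neighbour `y`, up to distance two from `r`
  let g : V → ℕ := fun y => ((nb G S y).card - 1) +
    ∑ w ∈ (nb G S y).erase r, ((nb G S w).card - 1)
  have hsum : ∑ y ∈ N, g y + (bd S.card - 1) + 2 ≤ S.card := by
    set W := N.biUnion (fun y => (nb G S y).erase r) with hW
    have hdisj : Disjoint N W := by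
      rw [Finset.disjoint_left]
      intro x hx hx'
      simp only [hW, hN, Finset.mem_biUnion, Finset.mem_erase, mem_nb] at hx hx'
      obtain ⟨y, hy, -, -, hyx⟩ := hx'
      exact hF.no_triangle hy.2 hyx hx.2
    have hrN : r ∉ N ∪ W := by
      simp [hN, hW, mem_nb]
    have hsub : insert r (N ∪ W) ⊆ S := by
      intro x
      simp only [hN, hW, Finset.mem_insert, Finset.mem_union, Finset.mem_biUnion, Finset.mem_erase,
        mem_nb]
      rintro (rfl | h | ⟨y, -, -, h, -⟩)
      exacts [hr.1, h.1, h]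
    have := sum_excess_le hF hsub (by omega)
    rw [Finset.sum_insert hrN, Finset.sum_union hdisj, hr.2.2, hW, Finset.sum_biUnion] at this
    · simp only [g, Finset.sum_add_distrib]
      omega
    · intro y hy y' hy' hne
      simp only [Function.onFun, Finset.disjoint_left, Finset.mem_erase, mem_nb]
      rintro x ⟨hxr, -, h1⟩ ⟨-, -, h2⟩
      simp only [hN, Finset.mem_coe, mem_nb] at hy hy'
      exact hne (hF.common_nb hxr h1.symm hy.2 h2.symm hy'.2)
  refine ⟨N.filter (fun y => (nb G S y).card ≤ 1), N.filter (fun u => ∃ v, Pend G S r u v),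
    ?_, ?_, ?_⟩
  · intro z hz
    simp only [hN, Finset.mem_filter, mem_nb] at hz
    exact ⟨hz.1.1, hz.1.2, hz.2⟩
  · intro u hu
    exact (Finset.mem_filter.1 hu).2
  have hpt : ∀ y ∈ N, 2 ≤ g y + (2 * (if (nb G S y).card ≤ 1 then 1 else 0) +
      if (∃ v, Pend G S r y v) then 1 else 0) := by
    intro y hy
    simp only [hN, mem_nb] at hy
    by_cases h1 : (nb G S y).card ≤ 1
    · simp only [h1, if_true]; omega
    by_cases h3 : 3 ≤ (nb G S y).card
    · simp only [g]; omega
    have h2 : (nb G S y).card = 2 := by omega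
    have hry : r ∈ nb G S y := mem_nb.2 ⟨hr.1, hy.2.symm⟩
    obtain ⟨v, hv⟩ : ((nb G S y).erase r).Nonempty := by
      rw [← Finset.card_pos, Finset.card_erase_of_mem hry]; omega
    have hvm := hv
    simp only [Finset.mem_erase, mem_nb] at hvm
    by_cases hl : (nb G S v).card ≤ 1
    · have : ∃ v, Pend G S r y v := ⟨v, hy.1, hvm.2.1, hy.2, hvm.2.2, hvm.1, h2, hl⟩
      simp only [this, if_true, g]; omega
    · have : (nb G S v).card - 1 ≤ ∑ w ∈ (nb G S y).erase r, ((nb G S w).card - 1) :=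
        Finset.single_le_sum (f := fun w => (nb G S w).card - 1) (fun _ _ => Nat.zero_le _) hv
      simp only [g]
      omega
  clear_value g
  have h2N := Finset.sum_le_sum hpt
  rw [Finset.sum_add_distrib, Finset.sum_add_distrib, ← Finset.mul_sum, ← Finset.card_filter,
    ← Finset.card_filter, Finset.sum_const, smul_eq_mul, hr.2.2] at h2N
  unfold bd at h2N hsum
  omega

theorem two_leaves_of_no_pend (hF : Forest G) {S : Finset V} {r : V} (hr : Big G S r)
    (h : ∀ u v, ¬ Pend G S r u v) : ∃ z z', z ≠ z' ∧ LeafAt G S r z ∧ LeafAt G S r z' := by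
  obtain ⟨L, P, hL, hP, h4⟩ := big_count hF hr
  have : P = ∅ := Finset.eq_empty_of_forall_notMem fun u hu => by
    obtain ⟨v, hv⟩ := hP u hu
    exact h u v hv
  rw [this, Finset.card_empty] at h4
  obtain ⟨z, hz, z', hz', hne⟩ := Finset.one_lt_card.1 (show 1 < L.card by omega)
  exact ⟨z, z', hne, hL z hz, hL z' hz'⟩

theorem two_pends_of_no_leaf (hF : Forest G) {S : Finset V} {r : V} (hr : Big G S r)
    (h : ∀ z, ¬ LeafAt G S r z) (p q : V) : ∃ u v u' v', u ≠ u' ∧ Pend G S r u v ∧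
      Pend G S r u' v' ∧ u ≠ p ∧ u ≠ q ∧ u' ≠ p ∧ u' ≠ q := by
  obtain ⟨L, P, hL, hP, h4⟩ := big_count hF hr
  have : L = ∅ := Finset.eq_empty_of_forall_notMem fun u hu => h u (hL u hu)
  rw [this, Finset.card_empty] at h4
  have h2 : ({p, q} : Finset V).card ≤ 2 := Finset.card_le_two
  have := Finset.le_card_sdiff {p, q} P
  obtain ⟨u, hu, u', hu', hne⟩ := Finset.one_lt_card.1 (show 1 < (P \ {p, q}).card by omega)
  simp only [Finset.mem_sdiff, Finset.mem_insert, Finset.mem_singleton, not_or] at hu hu'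
  obtain ⟨v, hv⟩ := hP u hu.1
  obtain ⟨v', hv'⟩ := hP u' hu'.1
  exact ⟨u, v, u', v', hne, hv, hv', hu.2.1, hu.2.2, hu'.2.1, hu'.2.2⟩

theorem Good.class_ge {S : Finset V} {c : V → Fin 3} (hc : Good G S c) (i : Fin 3) :
    S.card / 3 ≤ (S.filter (fun v => c v = i)).card := by
  have := Finset.card_eq_sum_card_fiberwise (f := c) (s := S) (t := Finset.univ) (by simp)
  rw [Fin.sum_univ_three] at this
  have h0 := hc.2 0 i
  have h1 := hc.2 1 i
  have h2 := hc.2 2 i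
  obtain rfl | rfl | rfl := (by decide : ∀ i : Fin 3, i = 0 ∨ i = 1 ∨ i = 2) i <;> omega

/-- Two equally colored vertices have few neighbours altogether, since those avoid a color class
of about a third of all vertices. The set `T` collects further vertices outside that class. -/
theorem deg_le_of_same_color (hF : Forest G) {S T : Finset V} {c : V → Fin 3} (hc : Good G S c)
    {r s : V} (hr : r ∈ S) (hs : s ∈ S) (hrs : r ≠ s) (hcol : c r = c s) (hT : T ⊆ S)
    (hTc : ∀ t ∈ T, c t ≠ c r ∧ ¬ G.Adj r t ∧ ¬ G.Adj s t) :
    (nb G S r).card + (nb G S s).card + T.card + S.card / 3 ≤ S.card + 1 := by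
  have hU := card_union_nb (S := S) hF hrs
  have hd : Disjoint (nb G S r ∪ nb G S s) T := by
    rw [Finset.disjoint_right]
    intro t ht
    simp [mem_nb, (hTc t ht).2]
  have hd2 : Disjoint ((nb G S r ∪ nb G S s) ∪ T) (S.filter (fun v => c v = c r)) := by
    rw [Finset.disjoint_left]
    intro x hx hx'
    simp only [Finset.mem_union, mem_nb, Finset.mem_filter] at hx hx'
    rcases hx with (h | h) | h
    · exact hc.1 r hr x h.1 h.2 hx'.2.symm
    · exact hc.1 s hs x h.1 h.2 (hcol ▸ hx'.2.symm)
    · exact (hTc x h).1 hx'.2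
  have hsub : ((nb G S r ∪ nb G S s) ∪ T) ∪ S.filter (fun v => c v = c r) ⊆ S := by
    intro x
    simp only [Finset.mem_union, mem_nb, Finset.mem_filter]
    rintro (((h | h) | h) | h)
    exacts [h.1, h.1, hT h, h.1]
  have := Finset.card_le_card hsub
  rw [Finset.card_union_of_disjoint hd2, Finset.card_union_of_disjoint hd] at this
  have := hc.class_ge (c r)
  omega

/-! ### Removing three vertices -/

theorem card_nb_sdiff {S : Finset V} {a b d : V} (ha : a ∈ S) (hb : b ∈ S) (hd : d ∈ S)
    (hab : a ≠ b) (had : a ≠ d) (hbd : b ≠ d) (p : V) :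
    (nb G S p).card = (nb G (S \ {a, b, d}) p).card + (if G.Adj p a then 1 else 0) +
      (if G.Adj p b then 1 else 0) + (if G.Adj p d then 1 else 0) := by
  have : S \ {a, b, d} = ((S.erase a).erase b).erase d := by
    ext x; simp only [Finset.mem_sdiff, Finset.mem_insert, Finset.mem_singleton, Finset.mem_erase]
    tauto
  rw [this, card_nb_erase ha, card_nb_erase (S := S.erase a) (v := b) (by simp [hb, hab.symm]),
    card_nb_erase (S := (S.erase a).erase b) (v := d) (by simp [hd, had.symm, hbd.symm])]
  ring

theorem card_sdiff3 {S : Finset V} {a b d : V} (ha : a ∈ S) (hb : b ∈ S) (hd : d ∈ S)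
    (hab : a ≠ b) (had : a ≠ d) (hbd : b ≠ d) : (S \ {a, b, d}).card + 3 = S.card := by
  have hsub : ({a, b, d} : Finset V) ⊆ S := by
    intro v; simp only [Finset.mem_insert, Finset.mem_singleton]; rintro (rfl | rfl | rfl) <;> assumption
  rw [← Finset.card_sdiff_add_card_eq_card hsub, Finset.card_eq_three.2 ⟨a, b, d, hab, had, hbd, rfl⟩]

/-- The induction hypothesis applies after removing a triple which is adjacent to, or contains, every
big vertex: the bound drops by one. When `|S| ≤ 8` the bound on the remaining at most five vertices
is at least the trivial one. -/
theorem Q_remove {S : Finset V} (IH : IndHyp G S) (hB : Bdd G S) {a b d : V} (ha : a ∈ S)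
    (hb : b ∈ S) (hd : d ∈ S) (hab : a ≠ b) (had : a ≠ d) (hbd : b ≠ d)
    (hbig : ∀ v, Big G S v → v ≠ a → v ≠ b → v ≠ d → G.Adj v a ∨ G.Adj v b ∨ G.Adj v d) :
    Q G (S \ {a, b, d}) := by
  have hcard := card_sdiff3 ha hb hd hab had hbd
  refine IH _ (by omega) fun v hv => ?_
  have hv' := hv
  simp only [Finset.mem_sdiff, Finset.mem_insert, Finset.mem_singleton, not_or] at hv'
  have hloss := card_nb_sdiff (G := G) ha hb hd hab had hbd v
  have hle := hB v hv'.1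
  have hbd' := bd_sub (n := S.card) (by omega)
  rw [show (S \ {a, b, d}).card = S.card - 3 by omega]
  by_cases h9 : 9 ≤ S.card
  · by_cases hD : (nb G S v).card = bd S.card
    · have := hbig v ⟨hv'.1, h9, hD⟩ hv'.2.1 hv'.2.2.1 hv'.2.2.2
      rcases this with h | h | h <;> simp only [h, if_true] at hloss <;> omega
    · omega
  · have : nb G (S \ {a, b, d}) v ⊆ (S \ {a, b, d}).erase v := fun x hx => by
      rw [mem_nb] at hx
      exact Finset.mem_erase.2 ⟨hx.2.ne', hx.1⟩
    have := Finset.card_le_card this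
    rw [Finset.card_erase_of_mem hv] at this
    unfold bd; omega

/-- A pre-leaf vertex which keeps degree at least two stays pre-leaf, because leaves never turn into
inner vertices under deletion. -/
theorem PL.sdiff {S R : Finset V} {p : V} (hp : PL G S p) (h2 : 2 ≤ (nb G (S \ R) p).card) :
    PL G (S \ R) p := by
  refine ⟨h2, le_trans (Finset.card_le_card ?_) hp.2⟩
  intro x
  simp only [Finset.mem_filter]
  exact fun h => ⟨nb_mono Finset.sdiff_subset p h.1,
    h.2.trans (Finset.card_le_card (nb_mono Finset.sdiff_subset x))⟩

theorem PL.leaves {S : Finset V} {p : V} (hp : PL G S p) :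
    ∃ L : Finset V, (∀ z ∈ L, LeafAt G S p z) ∧ (nb G S p).card ≤ L.card + 1 := by
  refine ⟨(nb G S p).filter (fun w => ¬ 2 ≤ (nb G S w).card), ?_, ?_⟩
  · intro z hz
    simp only [Finset.mem_filter, mem_nb] at hz
    exact ⟨hz.1.1, hz.1.2, by omega⟩
  · have := Finset.card_filter_add_card_filter_not (s := nb G S p) (fun w => 2 ≤ (nb G S w).card)
    have := hp.2
    omega

theorem PL.leaf {S : Finset V} {p : V} (hp : PL G S p) : ∃ z, LeafAt G S p z := by
  obtain ⟨L, hL, h⟩ := hp.leaves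
  have := hp.1
  obtain ⟨z, hz⟩ := Finset.card_pos.1 (show 0 < L.card by omega)
  exact ⟨z, hL z hz⟩

theorem PL.two_leaves {S : Finset V} {p : V} (hp : PL G S p) (h3 : 3 ≤ (nb G S p).card) :
    ∃ z z', z ≠ z' ∧ LeafAt G S p z ∧ LeafAt G S p z' := by
  obtain ⟨L, hL, h⟩ := hp.leaves
  obtain ⟨z, hz, z', hz', hne⟩ := Finset.one_lt_card.1 (show 1 < L.card by omega)
  exact ⟨z, z', hne, hL z hz, hL z' hz'⟩

/-! ### Separating two pre-leaf vertices -/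

theorem PL.ne_leaf {S : Finset V} {p z : V} (hp : PL G S p) (hz : (nb G S z).card ≤ 1) :
    p ≠ z := by
  rintro rfl
  have := hp.1
  omega

theorem LeafAt.ne {S : Finset V} {r s y z : V} (hy : LeafAt G S r y) (hz : LeafAt G S s z)
    (hr : r ∈ S) (hs : s ∈ S) (h : r ≠ s) : y ≠ z := by
  rintro rfl
  exact h (hz.eq hs hr hy.2.1.symm)

/-- At most one element of `T` lies outside a subset `R` which is smaller by at most one. -/
theorem exists_other {T R : Finset V} (x : V) (hRT : R ⊆ T) (h : T.card ≤ R.card + 1) :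
    ∃ x, ∀ w ∈ T, w = x ∨ w ∈ R := by
  have hc : (T \ R).card ≤ 1 := by
    rw [Finset.card_sdiff_of_subset hRT]; omega
  by_cases hne : (T \ R).Nonempty
  · obtain ⟨y, hy⟩ := hne
    refine ⟨y, fun w hw => ?_⟩
    by_cases hwR : w ∈ R
    · exact Or.inr hwR
    · exact Or.inl (Finset.card_le_one.1 hc w (Finset.mem_sdiff.2 ⟨hw, hwR⟩) y hy)
  · refine ⟨x, fun w hw => Or.inr ?_⟩
    by_contra hwR
    exact hne ⟨w, Finset.mem_sdiff.2 ⟨hw, hwR⟩⟩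

theorem mem_sdiff3 {S : Finset V} {a b d v : V} :
    v ∈ S \ {a, b, d} ↔ v ∈ S ∧ v ≠ a ∧ v ≠ b ∧ v ≠ d := by
  simp [Finset.mem_sdiff]

/-- The hypotheses of `extend_one` in terms of neighbours in `S`. -/
theorem extend_one' {S : Finset V} {a b d : V} (ha : a ∈ S) (hb : b ∈ S) (hd : d ∈ S)
    (hab : a ≠ b) (had : a ≠ d) (hbd : b ≠ d)
    (h1 : ∃ x, ∀ w ∈ S, G.Adj a w → w = x ∨ w = b ∨ w = d)
    (h2 : ∀ w ∈ S, G.Adj b w → w = a ∨ w = d)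
    (h3 : ∃ y, ∀ w ∈ S, G.Adj d w → w = y ∨ w = a ∨ w = b)
    {c : V → Fin 3} (hc : Good G (S \ {a, b, d}) c) (α : Fin 3) :
    ∃ c', Good G S c' ∧ (∀ v ∈ S \ {a, b, d}, c' v = c v) ∧ c' a ≠ α := by
  obtain ⟨x, h1⟩ := h1
  obtain ⟨y, h3⟩ := h3
  refine extend_one ha hb hd hab had hbd hc ?_ ?_ ?_ α
  · intro u hu w hw hau haw
    rw [mem_sdiff3] at hu hw
    have := h1 u hu.1 hau
    have := h1 w hw.1 haw
    grind
  · intro w hw hbw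
    rw [mem_sdiff3] at hw
    have := h2 w hw.1 hbw
    grind
  · intro u hu w hw hau haw
    rw [mem_sdiff3] at hu hw
    have := h3 u hu.1 hau
    have := h3 w hw.1 haw
    grind

/-- Separation of `a` and `q` when `a` itself is removed: color the rest, then forbid the color of
`q` at `a`. -/
theorem step_first {S : Finset V} {a b d q : V} (hQ : Q G (S \ {a, b, d}))
    (ha : a ∈ S) (hb : b ∈ S) (hd : d ∈ S)
    (hab : a ≠ b) (had : a ≠ d) (hbd : b ≠ d)
    (h1 : ∃ x, ∀ w ∈ S, G.Adj a w → w = x ∨ w = b ∨ w = d)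
    (h2 : ∀ w ∈ S, G.Adj b w → w = a ∨ w = d)
    (h3 : ∃ y, ∀ w ∈ S, G.Adj d w → w = y ∨ w = a ∨ w = b)
    (hq : q ∈ S \ {a, b, d}) : ∃ c, Good G S c ∧ c a ≠ c q := by
  obtain ⟨c, hc⟩ := hQ.1
  obtain ⟨c', h, h', h''⟩ := extend_one' ha hb hd hab had hbd h1 h2 h3 hc (c q)
  exact ⟨c', h, by rw [h' q hq]; exact h''⟩

/-- Separation of `p` and `q` when both survive the removal and stay pre-leaf. -/
theorem step_second {S : Finset V} {a b d p q : V} (hQ : Q G (S \ {a, b, d}))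
    (ha : a ∈ S) (hb : b ∈ S) (hd : d ∈ S)
    (hab : a ≠ b) (had : a ≠ d) (hbd : b ≠ d)
    (h1 : ∃ x, ∀ w ∈ S, G.Adj a w → w = x ∨ w = b ∨ w = d)
    (h2 : ∀ w ∈ S, G.Adj b w → w = a ∨ w = d)
    (h3 : ∃ y, ∀ w ∈ S, G.Adj d w → w = y ∨ w = a ∨ w = b)
    (hp : p ∈ S \ {a, b, d}) (hq : q ∈ S \ {a, b, d}) (hpq : p ≠ q) (hPp : PL G S p)
    (hPq : PL G S q) (hp2 : 2 ≤ (nb G (S \ {a, b, d}) p).card)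
    (hq2 : 2 ≤ (nb G (S \ {a, b, d}) q).card) : ∃ c, Good G S c ∧ c p ≠ c q := by
  obtain ⟨c, hc, hcpq⟩ := hQ.2 p hp q hq hpq (hPp.sdiff hp2) (hPq.sdiff hq2)
  obtain ⟨c', h, h', -⟩ := extend_one' ha hb hd hab had hbd h1 h2 h3 hc 0
  exact ⟨c', h, by rw [h' p hp, h' q hq]; exact hcpq⟩

/-- Removal of three leaves, two of which hang at vertices known to receive different colors. -/
theorem step_leaves {S : Finset V} {a b d r₁ r₂ r₃ p q : V} (hQ : Q G (S \ {a, b, d}))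
    (hr₁ : r₁ ∈ S) (hr₂ : r₂ ∈ S) (hr₃ : r₃ ∈ S) (hr : r₁ ≠ r₂)
    (ha : LeafAt G S r₁ a) (hb : LeafAt G S r₂ b) (hd : LeafAt G S r₃ d)
    (had : a ≠ d) (hbd : b ≠ d) (hp : p ∈ S) (hq : q ∈ S) (hpq : p ≠ q)
    (hPp : PL G S p) (hPq : PL G S q)
    (hp2 : 2 ≤ (nb G (S \ {a, b, d}) p).card) (hq2 : 2 ≤ (nb G (S \ {a, b, d}) q).card)
    (hcol : ∀ c, Good G (S \ {a, b, d}) c → c p ≠ c q → c r₁ ≠ c r₂) :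
    ∃ c, Good G S c ∧ c p ≠ c q := by
  have hp' : p ∈ S \ {a, b, d} := mem_sdiff3.2
    ⟨hp, hPp.ne_leaf ha.2.2, hPp.ne_leaf hb.2.2, hPp.ne_leaf hd.2.2⟩
  have hq' : q ∈ S \ {a, b, d} := mem_sdiff3.2
    ⟨hq, hPq.ne_leaf ha.2.2, hPq.ne_leaf hb.2.2, hPq.ne_leaf hd.2.2⟩
  obtain ⟨c, hc, hcpq⟩ := hQ.2 p hp' q hq' hpq (hPp.sdiff hp2) (hPq.sdiff hq2)
  obtain ⟨c', h, h'⟩ := extend_three ha.1 hb.1 hd.1 (ha.ne hb hr₁ hr₂ hr) had hbd hc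
    (fun w hw haw => ha.eq hr₁ (mem_sdiff3.1 hw).1 haw)
    (fun w hw haw => hb.eq hr₂ (mem_sdiff3.1 hw).1 haw)
    (fun u hu w hw hau haw =>
      (hd.eq hr₃ (mem_sdiff3.1 hu).1 hau).trans (hd.eq hr₃ (mem_sdiff3.1 hw).1 haw).symm)
    (hcol c hc hcpq)
  exact ⟨c', h, by rw [h' p hp', h' q hq']; exact hcpq⟩

/-- Two big vertices, one with a pendant path and the other with a leaf. -/
theorem pair_big_pend (hF : Forest G) {S : Finset V} (IH : IndHyp G S) (hB : Bdd G S)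
    {r₁ r₂ u v z p q : V} (hr₁ : Big G S r₁) (hr₂ : Big G S r₂) (hr : r₁ ≠ r₂)
    (hu : Pend G S r₁ u v) (hz : LeafAt G S r₂ z) (hp : p ∈ S) (hq : q ∈ S) (hpq : p ≠ q)
    (hPp : PL G S p) (hPq : PL G S q) : ∃ c, Good G S c ∧ c p ≠ c q := by
  have h41 := hr₁.four_le
  have h42 := hr₂.four_le
  have hv := hu.leafAt
  have hu2 := hu.2.2.2.2.2.1
  have huv : u ≠ v := hv.2.1.ne
  have huz : u ≠ z := by rintro rfl; have := hz.2.2; omega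
  have hur₂ : u ≠ r₂ := by rintro rfl; omega
  have hvz : v ≠ z := hv.ne hz hu.1 hr₂.1 hur₂
  have hQ : Q G (S \ {u, v, z}) := by
    refine Q_remove IH hB hu.1 hv.1 hz.1 huv huz hvz fun x hx _ _ _ => ?_
    by_cases h1 : x = r₁
    · subst h1; exact Or.inl hu.2.2.1
    by_cases h2 : x = r₂
    · subst h2; exact Or.inr (Or.inr hz.2.1)
    exact (not_three_big hF hr₁ hr₂ hx hr (Ne.symm h1) (Ne.symm h2)).elim
  have h1 : ∃ x, ∀ w ∈ S, G.Adj u w → w = x ∨ w = v ∨ w = z :=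
    ⟨r₁, fun w hw h => (hu.nb_mid hr₁.1 hw h).imp_right Or.inl⟩
  have h2 : ∀ w ∈ S, G.Adj v w → w = u ∨ w = z := fun w hw h => Or.inl (hv.eq hu.1 hw h)
  have h3 : ∃ y, ∀ w ∈ S, G.Adj z w → w = y ∨ w = u ∨ w = v :=
    ⟨r₂, fun w hw h => Or.inl (hz.eq hr₂.1 hw h)⟩
  have hmem : ∀ x ∈ S, PL G S x → x ≠ u → x ∈ S \ {u, v, z} := fun x hx hP hxu =>
    mem_sdiff3.2 ⟨hx, hxu, hP.ne_leaf hv.2.2, hP.ne_leaf hz.2.2⟩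
  by_cases hpu : p = u
  · subst hpu
    exact step_first hQ hu.1 hv.1 hz.1 huv huz hvz h1 h2 h3 (hmem q hq hPq hpq.symm)
  by_cases hqu : q = u
  · subst hqu
    obtain ⟨c, hc, h⟩ := step_first hQ hu.1 hv.1 hz.1 huv huz hvz h1 h2 h3 (hmem p hp hPp hpq)
    exact ⟨c, hc, h.symm⟩
  have hkeep : ∀ x ∈ S, PL G S x → x ≠ u → 2 ≤ (nb G (S \ {u, v, z}) x).card := by
    intro x hx hP hxu
    have hl := card_nb_sdiff (G := G) hu.1 hv.1 hz.1 huv huz hvz x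
    have hxv : ¬ G.Adj x v := fun h => hxu (hv.eq hu.1 hx h.symm)
    have h2 := hP.1
    by_cases h1 : x = r₁
    · subst h1
      simp only [hxv, if_false] at hl
      split_ifs at hl <;> omega
    by_cases h3 : x = r₂
    · subst h3
      simp only [hxv, if_false] at hl
      split_ifs at hl <;> omega
    have hxz : ¬ G.Adj x z := fun h => h3 (hz.eq hr₂.1 hx h.symm)
    have hxu : ¬ G.Adj x u := fun h => (hu.nb_mid hr₁.1 hx h.symm).elim h1 (hP.ne_leaf hv.2.2)
    simp only [hxv, hxz, hxu, if_false] at hl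
    omega
  exact step_second hQ hu.1 hv.1 hz.1 huv huz hvz h1 h2 h3 (hmem p hp hPp hpu)
    (hmem q hq hPq hqu) hpq hPp hPq (hkeep p hp hPp hpu) (hkeep q hq hPq hqu)

/-- Two big vertices without pendant paths, one pre-leaf vertex not big. By a class-size count,
the big vertices receive different colors in every coloring of the rest. -/
theorem pair_big_other (hF : Forest G) {S : Finset V} (IH : IndHyp G S) (hB : Bdd G S)
    {r₁ r₂ p q : V} (hr₁ : Big G S r₁) (hr₂ : Big G S r₂) (hr : r₁ ≠ r₂)
    (hn₁ : ∀ u v, ¬ Pend G S r₁ u v) (hn₂ : ∀ u v, ¬ Pend G S r₂ u v)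
    (hp : p ∈ S) (hq : q ∈ S) (hpq : p ≠ q) (hPp : PL G S p) (hPq : PL G S q)
    (hp₁ : p ≠ r₁) (hp₂ : p ≠ r₂) : ∃ c, Good G S c ∧ c p ≠ c q := by
  have h41 := hr₁.four_le
  have h42 := hr₂.four_le
  obtain ⟨z₁, z₁', hz, hz₁, hz₁'⟩ := two_leaves_of_no_pend hF hr₁ hn₁
  obtain ⟨z₂, -, -, hz₂, -⟩ := two_leaves_of_no_pend hF hr₂ hn₂
  obtain ⟨p', hp'⟩ := hPp.leaf
  have h12 : z₁ ≠ z₂ := hz₁.ne hz₂ hr₁.1 hr₂.1 hr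
  have h12' : z₁' ≠ z₂ := hz₁'.ne hz₂ hr₁.1 hr₂.1 hr
  have h1p : z₁ ≠ p' := hz₁.ne hp' hr₁.1 hp hp₁.symm
  have h1p' : z₁' ≠ p' := hz₁'.ne hp' hr₁.1 hp hp₁.symm
  have h2p : z₂ ≠ p' := hz₂.ne hp' hr₂.1 hp hp₂.symm
  have hPp2 := hPp.1
  have hPq2 := hPq.1
  have hbig : ∀ x, Big G S x → G.Adj x z₁ ∨ G.Adj x z₂ := by
    intro x hx
    by_cases h1 : x = r₁
    · subst h1; exact Or.inl hz₁.2.1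
    by_cases h2 : x = r₂
    · subst h2; exact Or.inr hz₂.2.1
    exact (not_three_big hF hr₁ hr₂ hx hr (Ne.symm h1) (Ne.symm h2)).elim
  have nz₁ : ∀ x ∈ S, x ≠ r₁ → ¬ G.Adj x z₁ := fun x hx h h' => h (hz₁.eq hr₁.1 hx h'.symm)
  have nz₁' : ∀ x ∈ S, x ≠ r₁ → ¬ G.Adj x z₁' := fun x hx h h' => h (hz₁'.eq hr₁.1 hx h'.symm)
  have nz₂ : ∀ x ∈ S, x ≠ r₂ → ¬ G.Adj x z₂ := fun x hx h h' => h (hz₂.eq hr₂.1 hx h'.symm)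
  have np' : ∀ x ∈ S, x ≠ p → ¬ G.Adj x p' := fun x hx h h' => h (hp'.eq hp hx h'.symm)
  have hne : ∀ {x z : V}, 4 ≤ (nb G S x).card → (nb G S z).card ≤ 1 → x ≠ z := by
    rintro x _ h h' rfl; omega
  have hD₁ := hr₁.2.2
  have hD₂ := hr₂.2.2
  by_cases h3 : 3 ≤ (nb G S p).card
  · have hl := card_nb_sdiff (G := G) hz₁.1 hz₂.1 hp'.1 h12 h1p h2p
    have hc3 := card_sdiff3 hz₁.1 hz₂.1 hp'.1 h12 h1p h2p
    refine step_leaves (Q_remove IH hB hz₁.1 hz₂.1 hp'.1 h12 h1p h2p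
      fun x hx _ _ _ => (hbig x hx).imp_right Or.inl) hr₁.1 hr₂.1 hp hr hz₁ hz₂ hp' h1p h2p
      hp hq hpq hPp hPq ?_ ?_ ?_
    · have := hl p
      simp only [nz₁ p hp hp₁, nz₂ p hp hp₂, if_false] at this
      split_ifs at this <;> omega
    · have := hl q
      simp only [np' q hq hpq.symm, if_false] at this
      by_cases h1 : q = r₁
      · subst h1
        split_ifs at this <;> omega
      by_cases h2 : q = r₂
      · subst h2
        split_ifs at this <;> omega
      simp only [nz₁ q hq h1, nz₂ q hq h2, if_false] at this
      omega
    · intro c hc _ hcol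
      have := deg_le_of_same_color (T := ∅) hF hc
        (mem_sdiff3.2 ⟨hr₁.1, hne h41 hz₁.2.2, hne h41 hz₂.2.2, hne h41 hp'.2.2⟩)
        (mem_sdiff3.2 ⟨hr₂.1, hne h42 hz₁.2.2, hne h42 hz₂.2.2, hne h42 hp'.2.2⟩) hr hcol
        (Finset.empty_subset _) (by simp)
      have e1 := hl r₁
      have e2 := hl r₂
      simp only [nz₂ r₁ hr₁.1 hr, np' r₁ hr₁.1 hp₁.symm, hz₁.2.1, if_false, if_true] at e1
      simp only [nz₁ r₂ hr₂.1 hr.symm, np' r₂ hr₂.1 hp₂.symm, hz₂.2.1, if_false, if_true] at e2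
      unfold bd at hD₁ hD₂
      simp only [Finset.card_empty] at this
      omega
  · have hpa₁ : ¬ G.Adj r₁ p := fun h => hn₁ p p'
      ⟨hp, hp'.1, h, hp'.2.1, (hne h41 hp'.2.2).symm, by omega, hp'.2.2⟩
    have hpa₂ : ¬ G.Adj r₂ p := fun h => hn₂ p p'
      ⟨hp, hp'.1, h, hp'.2.1, (hne h42 hp'.2.2).symm, by omega, hp'.2.2⟩
    have hl := card_nb_sdiff (G := G) hz₁.1 hz₂.1 hz₁'.1 h12 hz h12'.symm
    have hc3 := card_sdiff3 hz₁.1 hz₂.1 hz₁'.1 h12 hz h12'.symm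
    refine step_leaves (Q_remove IH hB hz₁.1 hz₂.1 hz₁'.1 h12 hz h12'.symm
      fun x hx _ _ _ => (hbig x hx).imp_right Or.inl) hr₁.1 hr₂.1 hr₁.1 hr hz₁ hz₂ hz₁' hz h12'.symm
      hp hq hpq hPp hPq ?_ ?_ ?_
    · have := hl p
      simp only [nz₁ p hp hp₁, nz₂ p hp hp₂, nz₁' p hp hp₁, if_false] at this
      omega
    · have := hl q
      by_cases h1 : q = r₁
      · subst h1
        simp only [nz₂ q hq hr, if_false] at this
        split_ifs at this <;> omega
      by_cases h2 : q = r₂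
      · subst h2
        simp only [nz₁ q hq h1, nz₁' q hq h1, if_false] at this
        split_ifs at this <;> omega
      simp only [nz₁ q hq h1, nz₁' q hq h1, nz₂ q hq h2, if_false] at this
      omega
    · intro c hc _ hcol
      have hpS : p ∈ S \ {z₁, z₂, z₁'} := mem_sdiff3.2
        ⟨hp, hPp.ne_leaf hz₁.2.2, hPp.ne_leaf hz₂.2.2, hPp.ne_leaf hz₁'.2.2⟩
      have hpS' : p' ∈ S \ {z₁, z₂, z₁'} := mem_sdiff3.2 ⟨hp'.1, h1p.symm, h2p.symm, h1p'.symm⟩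
      -- `p` and its leaf are adjacent, so one of them avoids the color of `r₁`
      obtain ⟨t, htS, htc, ht₁, ht₂⟩ : ∃ t ∈ S \ {z₁, z₂, z₁'}, c t ≠ c r₁ ∧ ¬ G.Adj r₁ t ∧
          ¬ G.Adj r₂ t := by
        by_cases h : c p = c r₁
        · exact ⟨p', hpS', fun h' => hc.1 p hpS p' hpS' hp'.2.1 (h.trans h'.symm),
            np' r₁ hr₁.1 hp₁.symm, np' r₂ hr₂.1 hp₂.symm⟩
        · exact ⟨p, hpS, h, hpa₁, hpa₂⟩
      have := deg_le_of_same_color (T := {t}) hF hc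
        (mem_sdiff3.2 ⟨hr₁.1, hne h41 hz₁.2.2, hne h41 hz₂.2.2, hne h41 hz₁'.2.2⟩)
        (mem_sdiff3.2 ⟨hr₂.1, hne h42 hz₁.2.2, hne h42 hz₂.2.2, hne h42 hz₁'.2.2⟩) hr hcol
        (by simpa using htS) (by simpa using ⟨htc, ht₁, ht₂⟩)
      have e1 := hl r₁
      have e2 := hl r₂
      simp only [nz₂ r₁ hr₁.1 hr, hz₁.2.1, hz₁'.2.1, if_false, if_true] at e1
      simp only [nz₁ r₂ hr₂.1 hr.symm, nz₁' r₂ hr₂.1 hr.symm, hz₂.2.1, if_false, if_true] at e2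
      unfold bd at hD₁ hD₂
      simp only [Finset.card_singleton] at this
      omega

/-- Three leaves at the two pre-leaf vertices themselves. -/
theorem pair_self {S : Finset V} {p q : V} (IH : IndHyp G S) (hB : Bdd G S)
    (hbig : ∀ x, Big G S x → x = p ∨ x = q)
    (hp : p ∈ S) (hq : q ∈ S) (hpq : p ≠ q) (hPp : PL G S p) (hPq : PL G S q)
    (h4 : 4 ≤ (nb G S p).card) (h3 : 3 ≤ (nb G S q).card) : ∃ c, Good G S c ∧ c p ≠ c q := by
  obtain ⟨a, d, had, ha, hd⟩ := hPp.two_leaves (by omega)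
  obtain ⟨b, hb⟩ := hPq.leaf
  have hab := ha.ne hb hp hq hpq
  have hbd := hb.ne hd hq hp hpq.symm
  have hl := card_nb_sdiff (G := G) ha.1 hb.1 hd.1 hab had hbd
  refine step_leaves (Q_remove IH hB ha.1 hb.1 hd.1 hab had hbd fun x hx _ _ _ => ?_)
    hp hq hp hpq ha hb hd had hbd hp hq hpq hPp hPq ?_ ?_ fun c _ h => h
  · obtain rfl | rfl := hbig x hx
    · exact Or.inl ha.2.1
    · exact Or.inr (Or.inl hb.2.1)
  · have := hl p
    simp only [show ¬ G.Adj p b from fun h => hpq (hb.eq hq hp h.symm), if_false] at this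
    split_ifs at this <;> omega
  · have := hl q
    simp only [show ¬ G.Adj q a from fun h => hpq.symm (ha.eq hp hq h.symm),
      show ¬ G.Adj q d from fun h => hpq.symm (hd.eq hp hq h.symm), if_false] at this
    split_ifs at this <;> omega

/-- Two big vertices. If neither has a pendant path while the other has a leaf, then neither has a
pendant path at all, since a leafless big vertex has pendant paths and not both are leafless. -/
theorem pair_two_big (hF : Forest G) {S : Finset V} (IH : IndHyp G S) (hB : Bdd G S)
    {r₁ r₂ p q : V} (hr₁ : Big G S r₁) (hr₂ : Big G S r₂) (hr : r₁ ≠ r₂)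
    (hp : p ∈ S) (hq : q ∈ S) (hpq : p ≠ q) (hPp : PL G S p) (hPq : PL G S q) :
    ∃ c, Good G S c ∧ c p ≠ c q := by
  by_cases hA : (∃ u v, Pend G S r₁ u v) ∧ ∃ z, LeafAt G S r₂ z
  · obtain ⟨⟨u, v, hu⟩, z, hz⟩ := hA
    exact pair_big_pend hF IH hB hr₁ hr₂ hr hu hz hp hq hpq hPp hPq
  by_cases hA' : (∃ u v, Pend G S r₂ u v) ∧ ∃ z, LeafAt G S r₁ z
  · obtain ⟨⟨u, v, hu⟩, z, hz⟩ := hA'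
    exact pair_big_pend hF IH hB hr₂ hr₁ hr.symm hu hz hp hq hpq hPp hPq
  have key : ∀ r s, Big G S r → Big G S s → r ≠ s →
      ¬ ((∃ u v, Pend G S r u v) ∧ ∃ z, LeafAt G S s z) →
      ¬ ((∃ u v, Pend G S s u v) ∧ ∃ z, LeafAt G S r z) → ∀ u v, ¬ Pend G S r u v := by
    intro r s hr hs hrs h h' u v hu
    have h1 : ¬ ∃ z, LeafAt G S s z := fun hz => h ⟨⟨u, v, hu⟩, hz⟩
    have h2 : ∃ u v, Pend G S s u v := by
      obtain ⟨u, v, _, _, _, hv, _⟩ := two_pends_of_no_leaf hF hs (not_exists.1 h1) p q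
      exact ⟨u, v, hv⟩
    exact (leaf_of_two_big hF hr hs hrs).elim (fun hz => h' ⟨h2, hz⟩) h1
  have hn₁ := key r₁ r₂ hr₁ hr₂ hr hA hA'
  have hn₂ := key r₂ r₁ hr₂ hr₁ hr.symm hA' hA
  by_cases h1 : p ≠ r₁ ∧ p ≠ r₂
  · exact pair_big_other hF IH hB hr₁ hr₂ hr hn₁ hn₂ hp hq hpq hPp hPq h1.1 h1.2
  by_cases h2 : q ≠ r₁ ∧ q ≠ r₂
  · obtain ⟨c, hc, h⟩ :=
      pair_big_other hF IH hB hr₁ hr₂ hr hn₁ hn₂ hq hp hpq.symm hPq hPp h2.1 h2.2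
    exact ⟨c, hc, h.symm⟩
  have h4 : 4 ≤ (nb G S p).card := by
    have := hr₁.four_le
    have := hr₂.four_le
    grind
  have h4' : 4 ≤ (nb G S q).card := by
    have := hr₁.four_le
    have := hr₂.four_le
    grind
  refine pair_self IH hB (fun x hx => ?_) hp hq hpq hPp hPq h4 (by omega)
  by_contra hx'
  refine not_three_big hF hr₁ hr₂ hx hr ?_ ?_ <;> grind

/-- A unique big vertex without leaves: remove one of its pendant paths and the end of another. -/
theorem pair_leafless (hF : Forest G) {S : Finset V} (IH : IndHyp G S) (hB : Bdd G S)
    {r p q : V} (hone : ∀ x y, Big G S x → Big G S y → x = y) (hr : Big G S r)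
    (hleaf : ∀ z, ¬ LeafAt G S r z)
    (hp : p ∈ S) (hq : q ∈ S) (hpq : p ≠ q) (hPp : PL G S p) (hPq : PL G S q) :
    ∃ c, Good G S c ∧ c p ≠ c q := by
  obtain ⟨u, v, u', v', huu, hu, hu', hup, huq, hup', huq'⟩ :=
    two_pends_of_no_leaf hF hr hleaf p q
  have hv := hu.leafAt
  have hv' := hu'.leafAt
  have huv : u ≠ v := hv.2.1.ne
  have huv' : u ≠ v' := by
    rintro rfl
    have := hu.2.2.2.2.2.1
    have := hv'.2.2
    omega
  have hvv' : v ≠ v' := hv.ne hv' hu.1 hu'.1 huu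
  have hkeep : ∀ x ∈ S, PL G S x → u ≠ x → u' ≠ x → 2 ≤ (nb G (S \ {u, v, v'}) x).card := by
    intro x hx hP h h'
    have hl := card_nb_sdiff (G := G) hu.1 hv.1 hv'.1 huv huv' hvv' x
    have h2 := hP.1
    have hxr : x ≠ r := by
      rintro rfl
      obtain ⟨z, hz⟩ := hP.leaf
      exact hleaf z hz
    simp only [show ¬ G.Adj x u from
        fun e => (hu.nb_mid hr.1 hx e.symm).elim hxr (hP.ne_leaf hv.2.2),
      show ¬ G.Adj x v from fun e => h (hv.eq hu.1 hx e.symm).symm,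
      show ¬ G.Adj x v' from fun e => h' (hv'.eq hu'.1 hx e.symm).symm, if_false] at hl
    omega
  refine step_second (Q_remove IH hB hu.1 hv.1 hv'.1 huv huv' hvv' fun x hx _ _ _ => ?_)
    hu.1 hv.1 hv'.1 huv huv' hvv' ⟨r, fun w hw h => (hu.nb_mid hr.1 hw h).imp_right Or.inl⟩
    (fun w hw h => Or.inl (hv.eq hu.1 hw h)) ⟨u', fun w hw h => Or.inl (hv'.eq hu'.1 hw h)⟩
    (mem_sdiff3.2 ⟨hp, hup.symm, hPp.ne_leaf hv.2.2, hPp.ne_leaf hv'.2.2⟩)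
    (mem_sdiff3.2 ⟨hq, huq.symm, hPq.ne_leaf hv.2.2, hPq.ne_leaf hv'.2.2⟩) hpq hPp hPq
    (hkeep p hp hPp hup hup') (hkeep q hq hPq huq huq')
  rw [hone x r hx hr]
  exact Or.inl hu.2.2.1

/-- A pre-leaf vertex of degree two is removed together with its leaf and a further leaf. -/
theorem pair_deg_two {S : Finset V} (IH : IndHyp G S) (hB : Bdd G S)
    {p q : V} (hone : ∀ x y, Big G S x → Big G S y → x = y)
    (hleaf : ∀ r, Big G S r → ∃ z, LeafAt G S r z)
    (hp : p ∈ S) (hq : q ∈ S) (hpq : p ≠ q) (hPp : PL G S p) (hPq : PL G S q)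
    (h2 : (nb G S p).card = 2) : ∃ c, Good G S c ∧ c p ≠ c q := by
  obtain ⟨p', hp'⟩ := hPp.leaf
  obtain ⟨s, z, hs, hsp, hz, hbig⟩ : ∃ s z, s ∈ S ∧ s ≠ p ∧ LeafAt G S s z ∧
      ∀ x, Big G S x → G.Adj x p ∨ x = s := by
    by_cases h : ∃ r, Big G S r ∧ ¬ G.Adj r p
    · obtain ⟨r, hr, -⟩ := h
      obtain ⟨z, hz⟩ := hleaf r hr
      refine ⟨r, z, hr.1, ?_, hz, fun x hx => Or.inr (hone x r hx hr)⟩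
      rintro rfl
      have := hr.four_le
      omega
    · push Not at h
      obtain ⟨z, hz⟩ := hPq.leaf
      exact ⟨q, z, hq, hpq.symm, hz, fun x hx => Or.inl (h x hx)⟩
  have hpz := hPp.ne_leaf hz.2.2
  have hp'z := hp'.ne hz hp hs hsp.symm
  obtain ⟨x, hx⟩ := exists_other (R := {p'}) p
    (by simpa using mem_nb.2 ⟨hp'.1, hp'.2.1⟩ : {p'} ⊆ nb G S p) (by simp [h2])
  refine step_first (Q_remove IH hB hp hp'.1 hz.1 hp'.2.1.ne hpz hp'z fun x hx _ _ _ => ?_)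
    hp hp'.1 hz.1 hp'.2.1.ne hpz hp'z ⟨x, fun w hw h => ?_⟩
    (fun w hw h => Or.inl (hp'.eq hp hw h)) ⟨s, fun w hw h => Or.inl (hz.eq hs hw h)⟩
    (mem_sdiff3.2 ⟨hq, hpq.symm, hPq.ne_leaf hp'.2.2, hPq.ne_leaf hz.2.2⟩)
  · obtain h | rfl := hbig x hx
    · exact Or.inl h
    · exact Or.inr (Or.inr hz.2.1)
  · have := hx w (mem_nb.2 ⟨hw, h⟩)
    simp only [Finset.mem_singleton] at this
    tauto

/-- At most one big vertex. -/
theorem pair_one_big (hF : Forest G) {S : Finset V} (IH : IndHyp G S) (hB : Bdd G S)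
    {p q : V} (hone : ∀ x y, Big G S x → Big G S y → x = y)
    (hp : p ∈ S) (hq : q ∈ S) (hpq : p ≠ q) (hPp : PL G S p) (hPq : PL G S q) :
    ∃ c, Good G S c ∧ c p ≠ c q := by
  by_cases hleaf : ∃ r, Big G S r ∧ ∀ z, ¬ LeafAt G S r z
  · obtain ⟨r, hr, h⟩ := hleaf
    exact pair_leafless hF IH hB hone hr h hp hq hpq hPp hPq
  push Not at hleaf
  have hp2 := hPp.1
  have hq2 := hPq.1
  by_cases h2 : (nb G S p).card = 2
  · exact pair_deg_two IH hB hone hleaf hp hq hpq hPp hPq h2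
  by_cases h2' : (nb G S q).card = 2
  · obtain ⟨c, hc, h⟩ := pair_deg_two IH hB hone hleaf hq hp hpq.symm hPq hPp h2'
    exact ⟨c, hc, h.symm⟩
  by_cases hr : ∃ r, Big G S r ∧ r ≠ p ∧ r ≠ q
  · obtain ⟨r, hr, hrp, hrq⟩ := hr
    obtain ⟨z, hz⟩ := hleaf r hr
    obtain ⟨a, ha⟩ := hPp.leaf
    obtain ⟨b, hb⟩ := hPq.leaf
    have hab := ha.ne hb hp hq hpq
    have had := ha.ne hz hp hr.1 hrp.symm
    have hbd := hb.ne hz hq hr.1 hrq.symm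
    have hl := card_nb_sdiff (G := G) ha.1 hb.1 hz.1 hab had hbd
    refine step_leaves (Q_remove IH hB ha.1 hb.1 hz.1 hab had hbd fun x hx _ _ _ => ?_)
      hp hq hr.1 hpq ha hb hz had hbd hp hq hpq hPp hPq ?_ ?_ fun c _ h => h
    · rw [hone x r hx hr]
      exact Or.inr (Or.inr hz.2.1)
    · have := hl p
      simp only [show ¬ G.Adj p b from fun h => hpq (hb.eq hq hp h.symm),
        show ¬ G.Adj p z from fun h => hrp.symm (hz.eq hr.1 hp h.symm), if_false] at this
      split_ifs at this <;> omega
    · have := hl q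
      simp only [show ¬ G.Adj q a from fun h => hpq.symm (ha.eq hp hq h.symm),
        show ¬ G.Adj q z from fun h => hrq.symm (hz.eq hr.1 hq h.symm), if_false] at this
      split_ifs at this <;> omega
  have hbig : ∀ x, Big G S x → x = p ∨ x = q := by
    intro x hx
    by_contra h
    push Not at h
    exact hr ⟨x, hx, h⟩
  by_cases h4 : 4 ≤ (nb G S p).card
  · exact pair_self IH hB hbig hp hq hpq hPp hPq h4 (by omega)
  by_cases h4' : 4 ≤ (nb G S q).card
  · obtain ⟨c, hc, h⟩ := pair_self IH hB (fun x hx => (hbig x hx).symm) hq hp hpq.symm hPq hPp h4'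
      (by omega)
    exact ⟨c, hc, h.symm⟩
  obtain ⟨b, d, hbd, hb, hd⟩ := hPp.two_leaves (by omega)
  have hsub : ({b, d} : Finset V) ⊆ nb G S p := by
    intro x
    simp only [Finset.mem_insert, Finset.mem_singleton]
    rintro (rfl | rfl)
    · exact mem_nb.2 ⟨hb.1, hb.2.1⟩
    · exact mem_nb.2 ⟨hd.1, hd.2.1⟩
  obtain ⟨x, hx⟩ := exists_other p hsub (by rw [Finset.card_pair hbd]; omega)
  refine step_first (Q_remove IH hB hp hb.1 hd.1 hb.2.1.ne hd.2.1.ne hbd fun y hy _ _ _ => ?_)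
    hp hb.1 hd.1 hb.2.1.ne hd.2.1.ne hbd ⟨x, fun w hw h => ?_⟩
    (fun w hw h => Or.inl (hb.eq hp hw h)) ⟨p, fun w hw h => Or.inl (hd.eq hp hw h)⟩
    (mem_sdiff3.2 ⟨hq, hpq.symm, hPq.ne_leaf hb.2.2, hPq.ne_leaf hd.2.2⟩)
  · have := hy.four_le
    obtain rfl | rfl := hbig y hy <;> omega
  · simpa using hx w (mem_nb.2 ⟨hw, h⟩)

theorem pair_step (hF : Forest G) {S : Finset V} (IH : IndHyp G S) (hB : Bdd G S)
    {p q : V} (hp : p ∈ S) (hq : q ∈ S) (hpq : p ≠ q) (hPp : PL G S p) (hPq : PL G S q) :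
    ∃ c, Good G S c ∧ c p ≠ c q := by
  by_cases h : ∃ r s, Big G S r ∧ Big G S s ∧ r ≠ s
  · obtain ⟨r, s, hr, hs, hrs⟩ := h
    exact pair_two_big hF IH hB hr hs hrs hp hq hpq hPp hPq
  · push Not at h
    exact pair_one_big hF IH hB h hp hq hpq hPp hPq

/-! ### Existence of a coloring -/

theorem good_of_card_le_two {S : Finset V} (h : S.card ≤ 2) : ∃ c, Good G S c := by
  obtain ⟨c, hc⟩ : ∃ c : V → Fin 3, ∀ u ∈ S, ∀ w ∈ S, c u = c w → u = w := by
    by_cases hS : S.Nonempty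
    · obtain ⟨x, hx⟩ := hS
      obtain ⟨y, hy⟩ := exists_other (T := S) (R := {x}) x (by simpa using hx) (by simpa using h)
      refine ⟨fun v => if v = x then 0 else 1, fun u hu w hw huw => ?_⟩
      have h1 := hy u hu
      have h2 := hy w hw
      simp only [Finset.mem_singleton] at h1 h2
      simp only at huw
      split_ifs at huw with h3 h4 h4
      · rw [h3, h4]
      · simp at huw
      · simp at huw
      · rw [h1.resolve_right h3, h2.resolve_right h4]
    · exact ⟨fun _ => 0, fun u hu => absurd ⟨u, hu⟩ hS⟩
  refine ⟨c, fun u hu w hw huw h => huw.ne (hc u hu w hw h), fun i j => ?_⟩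
  refine le_trans (Finset.card_le_one.2 fun x hx y hy => ?_) (Nat.le_add_left 1 _)
  rw [Finset.mem_filter] at hx hy
  exact hc x hx.1 y hy.1 (hx.2.trans hy.2.symm)

/-- A star with two, three or four leaves. -/
theorem good_star {S : Finset V} {r : V} (hr : r ∈ S) (h3 : 3 ≤ S.card) (h5 : S.card ≤ 5)
    (hleaf : ∀ v ∈ S, v ≠ r → (nb G S v).card ≤ 1) (hadj : ∀ v ∈ S, v ≠ r → G.Adj r v) :
    ∃ c, Good G S c := by
  have hLc := Finset.card_erase_of_mem hr
  obtain ⟨L, hL, hc⟩ := Finset.exists_subset_card_eq (s := S.erase r) (n := (S.card - 1) / 2)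
    (by omega)
  have hrL : r ∉ L := fun h => (Finset.mem_erase.1 (hL h)).1 rfl
  refine ⟨fun v => if v = r then 0 else if v ∈ L then 1 else 2, fun u hu w hw huw => ?_, ?_⟩
  · have hnr : u = r ∨ w = r := by
      by_cases h : u = r
      · exact Or.inl h
      · exact Or.inr (leaf_unique (hleaf u hu h) hr (hadj u hu h).symm hw huw)
    have hne := huw.ne
    rcases hnr with rfl | rfl
    · simp only [if_true, hne.symm, if_false]
      split_ifs <;> decide
    · simp only [if_true, hne, if_false]
      split_ifs <;> decide
  · have e0 : S.filter (fun v => (if v = r then (0 : Fin 3) else if v ∈ L then 1 else 2) = 0)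
        = {r} := by
      ext v
      simp only [Finset.mem_filter, Finset.mem_singleton]
      constructor
      · rintro ⟨-, h⟩
        by_contra hv
        simp only [hv, if_false] at h
        split_ifs at h <;> simp at h
      · rintro rfl
        simp [hr]
    have e1 : S.filter (fun v => (if v = r then (0 : Fin 3) else if v ∈ L then 1 else 2) = 1)
        = L := by
      ext v
      simp only [Finset.mem_filter]
      constructor
      · rintro ⟨-, h⟩
        split_ifs at h with h1 h2
        · simp at h
        · exact h2
        · simp at h
      · intro h
        have := Finset.mem_erase.1 (hL h)
        simp [this.1, this.2, h]
    have e2 : S.filter (fun v => (if v = r then (0 : Fin 3) else if v ∈ L then 1 else 2) = 2)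
        = (S.erase r) \ L := by
      ext v
      simp only [Finset.mem_filter, Finset.mem_sdiff, Finset.mem_erase]
      constructor
      · rintro ⟨hv, h⟩
        split_ifs at h with h1 h2
        · simp at h
        · simp at h
        · exact ⟨⟨h1, hv⟩, h2⟩
      · rintro ⟨⟨h1, hv⟩, h2⟩
        simp [h1, h2, hv]
    have c2 := Finset.card_sdiff_of_subset hL
    intro i j
    have hi := (by decide : ∀ i : Fin 3, i = 0 ∨ i = 1 ∨ i = 2) i
    have hj := (by decide : ∀ i : Fin 3, i = 0 ∨ i = 1 ∨ i = 2) j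
    rcases hi with rfl | rfl | rfl <;> rcases hj with rfl | rfl | rfl <;>
      simp only [e0, e1, e2, c2, Finset.card_singleton] <;> omega

theorem good_of_remove {S : Finset V} {a b d : V} (hQ : Q G (S \ {a, b, d}))
    (ha : a ∈ S) (hb : b ∈ S) (hd : d ∈ S) (hab : a ≠ b) (had : a ≠ d) (hbd : b ≠ d)
    (h1 : ∃ x, ∀ w ∈ S, G.Adj a w → w = x ∨ w = b ∨ w = d)
    (h2 : ∀ w ∈ S, G.Adj b w → w = a ∨ w = d)
    (h3 : ∃ y, ∀ w ∈ S, G.Adj d w → w = y ∨ w = a ∨ w = b) : ∃ c, Good G S c := by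
  obtain ⟨c, hc⟩ := hQ.1
  obtain ⟨c', h, -⟩ := extend_one' ha hb hd hab had hbd h1 h2 h3 hc 0
  exact ⟨c', h⟩

/-- A star together with a matching and isolated vertices. -/
theorem good_of_one_inner {S : Finset V} (IH : IndHyp G S) (hB : Bdd G S) (h3 : 3 ≤ S.card)
    {r : V} (hr : r ∈ S) (hleaf : ∀ v ∈ S, v ≠ r → (nb G S v).card ≤ 1) :
    ∃ c, Good G S c := by
  have hbig : ∀ x, Big G S x → x = r := by
    intro x hx
    by_contra h
    have := hx.four_le
    have := hleaf x hx.1 h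
    omega
  have hone : ∀ x ∈ S, (nb G S x).card ≤ 1 → ∃ y, ∀ w ∈ S, G.Adj x w → w = y := by
    intro x _ hx
    obtain ⟨y, hy⟩ := exists_other (R := ∅) x (Finset.empty_subset (nb G S x)) (by simpa using hx)
    exact ⟨y, fun w hw h => by simpa using hy w (mem_nb.2 ⟨hw, h⟩)⟩
  by_cases hb : ∃ b ∈ S, b ≠ r ∧ ¬ G.Adj r b
  swap
  · push Not at hb
    refine good_star hr h3 ?_ hleaf hb
    have h1 : S.erase r ⊆ nb G S r := fun x hx => by
      rw [Finset.mem_erase] at hx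
      exact mem_nb.2 ⟨hx.2, hb x hx.2 hx.1⟩
    have h1 := Finset.card_le_card h1
    rw [Finset.card_erase_of_mem hr] at h1
    have h2 := hB r hr
    unfold bd at h2
    omega
  obtain ⟨b, hb, hbr, hnadj⟩ := hb
  by_cases ha : ∃ a ∈ S, G.Adj b a
  · obtain ⟨a, ha, hba⟩ := ha
    have har : a ≠ r := by rintro rfl; exact hnadj hba.symm
    have hau : ∀ w ∈ S, G.Adj a w → w = b := fun w hw h =>
      leaf_unique (hleaf a ha har) hb hba.symm hw h
    have hbu : ∀ w ∈ S, G.Adj b w → w = a := fun w hw h =>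
      leaf_unique (hleaf b hb hbr) ha hba hw h
    obtain ⟨d, hd, had, hbd, hdr, hdu⟩ : ∃ d ∈ S, a ≠ d ∧ b ≠ d ∧
        (Big G S r → G.Adj r d) ∧ ∃ y, ∀ w ∈ S, G.Adj d w → w = y := by
      by_cases h : ∃ d ∈ S, G.Adj r d
      · obtain ⟨d, hd, hrd⟩ := h
        refine ⟨d, hd, ?_, ?_, fun _ => hrd, r, fun w hw h =>
          leaf_unique (hleaf d hd hrd.ne') hr hrd.symm hw h⟩
        · rintro rfl
          exact hbr (hau r hr hrd.symm).symm
        · rintro rfl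
          exact hnadj hrd
      · push Not at h
        refine ⟨r, hr, har, hbr, fun hr' => ?_, r, fun w hw hw' => absurd hw' (h w hw)⟩
        have := hr'.four_le
        obtain ⟨w, hw⟩ := Finset.card_pos.1 (show 0 < (nb G S r).card by omega)
        rw [mem_nb] at hw
        exact absurd hw.2 (h w hw.1)
    obtain ⟨y, hdu⟩ := hdu
    refine good_of_remove (Q_remove IH hB ha hb hd hba.ne' had hbd fun x hx _ _ _ => ?_)
      ha hb hd hba.ne' had hbd ⟨b, fun w hw h => Or.inl (hau w hw h)⟩
      (fun w hw h => Or.inl (hbu w hw h)) ⟨y, fun w hw h => Or.inl (hdu w hw h)⟩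
    obtain rfl := hbig x hx
    exact Or.inr (Or.inr (hdr hx))
  · push Not at ha
    obtain ⟨a, d, haS, hd, had, hab, hbd, ha1, hd1, hra⟩ : ∃ a d, a ∈ S ∧ d ∈ S ∧ a ≠ d ∧
        a ≠ b ∧ b ≠ d ∧ (nb G S a).card ≤ 1 ∧ (nb G S d).card ≤ 1 ∧
        (Big G S r → G.Adj r a) := by
      by_cases h : (nb G S r).card ≤ 1
      · obtain ⟨a, ha, d, hd, had⟩ := Finset.one_lt_card.1
          (show 1 < (S.erase b).card by rw [Finset.card_erase_of_mem hb]; omega)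
        rw [Finset.mem_erase] at ha hd
        have hall : ∀ x ∈ S, (nb G S x).card ≤ 1 := by
          intro x hx
          by_cases h' : x = r
          · rw [h']; exact h
          · exact hleaf x hx h'
        refine ⟨a, d, ha.2, hd.2, had, ha.1, hd.1.symm, hall a ha.2, hall d hd.2, fun hr' => ?_⟩
        have := hr'.four_le
        omega
      · obtain ⟨a, ha, d, hd, had⟩ := Finset.one_lt_card.1 (not_le.1 h)
        rw [mem_nb] at ha hd
        refine ⟨a, d, ha.1, hd.1, had, ?_, ?_, hleaf a ha.1 ha.2.ne', hleaf d hd.1 hd.2.ne',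
          fun _ => ha.2⟩
        · intro h'
          exact hnadj (h' ▸ ha.2)
        · intro h'
          exact hnadj (h' ▸ hd.2)
    obtain ⟨x, hx⟩ := hone a haS ha1
    obtain ⟨y, hy⟩ := hone d hd hd1
    refine good_of_remove (Q_remove IH hB haS hb hd hab had hbd fun v hv _ _ _ => ?_)
      haS hb hd hab had hbd ⟨x, fun w hw h => Or.inl (hx w hw h)⟩
      (fun w hw h => absurd h (ha w hw)) ⟨y, fun w hw h => Or.inl (hy w hw h)⟩
    obtain rfl := hbig v hv
    exact Or.inl (hra hv)

/-- A forest on at least two vertices has two vertices of degree at most one. -/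
theorem Forest.two_ends (hF : Forest G) {I : Finset V} (h2 : 2 ≤ I.card) :
    ∃ v ∈ I, ∃ w ∈ I, v ≠ w ∧ (nb G I v).card ≤ 1 ∧ (nb G I w).card ≤ 1 := by
  obtain ⟨v, hv, h1⟩ := hF I (Finset.card_pos.1 (by omega))
  by_contra! hcon
  have hcon : ∀ w ∈ I.erase v, 2 ≤ (nb G I w).card := fun w hw => by
    rw [Finset.mem_erase] at hw
    exact hcon v hv w hw.2 hw.1.symm h1
  have hcard := Finset.card_erase_of_mem hv
  by_cases h0 : (nb G I v).card = 0
  · obtain ⟨w, hw, hw1⟩ := hF (I.erase v) (Finset.card_pos.1 (by omega))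
    have := hcon w hw
    have hnad : ¬ G.Adj w v := fun h => by
      rw [Finset.card_eq_zero] at h0
      have : w ∈ nb G I v := mem_nb.2 ⟨Finset.mem_of_mem_erase hw, h.symm⟩
      rw [h0] at this
      simp at this
    rw [card_nb_erase hv, if_neg hnad] at this
    omega
  · have hs := hF.sum_deg _ I rfl (by omega)
    rw [← Finset.add_sum_erase I _ hv] at hs
    have := Finset.card_nsmul_le_sum (I.erase v) (fun w => (nb G I w).card) 2 hcon
    rw [smul_eq_mul] at this
    omega

/-- Two ends of the forest of inner vertices are pre-leaf vertices, which reduces existence to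
separation; with at most one inner vertex the forest is explicit. -/
theorem exists_good (hF : Forest G) {S : Finset V} (IH : IndHyp G S) (hB : Bdd G S) :
    ∃ c, Good G S c := by
  by_cases h3 : S.card ≤ 2
  · exact good_of_card_le_two h3
  set I := S.filter (fun v => 2 ≤ (nb G S v).card) with hI
  by_cases hI2 : 2 ≤ I.card
  · obtain ⟨p, hp, q, hq, hpq, hp1, hq1⟩ := hF.two_ends hI2
    have hPL : ∀ p ∈ I, (nb G I p).card ≤ 1 → PL G S p := by
      intro p hp h1
      refine ⟨(Finset.mem_filter.1 hp).2, le_trans (Finset.card_le_card fun x hx => ?_) h1⟩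
      rw [Finset.mem_filter, mem_nb] at hx
      exact mem_nb.2 ⟨Finset.mem_filter.2 ⟨hx.1.1, hx.2⟩, hx.1.2⟩
    obtain ⟨c, hc, -⟩ := pair_step hF IH hB (Finset.mem_filter.1 hp).1 (Finset.mem_filter.1 hq).1
      hpq (hPL p hp hp1) (hPL q hq hq1)
    exact ⟨c, hc⟩
  obtain ⟨s, hs⟩ := Finset.card_pos.1 (show 0 < S.card by omega)
  obtain ⟨r, hr, hleaf⟩ : ∃ r ∈ S, ∀ v ∈ S, v ≠ r → v ∉ I := by
    by_cases hne : I.Nonempty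
    · obtain ⟨r, hr⟩ := hne
      exact ⟨r, (Finset.mem_filter.1 hr).1, fun v _ hvr hvI =>
        hvr (Finset.card_le_one.1 (by omega) v hvI r hr)⟩
    · exact ⟨s, hs, fun v _ _ hvI => hne ⟨v, hvI⟩⟩
  refine good_of_one_inner IH hB (by omega) hr fun v hv hvr => ?_
  have := hleaf v hv hvr
  rw [hI, Finset.mem_filter] at this
  push Not at this
  have := this hv
  omega

theorem main_induction (hF : Forest G) : ∀ (n : ℕ) (S : Finset V), S.card = n → Bdd G S →
    Q G S := by
  intro n
  induction n using Nat.strong_induction_on with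
  | _ n ih =>
    intro S hS hB
    have IH : IndHyp G S := fun T hT hBT => ih T.card (hS ▸ hT) T rfl hBT
    exact ⟨exists_good hF IH hB, fun p hp q hq hpq hPp hPq =>
      pair_step hF IH hB hp hq hpq hPp hPq⟩

/-! ### Translation to the whole vertex set -/

theorem card_nb_univ [Fintype V] (v : V) : (nb G Finset.univ v).card = G.degree v := by
  rw [← G.card_neighborFinset_eq_degree]
  congr 1
  ext w
  simp [mem_nb]

theorem Good.balanced [Fintype V] {c : V → Fin 3} (hc : Good G Finset.univ c) (i j : Fin 3) :
    |(({v | c v = i} : Set V).ncard : ℤ) - (({v | c v = j} : Set V).ncard : ℤ)| ≤ 1 := by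
  have h : ∀ i, ({v | c v = i} : Set V).ncard = (Finset.univ.filter (fun v => c v = i)).card := by
    intro i
    rw [← Set.ncard_coe_finset]
    simp
  have h1 := hc.2 i j
  have h2 := hc.2 j i
  rw [h, h, abs_le]
  omega

theorem IsPreLeaf.pl [Fintype V] {p : V} (hp : IsPreLeaf G p) : PL G Finset.univ p := by
  obtain ⟨h1, h2⟩ := hp
  have h : ({u | G.Adj p u ∧ G.degree u = 1} : Set V).ncard =
      ((nb G Finset.univ p).filter (fun u => G.degree u = 1)).card := by
    rw [← Set.ncard_coe_finset]
    congr 1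
    ext u
    simp [mem_nb]
  rw [h] at h2
  refine ⟨by rw [card_nb_univ]; omega, ?_⟩
  have h3 := Finset.card_filter_add_card_filter_not (s := nb G Finset.univ p)
    (fun u => G.degree u = 1)
  rw [card_nb_univ] at h3
  refine le_trans (Finset.card_le_card fun x hx => ?_)
    (show ((nb G Finset.univ p).filter (fun u => ¬ G.degree u = 1)).card ≤ 1 by omega)
  rw [Finset.mem_filter, card_nb_univ] at hx
  exact Finset.mem_filter.2 ⟨hx.1, by omega⟩

end

theorem tree_strongly3Balanced_of_maxDegree_le {V : Type*} [Fintype V] [DecidableEq V]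
    (G : SimpleGraph V) [DecidableRel G.Adj] (hG : G.IsTree)
    (hdeg : (G.maxDegree : ℝ) ≤ (Fintype.card V : ℝ) / 3) :
    Strongly3Balanced G ∧
      ∀ p q : V, p ≠ q → IsPreLeaf G p → IsPreLeaf G q →
        ∃ c : V → Fin 3,
          (∀ a b : V, G.Adj a b → c a ≠ c b) ∧
          (∀ i j : Fin 3,
            |(({x | c x = i} : Set V).ncard : ℤ) -
              (({x | c x = j} : Set V).ncard : ℤ)| ≤ 1) ∧
          c p ≠ c q := by
  have hB : Bdd G (Finset.univ : Finset V) := by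
    intro v _
    have h1 := G.degree_le_maxDegree v
    have h2 : 3 * G.maxDegree ≤ Fintype.card V := by
      have : (3 : ℝ) * G.maxDegree ≤ Fintype.card V := by linarith
      exact_mod_cast this
    rw [card_nb_univ, Finset.card_univ]
    unfold bd
    omega
  have hQ := main_induction (forest_of_acyclic hG.isAcyclic) _ _ rfl hB
  refine ⟨?_, fun p q hpq hp hq => ?_⟩
  · obtain ⟨c, hc⟩ := hQ.1
    exact ⟨c, fun u w h => hc.1 u (Finset.mem_univ u) w (Finset.mem_univ w) h, hc.balanced⟩
  · obtain ⟨c, hc, hcpq⟩ := hQ.2 p (Finset.mem_univ p) q (Finset.mem_univ q) hpq hp.pl hq.pl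
    exact ⟨c, fun u w h => hc.1 u (Finset.mem_univ u) w (Finset.mem_univ w) h, hc.balanced, hcpq⟩
end

section
/- Let k be a positive integer and let G = (V,E) be a tree with exactly n = 3k vertices whose maximal degree satisfies d_max(G) ≤ k, and let p, q be distinct pre-leaf vertices of G. Then there exists a strongly 3-balanced coloring c : V → {1,2,3} such that c(p) ≠ c(q). -/
/-!
Let `A`, `B` be the sides of the bipartition of the tree, `#A ≤ #B`. Since `#V = 3 * k`, a proper
colouring with two classes of size exactly `k` is balanced, with three classes of size `k`. The
degrees add up to `3 * k - 1` on each side, and the leaves and the degree sums are played off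
against each other.

**`#A ≥ k`.** Put `s = #A - k`, so `2 * s ≤ k`. The classes are `A \ A'`, `B \ B'` and `A' ∪ B'`,
where `A' ⊆ A` has `s` vertices, `B' ⊆ B` has `k - s`, and no edge joins them (`good_of_both`). Such
a `B'` exists as soon as `A'` has at most `k` neighbours. The set `A'` is chosen with leaves first
(`exists_low`): either it consists of leaves and has at most `s` neighbours, or all remaining
vertices have degree at least two, so little of the degree sum is left for `A'`. To separate `p`
from `q`, exactly one of them is put in the third class if they lie on the same side; if they lie
on different sides it is enough that `q ∉ B'`.

**`#A ≤ k`.** Put `t = k - #A`. One class is `(A \ A') ∪ B'`, where `B' ⊆ B` has `t + #A'` vertices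
and all neighbours of `B'` lie in `A'`. Then `A'` gets the second colour, the other neighbours of
`A'` the third, and the rest of `B` is used to balance these two classes (`good_of_shift`).
Normally `B'` consists of leaves hanging on `A'`. If `l v` is the number of leaves at `v`, the
requirements are that `∑ (l v - 1)` over `A'` be at least `t` and `∑ (deg v - 1)` at most `k + t`.
Counting leaves of `B` gives `∑ (l v - 1) ≥ 3 * t + 1` over all of `A`, while `∑ (deg v - 1)` is
`2 * k + t - 1`. Hence (`exists_group`) either a single vertex suffices, by the bound on the
degrees, or there are two disjoint groups, the cheaper of which suffices. Separating `p` and `q`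
takes small modifications: if both are in `A`, then `p` is put into `A'` and `q` is left out; if
both are in `B`, then `q` gets the third colour and `p` either the second, when `p` has no
neighbour in `A'`, or the first, after the leaves at `p` are added to `A'` and `p` to `B'`.

The case `#A = k` falls under the second construction if `p` and `q` both lie in `A`, and under
the first otherwise.
-/


open SimpleGraph

set_option linter.unusedSectionVars false

namespace TreeColoring

open Finset

variable {V : Type*} [Fintype V] [DecidableEq V] {G : SimpleGraph V} [DecidableRel G.Adj]

/-- `A` and `B` are the two sides of a bipartition of `G`, together with the numerical data that
this gives for a tree on `3 * k ≥ 2` vertices of maximal degree at most `k`: each side meets all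
`3 * k - 1` edges, so its degrees add up to `3 * k - 1`. -/
structure Bip (G : SimpleGraph V) [DecidableRel G.Adj] (A B : Finset V) (k : ℕ) : Prop where
  cover : ∀ v, v ∈ A ∨ v ∈ B
  disj : ∀ v, v ∈ A → v ∉ B
  ab : ∀ u v, G.Adj u v → u ∈ A → v ∈ B
  ba : ∀ u v, G.Adj u v → u ∈ B → v ∈ A
  sumA : ∑ v ∈ A, G.degree v + 1 = 3 * k
  sumB : ∑ v ∈ B, G.degree v + 1 = 3 * k
  card : #A + #B = 3 * k
  pos : ∀ v, 1 ≤ G.degree v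
  le : ∀ v, G.degree v ≤ k

lemma Bip.symm {A B : Finset V} {k : ℕ} (h : Bip G A B k) : Bip G B A k where
  cover v := (h.cover v).symm
  disj v hv hv' := h.disj v hv' hv
  ab := h.ba
  ba := h.ab
  sumA := h.sumB
  sumB := h.sumA
  card := by rw [add_comm]; exact h.card
  pos := h.pos
  le := h.le

/-- The neighbourhood `N(S)` of a set of vertices: all vertices adjacent to a vertex of `S`. -/
def nb (G : SimpleGraph V) [DecidableRel G.Adj] (S : Finset V) : Finset V :=
  S.biUnion fun v => G.neighborFinset v

/-- The leaves adjacent to `v`. -/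
def lv (G : SimpleGraph V) [DecidableRel G.Adj] (v : V) : Finset V :=
  (G.neighborFinset v).filter fun u => G.degree u = 1

/-- The leaves hanging on a set `S`, that is, those adjacent to some vertex of `S`. -/
def hang (G : SimpleGraph V) [DecidableRel G.Adj] (S : Finset V) : Finset V :=
  S.biUnion (lv G)

/-- The notion `IsPreLeaf` in terms of `lv`. A pre-leaf vertex cannot be isolated, so its degree is
at least two. -/
def PL (G : SimpleGraph V) [DecidableRel G.Adj] (v : V) : Prop :=
  2 ≤ G.degree v ∧ #(lv G v) + 1 = G.degree v

lemma mem_nb {S : Finset V} {u : V} : u ∈ nb G S ↔ ∃ v ∈ S, G.Adj v u := by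
  simp [nb]

lemma mem_lv {u v : V} : u ∈ lv G v ↔ G.Adj v u ∧ G.degree u = 1 := by
  simp [lv]

lemma mem_hang {S : Finset V} {u : V} :
    u ∈ hang G S ↔ ∃ v ∈ S, G.Adj v u ∧ G.degree u = 1 := by
  simp [hang, mem_lv]

lemma card_nb_le (S : Finset V) : #(nb G S) ≤ ∑ v ∈ S, G.degree v := by
  simpa [nb] using card_biUnion_le (s := S) (t := fun v => G.neighborFinset v)

lemma leaf_unique {u v w : V} (hu : G.degree u = 1) (hv : G.Adj v u) (hw : G.Adj w u) :
    v = w := by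
  rw [← G.card_neighborFinset_eq_degree] at hu
  exact card_le_one.mp hu.le v (by simpa using hv.symm) w (by simpa using hw.symm)

lemma card_hang (S : Finset V) : #(hang G S) = ∑ v ∈ S, #(lv G v) := by
  refine card_biUnion fun x _ y _ hxy => Finset.disjoint_left.mpr fun u hu hu' => hxy ?_
  rw [mem_lv] at hu hu'
  exact leaf_unique hu.2 hu.1 hu'.1

lemma PL.unique {v x y : V} (h : PL G v) (hx : G.Adj v x) (hy : G.Adj v y)
    (hx1 : G.degree x ≠ 1) (hy1 : G.degree y ≠ 1) : x = y := by
  have h1 := card_filter_add_card_filter_not (s := G.neighborFinset v) (fun u => G.degree u = 1)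
  rw [G.card_neighborFinset_eq_degree] at h1
  have h2 := h.2
  unfold lv at h2
  have h3 : #((G.neighborFinset v).filter fun u => ¬ G.degree u = 1) ≤ 1 := by omega
  exact card_le_one.mp h3 x (by simp [hx, hx1]) y (by simp [hy, hy1])

/-- The map with colour classes `X`, `Y` and the complement of `X ∪ Y`. -/
def col (X Y : Finset V) (v : V) : Fin 3 := if v ∈ X then 0 else if v ∈ Y then 1 else 2

/-- There is a proper 3-colouring, separating `p` from `q`, with two classes of size `k`. -/
def Good (G : SimpleGraph V) (k : ℕ) (p q : V) : Prop :=
  ∃ X Y : Finset V, Disjoint X Y ∧ #X = k ∧ #Y = k ∧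
    (∀ a b, G.Adj a b → col X Y a ≠ col X Y b) ∧ col X Y p ≠ col X Y q

lemma Good.symm {k : ℕ} {p q : V} (h : Good G k p q) : Good G k q p := by
  obtain ⟨X, Y, h1, h2, h3, h4, h5⟩ := h
  exact ⟨X, Y, h1, h2, h3, h4, h5.symm⟩

/-- The colour classes are `A \ A'`, `B \ B'` and `A' ∪ B'`. -/
lemma good_of_both {A B : Finset V} {k : ℕ} (h : Bip G A B k) {p q : V} {A' B' : Finset V}
    (hA : A' ⊆ A) (hB : B' ⊆ B) (cA : #A = #A' + k) (cB : #B = #B' + k)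
    (hAB : ∀ a ∈ A', ∀ b ∈ B', ¬ G.Adj a b)
    (hpq : (p ∈ A ∧ q ∈ B ∧ q ∉ B') ∨ (p ∈ A' ∧ q ∈ A ∧ q ∉ A') ∨
      (p ∈ B' ∧ q ∈ B ∧ q ∉ B')) :
    Good G k p q := by
  have hd := h.disj
  refine ⟨A \ A', B \ B', ?_, ?_, ?_, ?_, ?_⟩
  · rw [Finset.disjoint_left]; grind
  · rw [card_sdiff_of_subset hA]; omega
  · rw [card_sdiff_of_subset hB]; omega
  · intro a b hab
    have h1 := h.ab a b hab
    have h2 := h.ba a b hab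
    have h3 := h.cover a
    have h4 := hAB a
    have h5 := hAB b
    have h6 := hab.symm
    simp only [col, mem_sdiff]
    grind
  · simp only [col, mem_sdiff]
    grind

/-- The colour classes are `(A \ A') ∪ B'`, a set containing `A' ∪ P`, and a set
containing `R`; all of `B` outside `B' ∪ P ∪ R` is distributed so as to balance the sizes. -/
lemma good_of_shift {A B : Finset V} {k : ℕ} (h : Bip G A B k) {p q : V} {A' B' P R : Finset V}
    (hA : A' ⊆ A) (hB : B' ⊆ B) (cc : #B' + #A = k + #A')
    (hB' : ∀ b ∈ B', ∀ a, G.Adj b a → a ∈ A')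
    (hP : P ⊆ B \ B') (hR : R ⊆ B \ B') (hPR : ∀ v ∈ P, v ∉ R)
    (hN : nb G A' \ B' ⊆ R) (cR : #R ≤ k) (cP : #P + #A' ≤ k)
    (hpq : (p ∈ P ∧ q ∈ R) ∨ (p ∈ B' ∧ q ∈ R) ∨ (p ∈ A ∧ q ∈ R) ∨ (p ∈ A' ∧ q ∈ A ∧ q ∉ A')) :
    Good G k p q := by
  have hd := h.disj
  have hc := h.card
  have c1 : #((B \ B') \ P) = #B - #B' - #P := by
    rw [card_sdiff_of_subset hP, card_sdiff_of_subset hB]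
  have c2 := card_le_card hA
  have c3 := card_le_card hB
  have c4 := card_le_card hP
  rw [card_sdiff_of_subset hB] at c4
  obtain ⟨Z, hRZ, hZ, cZ⟩ := exists_subsuperset_card_eq (s := R) (t := (B \ B') \ P) (n := k)
    (by grind) cR (by omega)
  have hZ' : Z ⊆ B \ B' := by grind
  have c5 : Disjoint (A \ A') B' := by rw [Finset.disjoint_left]; grind
  have c6 : Disjoint A' ((B \ B') \ Z) := by rw [Finset.disjoint_left]; grind
  refine ⟨(A \ A') ∪ B', A' ∪ ((B \ B') \ Z), ?_, ?_, ?_, ?_, ?_⟩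
  · rw [Finset.disjoint_left]; grind
  · rw [card_union_of_disjoint c5, card_sdiff_of_subset hA]; omega
  · rw [card_union_of_disjoint c6, card_sdiff_of_subset hZ', card_sdiff_of_subset hB]; omega
  · have hN' : ∀ a ∈ A', ∀ b, G.Adj a b → b ∈ B' ∨ b ∈ R := by
      intro a ha b hab
      have : b ∈ nb G A' := mem_nb.mpr ⟨a, ha, hab⟩
      grind
    -- by symmetry only edges directed from `A` to `B` need to be considered
    have key : ∀ a b, G.Adj a b → a ∈ A → b ∈ B →
        col ((A \ A') ∪ B') (A' ∪ ((B \ B') \ Z)) a ≠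
          col ((A \ A') ∪ B') (A' ∪ ((B \ B') \ Z)) b := by
      intro a b hab ha hb
      have h4 := hN' a
      have h5 := hB' b
      have h6 := hab.symm
      simp only [col, mem_sdiff, mem_union]
      grind
    intro a b hab
    rcases h.cover a with ha | ha
    · exact key a b hab ha (h.ab a b hab ha)
    · exact (key b a hab.symm (h.ba a b hab ha) ha).symm
  · simp only [col, mem_sdiff, mem_union]
    grind

/-- If the total weight is large, then either a single vertex reaches `τ`, or `S` splits into two
parts each of which reaches `τ`; the part with smaller `d` is chosen. -/
lemma exists_group (S : Finset V) (g d : V → ℤ) (τ : ℤ) (hτ : 1 ≤ τ)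
    (hg : 3 * τ - 2 ≤ ∑ v ∈ S, g v) :
    ∃ T ⊆ S, τ ≤ ∑ v ∈ T, g v ∧ ((∃ v ∈ S, T = {v}) ∨ 2 * ∑ v ∈ T, d v ≤ ∑ v ∈ S, d v) := by
  by_cases hs : ∃ v ∈ S, τ ≤ g v
  · obtain ⟨v, hv, hgv⟩ := hs
    exact ⟨{v}, by simpa using hv, by simpa using hgv, Or.inl ⟨v, hv, rfl⟩⟩
  push Not at hs
  have hne : (S.powerset.filter fun T => τ ≤ ∑ v ∈ T, g v).Nonempty :=
    ⟨S, by simp; omega⟩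
  obtain ⟨T, hT, hmin⟩ := exists_min_image _ card hne
  simp only [mem_filter, mem_powerset] at hT hmin
  have hTn : T.Nonempty := by
    rw [nonempty_iff_ne_empty]
    rintro rfl
    simp at hT
    omega
  obtain ⟨v, hv⟩ := hTn
  have h1 : ∑ u ∈ T.erase v, g u < τ := by
    by_contra! hcon
    have := hmin (T.erase v) ⟨(erase_subset _ _).trans hT.1, hcon⟩
    have := card_erase_lt_of_mem hv
    omega
  have h2 := sum_erase_add T g hv
  have h3 := hs v (hT.1 hv)
  have h4 := sum_sdiff (f := g) hT.1
  have h5 := sum_sdiff (f := d) hT.1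
  rcases le_total (2 * ∑ v ∈ T, d v) (∑ v ∈ S, d v) with h6 | h6
  · exact ⟨T, hT.1, hT.2, Or.inr h6⟩
  · exact ⟨S \ T, sdiff_subset, by omega, Or.inr (by omega)⟩

/-- A choice of `n` vertices of `S` that prefers leaves. -/
lemma exists_low (S : Finset V) (n : ℕ) (hn : n ≤ #S) :
    ∃ T ⊆ S, #T = n ∧ ((∀ v ∈ T, G.degree v = 1) ∨
      ((∀ v ∈ S, G.degree v = 1 → v ∈ T) ∧ ∀ v ∈ S \ T, G.degree v ≠ 1)) := by
  rcases le_total n #(S.filter fun v => G.degree v = 1) with h | h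
  · obtain ⟨T, hT, cT⟩ := exists_subset_card_eq h
    exact ⟨T, hT.trans (filter_subset _ _), cT, Or.inl fun v hv => (mem_filter.mp (hT hv)).2⟩
  · obtain ⟨T, hT, hT', cT⟩ := exists_subsuperset_card_eq (filter_subset _ _) h hn
    refine ⟨T, hT', cT, Or.inr ⟨fun v hv h1 => hT (mem_filter.mpr ⟨hv, h1⟩), fun v hv h1 => ?_⟩⟩
    rw [mem_sdiff] at hv
    exact hv.2 (hT (mem_filter.mpr ⟨hv.1, h1⟩))

lemma card_nb_leaves_le {T : Finset V} (hT : ∀ v ∈ T, G.degree v = 1) : #(nb G T) ≤ #T := by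
  refine (card_nb_le T).trans ?_
  rw [sum_congr rfl hT]
  simp

/-- If `S \ T` has no leaves then its degrees add up to at least `2 * #(S \ T)`. -/
lemma Bip.sum_add_two_mul {A B : Finset V} {k : ℕ} (h : Bip G A B k) {S T : Finset V}
    (hTS : T ⊆ S) (hT : ∀ v ∈ S \ T, G.degree v ≠ 1) :
    ∑ v ∈ T, G.degree v + 2 * #S ≤ ∑ v ∈ S, G.degree v + 2 * #T := by
  have h1 := sum_sdiff (f := fun v => G.degree v) hTS
  have h2 : #(S \ T) • 2 ≤ ∑ v ∈ S \ T, G.degree v := by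
    refine card_nsmul_le_sum _ _ _ fun v hv => ?_
    have := hT v hv
    have := h.pos v
    omega
  have h3 := card_sdiff_add_card_eq_card hTS
  rw [smul_eq_mul] at h2
  omega

/-! ### The smaller side has at least `k` vertices -/

/-- A set `A'` with a small neighbourhood leaves room in `B` for a set `B'` that avoids `q` and
contains `p` if required. -/
lemma good_of_small_nb {A B : Finset V} {k : ℕ} (h : Bip G A B k) (hk : 1 ≤ k)
    (h2 : 2 * #A ≤ 3 * k) {p q : V} {A' : Finset V} (hA : A' ⊆ A)
    (cA : #A = #A' + k) (hq : q ∈ B) (hn : #(insert q (nb G A')) ≤ k)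
    (hp : p ∈ A ∨ (p ∈ B ∧ p ≠ q ∧ p ∉ nb G A')) : Good G k p q := by
  have hc := h.card
  have h3 : #B - k ≤ #(B \ insert q (nb G A')) :=
    (Nat.sub_le_sub_left hn _).trans (le_card_sdiff _ _)
  have hAB : ∀ B' ⊆ B \ insert q (nb G A'), ∀ a ∈ A', ∀ b ∈ B', ¬ G.Adj a b := by
    intro B' hB' a ha b hb hab
    have : b ∈ nb G A' := mem_nb.mpr ⟨a, ha, hab⟩
    have := hB' hb
    grind
  rcases hp with hp | ⟨hpB, hpq, hpn⟩
  · obtain ⟨B', hB', cB'⟩ := exists_subset_card_eq h3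
    exact good_of_both h hA (by grind) cA (by omega) (hAB B' hB') (Or.inl ⟨hp, hq, by grind⟩)
  · obtain ⟨B', hpB', hB', cB'⟩ := exists_subsuperset_card_eq (s := {p})
      (t := B \ insert q (nb G A')) (by grind) (by rw [card_singleton]; omega) h3
    exact good_of_both h hA (by grind) cA (by omega) (hAB B' hB')
      (Or.inr (Or.inr ⟨by grind, hq, by grind⟩))

/-- Since `q ∉ B'`, the vertex `q` has the colour of `B \ B'`, which no vertex of `A` has. -/
lemma good_large_AB {A B : Finset V} {k : ℕ} (h : Bip G A B k) (hk : 1 ≤ k)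
    (h1 : k ≤ #A) (h2 : 2 * #A ≤ 3 * k) {p q : V} (hp : p ∈ A) (hq : q ∈ B) :
    Good G k p q := by
  obtain ⟨T, hT, cT, hlow⟩ := exists_low (G := G) A (#A - k) (by omega)
  refine good_of_small_nb h hk h2 hT (by omega) hq ?_ (Or.inl hp)
  have h3 := card_insert_le q (nb G T)
  rcases hlow with hl | ⟨-, hl⟩
  · have := card_nb_leaves_le hl
    omega
  · have h4 := h.sum_add_two_mul hT hl
    have h5 := card_nb_le (G := G) T
    have h6 := h.sumA
    omega

/-- The set `A'` avoids the neighbours of `p`, so `p` can be put in `B'`. The assumption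
`deg p ≤ deg q` compensates for this restriction: the leaves at `q`, which remain available for
`A'`, share a single neighbour. -/
lemma good_large_BB {A B : Finset V} {k : ℕ} (h : Bip G A B k) (hk : 1 ≤ k)
    (h1 : k ≤ #A) (h2 : 2 * #A ≤ 3 * k) {p q : V} (hpq : p ≠ q) (hp : p ∈ B) (hq : q ∈ B)
    (hpl : PL G p) (hql : PL G q) (hd : G.degree p ≤ G.degree q) :
    Good G k p q := by
  have hNp : G.neighborFinset p ⊆ A := fun v hv => h.ba p v (by simpa using hv) hp
  have cNp := G.card_neighborFinset_eq_degree p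
  have cS := card_sdiff_add_card_eq_card hNp
  have hkp := h.le p
  obtain ⟨T, hT, cT, hlow⟩ := exists_low (G := G) (A \ G.neighborFinset p) (#A - k) (by omega)
  have hpn : p ∉ nb G T := by
    rw [mem_nb]
    rintro ⟨v, hv, hvp⟩
    have := hT hv
    have : v ∈ G.neighborFinset p := by simpa using hvp.symm
    grind
  refine good_of_small_nb h hk h2 (hT.trans sdiff_subset) (by omega) hq ?_
    (Or.inr ⟨hp, hpq, hpn⟩)
  rcases hlow with hl | ⟨hl1, hl⟩
  · have := card_nb_leaves_le hl
    have := card_insert_le q (nb G T)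
    omega
  · have h3 := h.sum_add_two_mul hT hl
    have h4 := sum_sdiff (f := fun v => G.degree v) hNp
    have h5 := h.sumA
    -- `p` has a non-leaf neighbour, hence its neighbours have degree sum at least `deg p + 1`
    have h6 : G.degree p + 1 ≤ ∑ v ∈ G.neighborFinset p, G.degree v := by
      have hsub : lv G p ⊆ G.neighborFinset p := filter_subset _ _
      have h7 := h.sum_add_two_mul hsub (fun v hv h8 => by
        rw [mem_sdiff, mem_lv] at hv
        exact hv.2 ⟨by simpa using hv.1, h8⟩)
      have h9 : ∑ v ∈ lv G p, G.degree v = #(lv G p) := by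
        rw [sum_congr rfl fun v hv => (mem_lv.mp hv).2]
        simp
      have := hpl.2
      omega
    have hq_sub : lv G q ⊆ T := by
      intro v hv
      rw [mem_lv] at hv
      refine hl1 v (mem_sdiff.mpr ⟨h.ba q v hv.1 hq, fun hvp => hpq ?_⟩) hv.2
      exact leaf_unique hv.2 (by simpa using hvp) hv.1
    -- all leaves at `q` together contribute the single neighbour `q`
    have h10 : insert q (nb G T) ⊆ insert q (nb G (T \ lv G q)) := by
      intro u hu
      rw [mem_insert] at hu ⊢
      rcases hu with hu | hu
      · exact Or.inl hu
      · obtain ⟨v, hv, hvu⟩ := mem_nb.mp hu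
        by_cases hvq : v ∈ lv G q
        · rw [mem_lv] at hvq
          exact Or.inl (leaf_unique hvq.2 hvu.symm hvq.1)
        · exact Or.inr (mem_nb.mpr ⟨v, mem_sdiff.mpr ⟨hv, hvq⟩, hvu⟩)
    have h11 := card_le_card h10
    have h12 := card_insert_le q (nb G (T \ lv G q))
    have h13 := card_nb_le (G := G) (T \ lv G q)
    have h14 := sum_sdiff (f := fun v => G.degree v) hq_sub
    have h15 : ∑ v ∈ lv G q, G.degree v = #(lv G q) := by
      rw [sum_congr rfl fun v hv => (mem_lv.mp hv).2]
      simp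
    have := hql.2
    omega

/-- Here `p` is put in `A'` and `q` is left out. -/
lemma good_large_AA {A B : Finset V} {k : ℕ} (h : Bip G A B k)
    (h1 : k < #A) (h2 : 2 * #A ≤ 3 * k) {p q : V} (hpq : p ≠ q) (hp : p ∈ A) (hq : q ∈ A)
    (hql : PL G q) (hd : G.degree p ≤ G.degree q) :
    Good G k p q := by
  have hc := h.card
  have hsub : ({p, q} : Finset V) ⊆ A := by grind
  have cS := card_sdiff_add_card_eq_card hsub
  have c2 : #({p, q} : Finset V) = 2 := card_pair hpq
  obtain ⟨T, hT, cT, hlow⟩ := exists_low (G := G) (A \ {p, q}) (#A - k - 1) (by omega)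
  have hpT : p ∉ T := fun hv => by have := hT hv; grind
  have hqT : q ∉ insert p T := fun hv => by
    rcases mem_insert.mp hv with hv | hv
    · exact hpq hv.symm
    · have := hT hv; grind
  have hTA : insert p T ⊆ A := by grind
  have cI : #(insert p T) = #T + 1 := card_insert_of_notMem hpT
  have hnb : #(nb G (insert p T)) ≤ k := by
    have h3 := card_nb_le (G := G) (insert p T)
    rw [sum_insert hpT] at h3
    rcases hlow with hl | ⟨-, hl⟩
    · rw [sum_congr rfl hl] at h3
      simp only [sum_const, smul_eq_mul, mul_one] at h3
      -- if `deg q` is large, its leaves are too many vertices outside the neighbourhood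
      have h4 : nb G (insert p T) ⊆ B \ lv G q := by
        intro u hu
        obtain ⟨v, hv, hvu⟩ := mem_nb.mp hu
        refine mem_sdiff.mpr ⟨h.ab v u hvu (hTA hv), fun hul => hqT ?_⟩
        rw [mem_lv] at hul
        rwa [leaf_unique hul.2 hul.1 hvu]
      have h5 : lv G q ⊆ B := fun u hu => h.ab q u (mem_lv.mp hu).1 hq
      have h6 := card_le_card h4
      have h7 := card_sdiff_add_card_eq_card h5
      have := hql.2
      omega
    · have h4 := h.sum_add_two_mul hT hl
      have h5 := sum_sdiff (f := fun v => G.degree v) hsub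
      rw [sum_pair hpq] at h5
      have := h.sumA
      have := hql.1
      omega
  have h3 : #B - k ≤ #(B \ nb G (insert p T)) :=
    (Nat.sub_le_sub_left hnb _).trans (le_card_sdiff _ _)
  obtain ⟨B', hB', cB'⟩ := exists_subset_card_eq h3
  refine good_of_both h hTA (hB'.trans sdiff_subset) (by omega) (by omega) ?_
    (Or.inr (Or.inl ⟨by simp, hq, hqT⟩))
  intro a ha b hb hab
  exact (mem_sdiff.mp (hB' hb)).2 (mem_nb.mpr ⟨a, ha, hab⟩)

/-! ### The smaller side has at most `k` vertices -/

lemma sum_lv_sub (T : Finset V) :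
    ∑ v ∈ T, ((#(lv G v) : ℤ) - 1) = (#(hang G T) : ℤ) - #T := by
  rw [card_hang, sum_sub_distrib]
  simp

lemma sum_deg_sub (T : Finset V) :
    ∑ v ∈ T, ((G.degree v : ℤ) - 1) = ((∑ v ∈ T, G.degree v : ℕ) : ℤ) - #T := by
  rw [sum_sub_distrib]
  simp

lemma hang_subset_nb (T : Finset V) : hang G T ⊆ nb G T := by
  intro u hu
  obtain ⟨v, hv, hvu, -⟩ := mem_hang.mp hu
  exact mem_nb.mpr ⟨v, hv, hvu⟩

lemma Bip.nb_subset {A B T : Finset V} {k : ℕ} (h : Bip G A B k) (hT : T ⊆ A) :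
    nb G T ⊆ B := by
  intro u hu
  obtain ⟨v, hv, hvu⟩ := mem_nb.mp hu
  exact h.ab v u hvu (hT hv)

lemma mem_of_adj_hang {T : Finset V} {a b : V} (hb : b ∈ hang G T) (hba : G.Adj b a) :
    a ∈ T := by
  obtain ⟨v, hv, hvb, h1⟩ := mem_hang.mp hb
  rwa [← leaf_unique h1 hvb hba.symm]

/-- A lower bound for the number of leaves in `B`, improved by the degrees of a set `Q` of
non-leaves. -/
lemma Bip.leaves_bound {A B Q : Finset V} {k : ℕ} (h : Bip G A B k) (hQ : Q ⊆ B)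
    (hQ1 : ∀ v ∈ Q, G.degree v ≠ 1) :
    2 * #B + ∑ v ∈ Q, G.degree v ≤ ∑ v ∈ B, G.degree v + #(hang G A) + 2 * #Q := by
  have h1 : hang G A ⊆ B := (hang_subset_nb A).trans (h.nb_subset Subset.rfl)
  have h2 : Disjoint (hang G A) Q := by
    rw [Finset.disjoint_left]
    intro u hu hu'
    obtain ⟨v, -, -, h3⟩ := mem_hang.mp hu
    exact hQ1 u hu' h3
  have h3 := h.sum_add_two_mul (union_subset h1 hQ) (fun v hv h4 => by
    rw [mem_sdiff, mem_union] at hv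
    have hpos : 0 < G.degree v := h.pos v
    obtain ⟨w, hw⟩ := (G.degree_pos_iff_exists_adj v).mp hpos
    exact hv.2 (Or.inl (mem_hang.mpr ⟨w, h.ba v w hw hv.1, hw.symm, h4⟩)))
  rw [sum_union h2, card_union_of_disjoint h2] at h3
  have h4 : ∑ v ∈ hang G A, G.degree v = #(hang G A) := by
    rw [sum_congr rfl fun v hv => (mem_hang.mp hv).choose_spec.2.2]
    simp
  omega

/-- The vertex `q` gets the third colour, which no vertex of `A` has. -/
lemma good_small_AB {A B : Finset V} {k : ℕ} (h : Bip G A B k) (h1 : #A < k)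
    {p q : V} (hp : p ∈ A) (hq : q ∈ B) (hql : PL G q) : Good G k p q := by
  have hc := h.card
  have hsA := h.sumA
  have hsB := h.sumB
  have hL := h.leaves_bound (empty_subset B) (by simp)
  simp only [sum_empty, card_empty] at hL
  obtain ⟨T, hT, hgT, hdT⟩ := exists_group A (fun v => (#(lv G v) : ℤ) - 1)
    (fun v => (G.degree v : ℤ) - 1) ((k : ℤ) - #A) (by omega)
    (by rw [sum_lv_sub]; omega)
  rw [sum_lv_sub] at hgT
  have hsum : ∑ v ∈ T, G.degree v + #A < 2 * k + #T := by
    rcases hdT with ⟨v, hv, rfl⟩ | hdT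
    · have := h.le v
      simp only [sum_singleton, card_singleton]
      omega
    · rw [sum_deg_sub, sum_deg_sub] at hdT
      omega
  obtain ⟨B', hB', cB'⟩ := exists_subset_card_eq (s := hang G T) (n := k + #T - #A) (by omega)
  have hB'n : B' ⊆ nb G T := hB'.trans (hang_subset_nb T)
  have hB'B : B' ⊆ B := hB'n.trans (h.nb_subset hT)
  have hqB' : q ∉ B' := fun hqB => by
    obtain ⟨v, -, -, h3⟩ := mem_hang.mp (hB' hqB)
    have := hql.1
    omega
  have cR := card_insert_le q (nb G T \ B')
  rw [card_sdiff_of_subset hB'n] at cR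
  have cN := card_nb_le (G := G) T
  have cT := card_le_card hT
  refine good_of_shift (P := ∅) (R := insert q (nb G T \ B')) h hT hB'B (by omega)
    (fun b hb a hba => mem_of_adj_hang (hB' hb) hba) (by simp) ?_ (by simp)
    (subset_insert _ _) (by omega) (by simp; omega)
    (Or.inr (Or.inr (Or.inl ⟨hp, mem_insert_self _ _⟩)))
  have := h.nb_subset hT
  grind

/-- A group `T` not adjacent to `p` is recoloured as it stands; otherwise `T` contains the non-leaf
neighbour of `p`, and the leaves at `p` are added to `T` so that `p` can join `B'`. -/
lemma good_small_BB {A B : Finset V} {k : ℕ} (h : Bip G A B k) (h1 : #A < k)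
    {p q : V} (hpq : p ≠ q) (hp : p ∈ B) (hq : q ∈ B) (hpl : PL G p) (hql : PL G q)
    (hd : G.degree p ≤ G.degree q) : Good G k p q := by
  have hc := h.card
  have hsA := h.sumA
  have hsB := h.sumB
  obtain ⟨hp2, hpc⟩ := hpl
  obtain ⟨hq2, hqc⟩ := hql
  have hL := h.leaves_bound (Q := {p, q}) (by grind) (by grind)
  rw [sum_pair hpq, card_pair hpq] at hL
  have hlp : lv G p ⊆ A := fun u hu => h.ba p u (mem_lv.mp hu).1 hp
  have hlq : lv G q ⊆ A := fun u hu => h.ba q u (mem_lv.mp hu).1 hq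
  have hdis : Disjoint (lv G p) (lv G q) := by
    rw [Finset.disjoint_left]
    intro u hu hu'
    rw [mem_lv] at hu hu'
    exact hpq (leaf_unique hu.2 hu.1 hu'.1)
  obtain ⟨S, hS⟩ : ∃ S, S = A \ (lv G p ∪ lv G q) := ⟨_, rfl⟩
  have hSA : S ⊆ A := by rw [hS]; exact sdiff_subset
  have cS : #S + (#(lv G p) + #(lv G q)) = #A := by
    rw [hS, ← card_union_of_disjoint hdis]
    exact card_sdiff_add_card_eq_card (union_subset hlp hlq)
  -- no leaf hangs on a leaf at `p` or `q`
  have hhang : hang G A ⊆ hang G S := by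
    intro u hu
    obtain ⟨v, hv, hvu, hu1⟩ := mem_hang.mp hu
    refine mem_hang.mpr ⟨v, ?_, hvu, hu1⟩
    rw [hS, mem_sdiff, mem_union]
    refine ⟨hv, ?_⟩
    rintro (hv' | hv') <;> rw [mem_lv] at hv'
    · have := leaf_unique hv'.2 hv'.1 hvu.symm
      subst this
      omega
    · have := leaf_unique hv'.2 hv'.1 hvu.symm
      subst this
      omega
  have chang := card_le_card hhang
  have hsS : ∑ v ∈ S, ((G.degree v : ℤ) - 1) ≤ ∑ v ∈ A, ((G.degree v : ℤ) - 1) :=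
    sum_le_sum_of_subset_of_nonneg hSA fun v _ _ => by have := h.pos v; omega
  obtain ⟨T, hT, hgT, hdT⟩ := exists_group S (fun v => (#(lv G v) : ℤ) - 1)
    (fun v => (G.degree v : ℤ) - 1) ((k : ℤ) - #A + G.degree p - 2) (by omega)
    (by rw [sum_lv_sub]; omega)
  rw [sum_lv_sub] at hgT
  have hTA := hT.trans hSA
  have hsum : ∑ v ∈ T, G.degree v + #A < 2 * k + #T := by
    rcases hdT with ⟨v, hv, rfl⟩ | hdT
    · have := h.le v
      simp only [sum_singleton, card_singleton]
      omega
    · rw [sum_deg_sub] at hdT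
      rw [sum_deg_sub A] at hsS
      omega
  have hnl : ∀ v, G.degree v ≠ 1 → v ∉ hang G T := fun v hv hvT => by
    obtain ⟨_, -, -, h3⟩ := mem_hang.mp hvT
    exact hv h3
  have cN := card_nb_le (G := G) T
  have cT := card_le_card hTA
  have hnB := h.nb_subset hTA
  by_cases hpn : p ∈ nb G T
  · obtain ⟨x, hx, hxp⟩ := mem_nb.mp hpn
    have hx1 : G.degree x ≠ 1 := fun h3 => by
      have := hT hx
      rw [hS, mem_sdiff, mem_union] at this
      exact this.2 (Or.inl (mem_lv.mpr ⟨hxp.symm, h3⟩))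
    have hdT' : Disjoint T (lv G p) := by
      rw [Finset.disjoint_left]
      intro u hu hu'
      have := hT hu
      grind
    obtain ⟨L, hL', cL⟩ := exists_subset_card_eq (s := hang G T)
      (n := k + #T + G.degree p - 2 - #A) (by omega)
    have hpL : p ∉ L := fun hpL => hnl p (by omega) (hL' hpL)
    have hqL : q ∉ insert p L := fun hqL => by
      rcases mem_insert.mp hqL with h3 | h3
      · exact hpq h3.symm
      · exact hnl q (by omega) (hL' h3)
    have cI : #(insert p L) = #L + 1 := card_insert_of_notMem hpL
    have cU : #(T ∪ lv G p) = #T + #(lv G p) := card_union_of_disjoint hdT'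
    have hUA : T ∪ lv G p ⊆ A := union_subset hTA hlp
    have cUA := card_le_card hUA
    have hIn : insert p L ⊆ nb G T :=
      insert_subset hpn (hL'.trans (hang_subset_nb T))
    have hUn : nb G (T ∪ lv G p) ⊆ nb G T := by
      intro u hu
      obtain ⟨v, hv, hvu⟩ := mem_nb.mp hu
      rcases mem_union.mp hv with hv | hv
      · exact mem_nb.mpr ⟨v, hv, hvu⟩
      · rw [mem_lv] at hv
        rwa [← leaf_unique hv.2 hv.1 hvu.symm]
    have cR := card_insert_le q (nb G T \ insert p L)
    rw [card_sdiff_of_subset hIn] at cR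
    refine good_of_shift (P := ∅) (R := insert q (nb G T \ insert p L)) h hUA
      (hIn.trans hnB) (by omega) ?_ (by simp) ?_ (by simp) ?_ (by omega) (by simp; omega)
      (Or.inr (Or.inl ⟨mem_insert_self _ _, mem_insert_self _ _⟩))
    · intro b hb a hba
      rcases mem_insert.mp hb with rfl | hb
      · by_cases ha : G.degree a = 1
        · exact mem_union_right _ (mem_lv.mpr ⟨hba, ha⟩)
        · rw [PL.unique ⟨hp2, hpc⟩ hba hxp.symm ha hx1]
          exact mem_union_left _ hx
      · exact mem_union_left _ (mem_of_adj_hang (hL' hb) hba)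
    · grind
    · exact (sdiff_subset_sdiff hUn Subset.rfl).trans (subset_insert _ _)
  · obtain ⟨B', hB', cB'⟩ := exists_subset_card_eq (s := hang G T) (n := k + #T - #A) (by omega)
    have hB'n : B' ⊆ nb G T := hB'.trans (hang_subset_nb T)
    have hqB' : q ∉ B' := fun hqB => hnl q (by omega) (hB' hqB)
    have hpB' : p ∉ B' := fun hpB => hpn (hB'n hpB)
    have cR := card_insert_le q (nb G T \ B')
    rw [card_sdiff_of_subset hB'n] at cR
    refine good_of_shift (P := {p}) (R := insert q (nb G T \ B')) h hTA (hB'n.trans hnB)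
      (by omega) (fun b hb a hba => mem_of_adj_hang (hB' hb) hba) (by grind) (by grind)
      (by grind) (subset_insert _ _) (by omega) (by rw [card_singleton]; omega)
      (Or.inl ⟨by simp, mem_insert_self _ _⟩)

/-- If `T ⊆ A` has enough hanging leaves and few other neighbours, and separates `p` from `q`
within `A`, then `good_of_shift` applies with `A' = T`. -/
lemma good_small_AA_of_group {A B T : Finset V} {k : ℕ} (h : Bip G A B k) (h1 : #A ≤ k)
    {p q : V} (hT : T ⊆ A) (hpT : p ∈ T) (hq : q ∈ A) (hqT : q ∉ T)
    (hg : k + #T ≤ #A + #(hang G T)) (hsum : ∑ v ∈ T, G.degree v + #A ≤ 2 * k + #T) :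
    Good G k p q := by
  obtain ⟨B', hB', cB'⟩ := exists_subset_card_eq (s := hang G T) (n := k + #T - #A) (by omega)
  have hB'n : B' ⊆ nb G T := hB'.trans (hang_subset_nb T)
  have hnB := h.nb_subset hT
  have cN := card_nb_le (G := G) T
  have cT := card_le_card hT
  have cR := card_sdiff_of_subset hB'n
  exact good_of_shift (P := ∅) (R := nb G T \ B') h hT (hB'n.trans hnB) (by omega)
    (fun b hb a hba => mem_of_adj_hang (hB' hb) hba) (by simp) (by grind) (by simp)
    Subset.rfl (by omega) (by simp; omega) (Or.inr (Or.inr (Or.inr ⟨hpT, hq, hqT⟩)))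

/-- Either the leaves at `p` suffice, or `p` is completed by a group of vertices other than `p` and
`q`; its required weight is smaller because `p` already contributes `deg p - 2`. -/
lemma good_small_AA {A B : Finset V} {k : ℕ} (h : Bip G A B k) (h1 : #A ≤ k)
    {p q : V} (hpq : p ≠ q) (hp : p ∈ A) (hq : q ∈ A) (hpl : PL G p) (hql : PL G q)
    (hd : G.degree q ≤ G.degree p) : Good G k p q := by
  have hc := h.card
  have hsA := h.sumA
  have hsB := h.sumB
  obtain ⟨hp2, hpc⟩ := hpl
  obtain ⟨hq2, hqc⟩ := hql
  by_cases hbig : k + 2 ≤ #A + G.degree p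
  · -- the leaves at `p` alone suffice
    refine good_small_AA_of_group (T := {p}) h h1 (by simpa using hp) (by simp) hq
      (by simpa using hpq.symm) ?_ ?_
    · rw [card_hang, sum_singleton, card_singleton]
      omega
    · have := h.le p
      rw [sum_singleton, card_singleton]
      omega
  have hL := h.leaves_bound (empty_subset B) (by simp)
  simp only [sum_empty, card_empty] at hL
  have hsub : ({p, q} : Finset V) ⊆ A := by grind
  have c2 : #({p, q} : Finset V) = 2 := card_pair hpq
  have e1 := sum_sdiff (f := fun v => (#(lv G v) : ℤ) - 1) hsub
  have e2 := sum_sdiff (f := fun v => (G.degree v : ℤ) - 1) hsub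
  rw [sum_pair hpq, sum_lv_sub A] at e1
  rw [sum_pair hpq, sum_deg_sub A] at e2
  obtain ⟨T, hT, hgT, hdT⟩ := exists_group (A \ {p, q}) (fun v => (#(lv G v) : ℤ) - 1)
    (fun v => (G.degree v : ℤ) - 1) ((k : ℤ) - #A - (G.degree p - 2)) (by omega) (by omega)
  rw [sum_lv_sub] at hgT
  have hpT : p ∉ T := fun hv => by have := hT hv; grind
  have hqT : q ∉ insert p T := fun hv => by
    rcases mem_insert.mp hv with hv | hv
    · exact hpq hv.symm
    · have := hT hv; grind
  refine good_small_AA_of_group (T := insert p T) h h1 (by grind) (by simp) hq hqT ?_ ?_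
  · rw [card_hang, sum_insert hpT, card_insert_of_notMem hpT, ← card_hang]
    omega
  · rw [sum_insert hpT, card_insert_of_notMem hpT]
    rcases hdT with ⟨v, hv, rfl⟩ | hdT
    · have := h.le v
      simp only [sum_singleton, card_singleton]
      omega
    · rw [sum_deg_sub] at hdT
      omega

/-! ### Assembling the cases -/

lemma good_of_bip {A B : Finset V} {k : ℕ} (h : Bip G A B k) (hk : 1 ≤ k) (hAB : #A ≤ #B)
    {p q : V} (hpq : p ≠ q) (hpl : PL G p) (hql : PL G q) : Good G k p q := by
  have h2 : 2 * #A ≤ 3 * k := by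
    have := h.card
    omega
  have hAB' : ∀ {p q : V}, p ∈ A → q ∈ B → PL G q → Good G k p q := by
    intro p q hp hq hql
    rcases lt_or_ge #A k with h1 | h1
    · exact good_small_AB h h1 hp hq hql
    · exact good_large_AB h hk h1 h2 hp hq
  have hBB : ∀ {p q : V}, p ≠ q → p ∈ B → q ∈ B → PL G p → PL G q →
      G.degree p ≤ G.degree q → Good G k p q := by
    intro p q hpq hp hq hpl hql hd
    rcases lt_or_ge #A k with h1 | h1
    · exact good_small_BB h h1 hpq hp hq hpl hql hd
    · exact good_large_BB h hk h1 h2 hpq hp hq hpl hql hd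
  have hAA : ∀ {p q : V}, p ≠ q → p ∈ A → q ∈ A → PL G p → PL G q →
      G.degree p ≤ G.degree q → Good G k p q := by
    intro p q hpq hp hq hpl hql hd
    rcases le_or_gt #A k with h1 | h1
    · exact (good_small_AA h h1 hpq.symm hq hp hql hpl hd).symm
    · exact good_large_AA h h1 h2 hpq hp hq hql hd
  rcases h.cover p with hp | hp <;> rcases h.cover q with hq | hq
  · rcases le_total (G.degree p) (G.degree q) with hd | hd
    · exact hAA hpq hp hq hpl hql hd
    · exact (hAA hpq.symm hq hp hql hpl hd).symm
  · exact hAB' hp hq hql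
  · exact (hAB' hq hp hpl).symm
  · rcases le_total (G.degree p) (G.degree q) with hd | hd
    · exact hBB hpq hp hq hpl hql hd
    · exact (hBB hpq.symm hq hp hql hpl hd).symm

lemma exists_bip (hG : G.IsTree) {k : ℕ} (hcard : Fintype.card V = 3 * k)
    (hdeg : G.maxDegree ≤ k) : ∃ A B : Finset V, Bip G A B k := by
  obtain ⟨c⟩ := hG.isBipartite
  have hne : ∀ u v, G.Adj u v → c u ≠ c v := fun u v huv => c.valid huv
  have hb : G.IsBipartiteWith ((univ.filter fun v => c v = 0 : Finset V) : Set V)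
      ((univ.filter fun v => c v ≠ 0 : Finset V) : Set V) := by
    refine ⟨?_, ?_⟩
    · rw [disjoint_coe, Finset.disjoint_left]
      simp
    · intro v w hvw
      have := hne v w hvw
      simp only [coe_filter, mem_univ, true_and, Set.mem_ofPred_eq]
      omega
  have he := hG.card_edgeFinset
  have hs := isBipartiteWith_sum_degrees_eq_card_edges hb
  have hs' := isBipartiteWith_sum_degrees_eq_card_edges' hb
  have : Nontrivial V := Fintype.one_lt_card_iff_nontrivial.mp (by omega)
  refine ⟨univ.filter fun v => c v = 0, univ.filter fun v => c v ≠ 0, ?_, ?_, ?_, ?_, ?_, ?_, ?_,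
    ?_, ?_⟩
  · intro v
    simp only [mem_filter, mem_univ, true_and]
    exact em _
  · simp
  · intro u v huv
    have := hne u v huv
    simp only [mem_filter, mem_univ, true_and]
    omega
  · intro u v huv
    have := hne u v huv
    simp only [mem_filter, mem_univ, true_and]
    omega
  · omega
  · omega
  · rw [← hcard]
    exact card_filter_add_card_filter_not _
  · exact fun v => hG.connected.preconnected.degree_pos_of_nontrivial v
  · exact fun v => (G.degree_le_maxDegree v).trans hdeg

lemma PL.of_isPreLeaf {v : V} (h : IsPreLeaf G v) : PL G v := by
  obtain ⟨h1, h2⟩ := h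
  have h3 : ({u | G.Adj v u ∧ G.degree u = 1} : Set V) = (lv G v : Set V) := by
    ext u
    simp [mem_lv]
  rw [h3, Set.ncard_coe_finset] at h2
  exact ⟨by omega, h2⟩

end TreeColoring

theorem tree_three_k_strongly3Balanced_coloring {V : Type*} [Fintype V] [DecidableEq V]
    (G : SimpleGraph V) [DecidableRel G.Adj] (hG : G.IsTree)
    (k : ℕ) (hk : 1 ≤ k) (hcard : Fintype.card V = 3 * k) (hdeg : G.maxDegree ≤ k)
    (p q : V) (hpq : p ≠ q) (hp : IsPreLeaf G p) (hq : IsPreLeaf G q) :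
    ∃ c : V → Fin 3,
      (∀ a b : V, G.Adj a b → c a ≠ c b) ∧
      (∀ i j : Fin 3,
        |(({x | c x = i} : Set V).ncard : ℤ) - (({x | c x = j} : Set V).ncard : ℤ)| ≤ 1) ∧
      c p ≠ c q := by
  classical
  have hgood : TreeColoring.Good G k p q := by
    obtain ⟨A, B, h⟩ := TreeColoring.exists_bip hG hcard hdeg
    have hp' := TreeColoring.PL.of_isPreLeaf hp
    have hq' := TreeColoring.PL.of_isPreLeaf hq
    rcases le_total A.card B.card with hAB | hAB
    · exact TreeColoring.good_of_bip h hk hAB hpq hp' hq'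
    · exact TreeColoring.good_of_bip h.symm hk hAB hpq hp' hq'
  obtain ⟨X, Y, hXY, cX, cY, hproper, hsep⟩ := hgood
  refine ⟨TreeColoring.col X Y, hproper, ?_, hsep⟩
  rw [Finset.disjoint_left] at hXY
  have hc : ∀ i : Fin 3, ({x | TreeColoring.col X Y x = i} : Set V).ncard = k := by
    intro i
    fin_cases i
    · rw [← cX, ← Set.ncard_coe_finset]
      congr 1
      ext x
      simp only [TreeColoring.col, Set.mem_ofPred_eq, Finset.mem_coe]
      grind
    · rw [← cY, ← Set.ncard_coe_finset]
      congr 1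
      ext x
      simp only [TreeColoring.col, Set.mem_ofPred_eq, Finset.mem_coe]
      grind
    · have h1 : (X ∪ Y)ᶜ.card = k := by
        rw [Finset.card_compl, Finset.card_union_of_disjoint (Finset.disjoint_left.mpr hXY)]
        omega
      refine Eq.trans ?_ h1
      rw [← Set.ncard_coe_finset]
      congr 1
      ext x
      simp only [TreeColoring.col, Set.mem_ofPred_eq, Finset.mem_coe, Finset.mem_compl,
        Finset.mem_union]
      grind
  intro i j
  rw [hc, hc]
  simp
end
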